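/- Let F be an algebraically closed field, q, Q_1, …, Q_r ∈ F with q invertible, and n ≥ 1. Suppose {1, …, r} = I_1 ∪ I_2 ∪ ⋯ ∪ I_κ is a partition into disjoint nonempty subsets such that for all 1 ≤ α < β ≤ κ, all i ∈ I_α, all j ∈ I_β, and all integers a with −n < a < n, one has q^a Q_i − Q_j ≠ 0. Write r_α = |I_α| and let Q_{I_α} denote the tuple of parameters (Q_i)_{i ∈ I_α}. Then the Ariki–Koike algebra H_{n,r}(q, Q_1, …, Q_r) is Morita equivalent to the F-algebra ⊕ H_{n_1,r_1}(q, Q_{I_1}) ⊗_F H_{n_2,r_2}(q, Q_{I_2}) ⊗_F ⋯ ⊗_F H_{n_κ,r_κ}(q, Q_{I_κ}), where the direct sum (finite product of algebras) runs over all tuples (n_1, …, n_κ) of nonnegative integers with n_1 + ⋯ + n_κ = n. -/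

import Mathlib

/-!
Write `X 0 = T_0` and `X k = q⁻¹ T_k X (k-1) T_k` for the Jucys–Murphy elements of the Ariki–Koike
algebra `A`. They commute, and together with the `T_i` they satisfy the relations of the affine
Hecke algebra (`AffHecke`, `akAff`). The eigenvalues of `X k` are of the form `q ^ a * Q_i` with
`|a| ≤ k`; by the separation hypothesis each of them has a well-defined colour `α`, the part to
which `i` belongs. Since the `X k` commute, `1` is the sum of orthogonal idempotents `wt c`, one for
each word `c` of `n` colours, projecting onto the common generalized eigenspace where `X k` has
colour `c k`. These idempotents are polynomials in the `X k`, built by the Chinese remainder theorem.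

The intertwiner `φ_i = T_i X_i - X_i T_i` exchanges the weight spaces of `c` and of the word with
the letters `i` and `i + 1` exchanged, and its square is invertible there if the two letters differ.
So the idempotents of the sorted (nondecreasing) words generate the unit ideal (`CycAff.one_mem`).
The sorted words correspond to the tuples `v` with sum `n`; let `e_v` be their idempotents. It
remains to prove that `e_v A e_w = 0` for `v ≠ w`, and that `e_v A e_v` is the tensor product `B_v`
of the Ariki–Koike algebras with `v α` strands and the parameters of colour `α`. Then `A` is Morita
equivalent to the corner of the full idempotent `∑ e_v`, which is the product of the `B_v`
(`morita_of_full_corner`, `morita_glue`).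

* The generators of `B_v` act on `e_v A` by left multiplication with those `X k` and `T i` that stay
  inside a block of equal letters. This gives a multiplicative map `B_v → e_v A e_v`
  (`exists_corner`).
* Surjectivity and the vanishing of `e_v A e_w`: the span of the elements obtained from the image
  of `B_v` by applying intertwiners at ascents is stable under all generators of `A`, and its parts
  of sorted weight are the image itself and zero (`exists_left_ideal`, `corner_surj`).
* Injectivity: `A` acts on the functions from the words with multiplicities `v` to `B_v`. The
  `X k` act diagonally, and `T i` acts through `B_v` at equal letters, and by the usual rational
  functions of the `X k` at distinct letters, the differences of the `X k` being invertible there.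
  The braid relation for these operators follows from identities that express multiples of the
  braid defect in terms of intertwiners (`ThreeStrands`, `ColData.defect_eq_zero`). The action on
  the constant function `1`, evaluated at the sorted word, inverts the map from `B_v`
  (`corner_inj`).
-/

open scoped TensorProduct

/-- A module is indecomposable if it is nonzero and is not the direct sum of two
nonzero submodules. -/
def IsIndecomposableModule (A : Type*) (N : Type*) [Ring A] [AddCommGroup N]
    [Module A N] : Prop :=
  Nontrivial N ∧ ∀ P Q : Submodule A N, IsCompl P Q → P = ⊥ ∨ Q = ⊥

/-- A ring `A` is of finite representation type if there are only finitely many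
isomorphism classes of finitely generated (equivalently, for a finite dimensional
algebra, finite dimensional) indecomposable right `A`-modules; right `A`-modules are
realized as left modules over `Aᵐᵒᵖ`. -/
def FiniteRepType (A : Type) [Ring A] : Prop :=
  ∃ (k : ℕ) (M : Fin k → ModuleCat.{0} Aᵐᵒᵖ),
    ∀ (N : Type) [AddCommGroup N] [Module Aᵐᵒᵖ N],
      Module.Finite Aᵐᵒᵖ N → IsIndecomposableModule Aᵐᵒᵖ N →
        ∃ i, Nonempty (N ≃ₗ[Aᵐᵒᵖ] M i)

/-- The defining relations of the Ariki-Koike algebra `H_{n,r}(q, Q_1, ..., Q_r)`,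
as a relation on the free algebra on generators `T_0, ..., T_{n-1}`. -/
inductive AKRel (F : Type) [Field F] (n r : ℕ) (q : F) (Q : Fin r → F) :
    FreeAlgebra F (Fin n) → FreeAlgebra F (Fin n) → Prop
  | cyclotomic (h : 0 < n) :
      AKRel F n r q Q
        (((List.finRange r).map (fun j =>
          FreeAlgebra.ι F (⟨0, h⟩ : Fin n)
            - algebraMap F (FreeAlgebra F (Fin n)) (Q j))).prod) 0
  | braid01 (h : 1 < n) :
      AKRel F n r q Q
        (FreeAlgebra.ι F (⟨0, by omega⟩ : Fin n) * FreeAlgebra.ι F (⟨1, h⟩ : Fin n) *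
          FreeAlgebra.ι F (⟨0, by omega⟩ : Fin n) * FreeAlgebra.ι F (⟨1, h⟩ : Fin n))
        (FreeAlgebra.ι F (⟨1, h⟩ : Fin n) * FreeAlgebra.ι F (⟨0, by omega⟩ : Fin n) *
          FreeAlgebra.ι F (⟨1, h⟩ : Fin n) * FreeAlgebra.ι F (⟨0, by omega⟩ : Fin n))
  | quadratic (i : ℕ) (h1 : 1 ≤ i) (h2 : i < n) :
      AKRel F n r q Q
        ((FreeAlgebra.ι F (⟨i, h2⟩ : Fin n) + 1) *
          (FreeAlgebra.ι F (⟨i, h2⟩ : Fin n) - algebraMap F (FreeAlgebra F (Fin n)) q)) 0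
  | braid (i : ℕ) (h1 : 1 ≤ i) (h2 : i + 1 < n) :
      AKRel F n r q Q
        (FreeAlgebra.ι F (⟨i, by omega⟩ : Fin n) * FreeAlgebra.ι F (⟨i + 1, h2⟩ : Fin n) *
          FreeAlgebra.ι F (⟨i, by omega⟩ : Fin n))
        (FreeAlgebra.ι F (⟨i + 1, h2⟩ : Fin n) * FreeAlgebra.ι F (⟨i, by omega⟩ : Fin n) *
          FreeAlgebra.ι F (⟨i + 1, h2⟩ : Fin n))
  | comm (i j : ℕ) (hij : i + 2 ≤ j) (hj : j < n) :
      AKRel F n r q Q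
        (FreeAlgebra.ι F (⟨i, by omega⟩ : Fin n) * FreeAlgebra.ι F (⟨j, hj⟩ : Fin n))
        (FreeAlgebra.ι F (⟨j, hj⟩ : Fin n) * FreeAlgebra.ι F (⟨i, by omega⟩ : Fin n))

/-- The Ariki-Koike algebra `H_{n,r}(q, Q_1, ..., Q_r)`: the quotient of the free
`F`-algebra on `T_0, ..., T_{n-1}` by the two-sided ideal generated by the defining
relations. -/
abbrev ArikiKoike (F : Type) [Field F] (n r : ℕ) (q : F) (Q : Fin r → F) : Type :=
  RingQuot (AKRel F n r q Q)

/-- The extension of the nondecreasing rearrangement `f'_1 ≤ ... ≤ f'_r` (0-indexed)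
by `f'_{r+i} = e + f'_i`. -/
noncomputable def extSeq (e r : ℕ) (f' : Fin r → ℕ) (i : ℕ) : ℕ :=
  if hr : 0 < r then e * (i / r) + f' ⟨i % r, Nat.mod_lt i hr⟩ else 0

/-- `f^{+1}(Q_1, ..., Q_r) = min { f'_{i+1} - f'_i | 1 ≤ i ≤ r }` (0-indexed here). -/
noncomputable def fPlusOne (e r : ℕ) (f' : Fin r → ℕ) : ℕ :=
  sInf {d | ∃ i < r, d = extSeq e r f' (i + 1) - extSeq e r f' i}

/-- `f^{+2}(Q_1, ..., Q_r) = min { f'_{i+2} - f'_i | 1 ≤ i ≤ r }` (0-indexed here). -/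
noncomputable def fPlusTwo (e r : ℕ) (f' : Fin r → ℕ) : ℕ :=
  sInf {d | ∃ i < r, d = extSeq e r f' (i + 2) - extSeq e r f' i}

/-- `g(Q_1, ..., Q_r) = min { g'_i + g'_j | 1 ≤ i ≠ j ≤ r }` where
`g'_i = f'_{i+1} - f'_i` (0-indexed here). -/
noncomputable def gMin (e r : ℕ) (f' : Fin r → ℕ) : ℕ :=
  sInf {d | ∃ i < r, ∃ j < r, i ≠ j ∧
    d = (extSeq e r f' (i + 1) - extSeq e r f' i)
      + (extSeq e r f' (j + 1) - extSeq e r f' j)}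

open CategoryTheory in
/-- Two rings are Morita equivalent if their categories of right modules are
equivalent. -/
def MoritaEquiv (A B : Type) [Ring A] [Ring B] : Prop :=
  Nonempty (ModuleCat.{0} Aᵐᵒᵖ ≌ ModuleCat.{0} Bᵐᵒᵖ)

section Proof

set_option linter.unusedSimpArgs false
set_option linter.unusedVariables false
set_option linter.unusedSectionVars false

/-! ### Full idempotents and Morita equivalence -/

section Morita

open CategoryTheory

variable {R S : Type} [Ring R] [Ring S]

/-- For `ψ : S → R` multiplicative and additive (not unital), the part `ψ 1 • M` of an
`R`-module `M`, described as the fixed points of the idempotent `ψ 1`. -/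
def cornerPart (ψ : S →ₙ+* R) (M : Type) [AddCommGroup M] [Module R M] : AddSubgroup M where
  carrier := {m | ψ 1 • m = m}
  add_mem' := by
    intro a b ha hb
    simp only [Set.mem_ofPred_eq] at *
    rw [smul_add, ha, hb]
  zero_mem' := by simp
  neg_mem' := by
    intro a ha
    simp only [Set.mem_ofPred_eq] at *
    rw [smul_neg, ha]

theorem mem_cornerPart {ψ : S →ₙ+* R} {M : Type} [AddCommGroup M] [Module R M] {m : M} :
    m ∈ cornerPart ψ M ↔ ψ 1 • m = m := Iff.rfl

theorem smul_mem_cornerPart (ψ : S →ₙ+* R) {M : Type} [AddCommGroup M] [Module R M] (s : S)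
    (m : M) : ψ s • m ∈ cornerPart ψ M := by
  rw [mem_cornerPart, smul_smul, ← map_mul, one_mul]

instance cornerModule (ψ : S →ₙ+* R) (M : Type) [AddCommGroup M] [Module R M] :
    Module S (cornerPart ψ M) where
  smul s m := ⟨ψ s • (m : M), smul_mem_cornerPart ψ s (m : M)⟩
  one_smul m := Subtype.ext m.2
  mul_smul s t m := Subtype.ext (by
    change ψ (s * t) • (m : M) = ψ s • ψ t • (m : M)
    rw [map_mul, mul_smul])
  smul_zero s := Subtype.ext (by change ψ s • (0 : M) = 0; simp)
  smul_add s m m' := Subtype.ext (by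
    change ψ s • ((m : M) + m') = ψ s • (m : M) + ψ s • (m' : M); simp)
  add_smul s t m := Subtype.ext (by
    change ψ (s + t) • (m : M) = ψ s • (m : M) + ψ t • (m : M)
    rw [map_add, add_smul])
  zero_smul m := Subtype.ext (by change ψ 0 • (m : M) = 0; simp)

theorem coe_corner_smul (ψ : S →ₙ+* R) {M : Type} [AddCommGroup M] [Module R M] (s : S)
    (m : cornerPart ψ M) : ((s • m : cornerPart ψ M) : M) = ψ s • (m : M) := rfl

/-- The functor `M ↦ ψ 1 • M` from `R`-modules to `S`-modules. -/
def cornerFunctor (ψ : S →ₙ+* R) : ModuleCat.{0} R ⥤ ModuleCat.{0} S where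
  obj M := ModuleCat.of S (cornerPart ψ M)
  map {M N} f := ModuleCat.ofHom
    { toFun := fun m => ⟨f.hom (m : M), by
        have h := congrArg f.hom m.2
        rwa [map_smul] at h⟩
      map_add' := fun m m' => Subtype.ext (by simp)
      map_smul' := fun s m => Subtype.ext (by
        change f.hom (ψ s • (m : M)) = ψ s • f.hom (m : M)
        rw [map_smul]) }
  map_id M := by ext; rfl
  map_comp f g := by ext; rfl

/-- The coinduced module `Hom_S(ψ 1 • R, N)`. -/
def CoindModule (ψ : S →ₙ+* R) (N : Type) [AddCommGroup N] [Module S N] : Type :=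
  cornerPart ψ R →ₗ[S] N

/-- An element of the coinduced module as a linear map. -/
def CoindModule.hom {ψ : S →ₙ+* R} {N : Type} [AddCommGroup N] [Module S N]
    (f : CoindModule ψ N) : cornerPart ψ R →ₗ[S] N := f

instance (ψ : S →ₙ+* R) (N : Type) [AddCommGroup N] [Module S N] :
    AddCommGroup (CoindModule ψ N) :=
  inferInstanceAs (AddCommGroup (cornerPart ψ R →ₗ[S] N))

/-- Right multiplication by `r` on `ψ 1 • R`. -/
def cornerRightMul (ψ : S →ₙ+* R) (r : R) : cornerPart ψ R →ₗ[S] cornerPart ψ R where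
  toFun x := ⟨(x : R) * r, by
    have h : ψ 1 * (x : R) = x := x.2
    rw [mem_cornerPart, smul_eq_mul, ← mul_assoc, h]⟩
  map_add' x y := Subtype.ext (by simp [add_mul])
  map_smul' s x := Subtype.ext (by
    change (ψ s * (x : R)) * r = ψ s * ((x : R) * r)
    rw [mul_assoc])

theorem coe_cornerRightMul (ψ : S →ₙ+* R) (r : R) (x : cornerPart ψ R) :
    ((cornerRightMul ψ r x : cornerPart ψ R) : R) = x * r := rfl

instance (ψ : S →ₙ+* R) (N : Type) [AddCommGroup N] [Module S N] : SMul R (CoindModule ψ N) where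
  smul r f := LinearMap.comp f.hom (cornerRightMul ψ r)

theorem coind_smul_apply {ψ : S →ₙ+* R} {N : Type} [AddCommGroup N] [Module S N] (r : R)
    (f : CoindModule ψ N) (x : cornerPart ψ R) :
    (r • f).hom x = f.hom (cornerRightMul ψ r x) := rfl

theorem coind_add_apply {ψ : S →ₙ+* R} {N : Type} [AddCommGroup N] [Module S N]
    (f g : CoindModule ψ N) (x : cornerPart ψ R) :
    (f + g).hom x = f.hom x + g.hom x := rfl

theorem coind_zero_apply {ψ : S →ₙ+* R} {N : Type} [AddCommGroup N] [Module S N]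
    (x : cornerPart ψ R) : (0 : CoindModule ψ N).hom x = 0 := rfl

theorem coind_ext {ψ : S →ₙ+* R} {N : Type} [AddCommGroup N] [Module S N]
    {f g : CoindModule ψ N} (h : ∀ x, f.hom x = g.hom x) : f = g :=
  LinearMap.ext h

instance (ψ : S →ₙ+* R) (N : Type) [AddCommGroup N] [Module S N] :
    Module R (CoindModule ψ N) where
  one_smul f := coind_ext fun x => by
    rw [coind_smul_apply]
    congr 1
    apply Subtype.ext
    rw [coe_cornerRightMul, mul_one]
  mul_smul r t f := coind_ext fun x => by
    rw [coind_smul_apply, coind_smul_apply, coind_smul_apply]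
    congr 1
    apply Subtype.ext
    rw [coe_cornerRightMul, coe_cornerRightMul, coe_cornerRightMul, mul_assoc]
  smul_zero r := coind_ext fun x => rfl
  smul_add r f g := coind_ext fun x => rfl
  add_smul r t f := coind_ext fun x => by
    rw [coind_add_apply, coind_smul_apply, coind_smul_apply, coind_smul_apply, ← map_add]
    congr 1
    apply Subtype.ext
    rw [AddSubgroup.coe_add, coe_cornerRightMul, coe_cornerRightMul, coe_cornerRightMul, mul_add]
  zero_smul f := coind_ext fun x => by
    rw [coind_smul_apply, coind_zero_apply, ← map_zero f.hom]
    congr 1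
    apply Subtype.ext
    rw [coe_cornerRightMul, mul_zero, AddSubgroup.coe_zero]

/-- `ψ 1` itself as an element of `ψ 1 • R`. -/
def cornerUnit (ψ : S →ₙ+* R) : cornerPart ψ R :=
  ⟨ψ 1, by rw [mem_cornerPart, smul_eq_mul, ← map_mul, one_mul]⟩

theorem coe_cornerUnit (ψ : S →ₙ+* R) : ((cornerUnit ψ : cornerPart ψ R) : R) = ψ 1 := rfl

/-- If `1 = ∑ rᵢ e sᵢ`, every `m` is recovered from its components `e sᵢ m`. -/
theorem corner_expand {ψ : S →ₙ+* R} {l : List (R × R)}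
    (hl : (l.map fun p => p.1 * ψ 1 * p.2).sum = 1) {M : Type} [AddCommGroup M] [Module R M]
    (m : M) : (l.map fun p => p.1 • ψ 1 • p.2 • m).sum = m := by
  have h : (l.map fun p => p.1 * ψ 1 * p.2).sum • m = m := by rw [hl, one_smul]
  rw [List.sum_smul, List.map_map] at h
  refine Eq.trans ?_ h
  congr 2
  funext p
  simp [mul_smul]

theorem corner_idem (ψ : S →ₙ+* R) : ψ 1 * ψ 1 = ψ 1 := by rw [← map_mul, one_mul]

/-- For a full idempotent, the functor `M ↦ ψ 1 • M` is full. -/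
theorem exists_corner_extension {ψ : S →ₙ+* R}
    (hsurj : ∀ r : R, ∃ s, ψ s = ψ 1 * r * ψ 1) {l : List (R × R)}
    (hl : (l.map fun p => p.1 * ψ 1 * p.2).sum = 1) {M N : Type} [AddCommGroup M] [Module R M]
    [AddCommGroup N] [Module R N] (g : cornerPart ψ M →ₗ[S] cornerPart ψ N) :
    ∃ G : M →ₗ[R] N, ∀ m : cornerPart ψ M, G (m : M) = g m := by
  -- `g` precomposed with the projection `m ↦ e m`
  let pr : M →+ cornerPart ψ M :=
    { toFun := fun m => ⟨ψ 1 • m, smul_mem_cornerPart ψ 1 m⟩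
      map_zero' := Subtype.ext (smul_zero _)
      map_add' := fun m m' => Subtype.ext (smul_add _ _ _) }
  have coe_pr : ∀ m, ((pr m : cornerPart ψ M) : M) = ψ 1 • m := fun m => rfl
  let g0 : M →+ N := ((cornerPart ψ N).subtype.comp g.toAddMonoidHom).comp pr
  have g0app : ∀ m, g0 m = ((g (pr m) : cornerPart ψ N) : N) := fun m => rfl
  have g0e : ∀ m, ψ 1 • g0 m = g0 m := fun m => (g (pr m)).2
  have g0s : ∀ (r : R) (m : M), g0 (r • ψ 1 • m) = ψ 1 • r • g0 m := by
    intro r m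
    obtain ⟨s, hs⟩ := hsurj r
    have h1 : pr (r • ψ 1 • m) = s • pr m := by
      apply Subtype.ext
      rw [coe_corner_smul, hs, coe_pr, coe_pr]
      simp only [smul_smul, mul_assoc]
      rw [corner_idem ψ]
    rw [g0app, h1, map_smul, coe_corner_smul, ← g0app, hs, mul_smul, mul_smul, g0e]
  let gt : M →+ N :=
    { toFun := fun m => (l.map fun p => p.1 • g0 (p.2 • m)).sum
      map_zero' := by simp
      map_add' := fun m m' => by
        rw [← List.sum_map_add]
        congr 2
        funext p
        simp }
  have gtapp : ∀ m, gt m = (l.map fun p => p.1 • g0 (p.2 • m)).sum := fun m => rfl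
  have gte : ∀ (r : R) (m : M), gt (r • ψ 1 • m) = r • g0 m := by
    intro r m
    rw [gtapp, ← corner_expand hl (r • g0 m)]
    congr 2
    funext p
    rw [smul_smul p.2 r, g0s, smul_smul p.2 r]
  have gts : ∀ (r : R) (m : M), gt (r • m) = r • gt m := by
    intro r m
    have h1 : r • m = (l.map fun p => (r * p.1) • ψ 1 • p.2 • m).sum := by
      conv_lhs => rw [← corner_expand hl m]
      rw [List.smul_sum, List.map_map]
      congr 2
      funext p
      simp [mul_smul]
    rw [h1, map_list_sum, List.map_map, gtapp, List.smul_sum, List.map_map]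
    congr 2
    funext p
    simp only [Function.comp]
    rw [gte, mul_smul]
  refine ⟨{ toFun := gt, map_add' := map_add gt, map_smul' := gts }, fun m => ?_⟩
  have hm : ψ 1 • (m : M) = m := m.2
  have h3 : gt (m : M) = g0 (m : M) := by
    conv_lhs => rw [← hm]
    rw [← one_smul R (ψ 1 • (m : M)), gte, one_smul]
  refine Eq.trans h3 ?_
  rw [g0app]
  congr 2
  exact Subtype.ext hm

/-- `N` is recovered from its coinduced module through `f ↦ f (ψ 1)`, with inverse
`m ↦ (x ↦ (x ψ 1) m)`. -/
theorem corner_coind {ψ : S →ₙ+* R} (hinj : Function.Injective ψ)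
    (hsurj : ∀ r : R, ∃ s, ψ s = ψ 1 * r * ψ 1) (N : Type) [AddCommGroup N] [Module S N] :
    Nonempty (cornerPart ψ (CoindModule ψ N) ≃ₗ[S] N) := by
  have exs : ∀ x : cornerPart ψ R, ∃ s, ψ s = (x : R) * ψ 1 := by
    intro x
    obtain ⟨s, hs⟩ := hsurj x
    have h : ψ 1 * (x : R) = x := x.2
    exact ⟨s, by rw [hs, h]⟩
  choose σ hσ using exs
  let ev : cornerPart ψ (CoindModule ψ N) →ₗ[S] N :=
    { toFun := fun f => f.1.hom (cornerUnit ψ)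
      map_add' := fun f g => rfl
      map_smul' := fun s f => by
        rw [coe_corner_smul, coind_smul_apply, RingHom.id_apply, ← map_smul]
        congr 1
        apply Subtype.ext
        rw [coe_cornerRightMul, coe_corner_smul, coe_cornerUnit, smul_eq_mul, ← map_mul,
          ← map_mul, one_mul, mul_one] }
  have evapp : ∀ f, ev f = f.1.hom (cornerUnit ψ) := fun f => rfl
  refine ⟨LinearEquiv.ofBijective ev ⟨?_, ?_⟩⟩
  · rw [← LinearMap.ker_eq_bot, LinearMap.ker_eq_bot']
    intro f hf
    rw [evapp] at hf
    apply Subtype.ext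
    refine coind_ext fun x => ?_
    have h1 : f.1.hom x = f.1.hom (cornerRightMul ψ (ψ 1) x) := by
      rw [← coind_smul_apply, mem_cornerPart.1 f.2]
    have h2 : cornerRightMul ψ (ψ 1) x = σ x • cornerUnit ψ := by
      apply Subtype.ext
      rw [coe_cornerRightMul, coe_corner_smul, coe_cornerUnit, hσ, smul_eq_mul, mul_assoc,
        corner_idem]
    rw [h1, h2, map_smul, hf, smul_zero]
    rfl
  · intro m
    let f : CoindModule ψ N :=
      ({ toFun := fun x => σ x • m
         map_add' := fun x y => by
          rw [← add_smul]
          congr 1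
          apply hinj
          rw [map_add, hσ, hσ, hσ, AddSubgroup.coe_add, add_mul]
         map_smul' := fun s x => by
          rw [RingHom.id_apply, ← mul_smul]
          congr 1
          apply hinj
          rw [map_mul, hσ, hσ, coe_corner_smul, smul_eq_mul, mul_assoc] } :
        cornerPart ψ R →ₗ[S] N)
    have fapp : ∀ x, f.hom x = σ x • m := fun x => rfl
    refine ⟨⟨f, ?_⟩, ?_⟩
    · rw [mem_cornerPart]
      refine coind_ext fun x => ?_
      rw [coind_smul_apply, fapp, fapp]
      congr 1
      apply hinj
      rw [hσ, hσ, coe_cornerRightMul, mul_assoc, corner_idem]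
    · rw [evapp, fapp]
      have : σ (cornerUnit ψ) = 1 := by
        apply hinj
        rw [hσ, coe_cornerUnit, corner_idem]
      rw [this, one_smul]

/-- If `ψ` identifies `S` with the corner ring `ψ 1 * R * ψ 1` and the idempotent `ψ 1` is
full, then `R` and `S` are Morita equivalent. -/
theorem morita_of_full_corner (ψ : S →ₙ+* R) (hinj : Function.Injective ψ)
    (hsurj : ∀ r : R, ∃ s, ψ s = ψ 1 * r * ψ 1)
    (hfull : ∃ l : List (R × R), (l.map fun p => p.1 * ψ 1 * p.2).sum = 1) :
    Nonempty (ModuleCat.{0} R ≌ ModuleCat.{0} S) := by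
  obtain ⟨l, hl⟩ := hfull
  have hfaith : (cornerFunctor ψ).Faithful := by
    refine ⟨fun {M N} f g h => ?_⟩
    have key : ∀ m : M, f.hom (ψ 1 • m) = g.hom (ψ 1 • m) := by
      intro m
      have h2 := LinearMap.congr_fun (congrArg ModuleCat.Hom.hom h)
        (⟨ψ 1 • m, smul_mem_cornerPart ψ 1 m⟩ : cornerPart ψ M)
      exact congrArg Subtype.val h2
    ext m
    rw [← corner_expand hl m, map_list_sum, map_list_sum, List.map_map, List.map_map]
    congr 2
    funext p
    simp only [Function.comp]
    rw [f.hom.map_smul p.1, g.hom.map_smul p.1, key]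
  have hfull' : (cornerFunctor ψ).Full := by
    refine ⟨fun {M N} g => ?_⟩
    obtain ⟨G, hG⟩ := exists_corner_extension hsurj hl
      (g.hom : cornerPart ψ M →ₗ[S] cornerPart ψ N)
    refine ⟨ModuleCat.ofHom G, ?_⟩
    ext m
    exact Subtype.ext (hG m)
  have hess : (cornerFunctor ψ).EssSurj := by
    refine ⟨fun N => ?_⟩
    obtain ⟨i⟩ := corner_coind hinj hsurj N
    exact ⟨ModuleCat.of R (CoindModule ψ N), ⟨LinearEquiv.toModuleIso
      (X₁ := ModuleCat.of S (cornerPart ψ (CoindModule ψ N))) (X₂ := N) i⟩⟩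
  have : (cornerFunctor ψ).IsEquivalence := {}
  exact ⟨(cornerFunctor ψ).asEquivalence⟩

end Morita

/-! ### Affine Hecke relations and intertwiners -/

/-- Elements `T 0, …, T (n-2)` and `X 0, …, X (n-1)` of an algebra satisfying the relations of
the affine Hecke algebra of `GL_n` (without invertibility of the `X k`). Positions are
`0`-indexed and `T i` exchanges the positions `i` and `i + 1`. -/
structure AffHecke {F A : Type} [Field F] [Ring A] [Algebra F A] (n : ℕ) (q : F)
    (T X : ℕ → A) : Prop where
  q_ne : q ≠ 0
  quad : ∀ i, i + 1 < n → T i * T i = (q - 1) • T i + q • 1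
  braid : ∀ i, i + 2 < n → T i * T (i + 1) * T i = T (i + 1) * T i * T (i + 1)
  commT : ∀ i j, i + 2 ≤ j → j + 1 < n → Commute (T i) (T j)
  commX : ∀ i j, i < n → j < n → Commute (X i) (X j)
  txt : ∀ i, i + 1 < n → T i * X i * T i = q • X (i + 1)
  commTX : ∀ i k, i + 1 < n → k < n → k ≠ i → k ≠ i + 1 → Commute (T i) (X k)

section TwoStrands

theorem commute_aeval {F A : Type} [Field F] [Ring A] [Algebra F A] {w x : A}
    (h : Commute w x) (p : Polynomial F) : Commute w (Polynomial.aeval x p) := by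
  induction p using Polynomial.induction_on' with
  | add p r hp hr => rw [map_add]; exact hp.add_right hr
  | monomial k a =>
    rw [Polynomial.aeval_monomial]
    exact (Algebra.commute_algebraMap_right a w).mul_right (h.pow_right k)

theorem semiconj_aeval {F A : Type} [Field F] [Ring A] [Algebra F A] {w x y : A}
    (h : w * x = y * w) (p : Polynomial F) :
    w * Polynomial.aeval x p = Polynomial.aeval y p * w := by
  induction p using Polynomial.induction_on' with
  | add p r hp hr => rw [map_add, map_add, mul_add, hp, hr, add_mul]
  | monomial k a =>
    have hk : w * x ^ k = y ^ k * w := (SemiconjBy.pow_right (show SemiconjBy w x y from h) k)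
    rw [Polynomial.aeval_monomial, Polynomial.aeval_monomial, ← mul_assoc,
      (Algebra.commute_algebraMap_right a w).eq, mul_assoc, hk, mul_assoc]

variable {F A : Type} [Field F] [Ring A] [Algebra F A] {q : F} {t x y : A}

theorem tx_left (hq : q ≠ 0) (ht : t * t = (q - 1) • t + q • (1 : A)) (h : t * x * t = q • y) :
    t * x = y * t - (q - 1) • y := by
  have h1 : q • (t * x) = q • (y * t - (q - 1) • y) := by
    have : q • (y * t) = t * x * (t * t) := by
      rw [← smul_mul_assoc, ← h]; simp only [mul_assoc]
    rw [smul_sub, this, ht, smul_comm, ← h]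
    simp only [mul_add, mul_smul_comm, mul_one]
    module
  exact smul_right_injective A hq h1

theorem ty_left (hq : q ≠ 0) (ht : t * t = (q - 1) • t + q • (1 : A)) (h : t * x * t = q • y) :
    t * y = x * t + (q - 1) • y := by
  have h1 : q • (t * y) = q • (x * t + (q - 1) • y) := by
    have : q • (t * y) = (t * t) * x * t := by
      rw [← mul_smul_comm, ← h]; simp only [mul_assoc]
    rw [smul_add, this, ht, smul_comm, ← h]
    simp only [add_mul, smul_mul_assoc, one_mul]
    module
  exact smul_right_injective A hq h1

/-- The intertwiner `[t, x]` exchanges `x` and `y`. -/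
theorem phi_x (hx : t * x = y * t - (q - 1) • y) (hy : t * y = x * t + (q - 1) • y)
    (hc : y * x = x * y) : (t * x - x * t) * x = y * (t * x - x * t) := by
  have hx' : ∀ z, t * (x * z) = y * (t * z) - (q - 1) • (y * z) := fun z => by
    rw [← mul_assoc, hx]; simp only [sub_mul, smul_mul_assoc, mul_assoc]
  have hc' : ∀ z, y * (x * z) = x * (y * z) := fun z => by rw [← mul_assoc, hc, mul_assoc]
  simp only [mul_add, add_mul, mul_sub, sub_mul, smul_mul_assoc, mul_smul_comm, mul_assoc,
    hx, hy, hc, hx', hc']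
  module

theorem phi_y (hx : t * x = y * t - (q - 1) • y) (hy : t * y = x * t + (q - 1) • y)
    (hc : y * x = x * y) : (t * x - x * t) * y = x * (t * x - x * t) := by
  have hx' : ∀ z, t * (x * z) = y * (t * z) - (q - 1) • (y * z) := fun z => by
    rw [← mul_assoc, hx]; simp only [sub_mul, smul_mul_assoc, mul_assoc]
  have hc' : ∀ z, y * (x * z) = x * (y * z) := fun z => by rw [← mul_assoc, hc, mul_assoc]
  simp only [mul_add, add_mul, mul_sub, sub_mul, smul_mul_assoc, mul_smul_comm, mul_assoc,
    hx, hy, hc, hx', hc']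
  module

/-- The intertwiner in terms of `t` and of polynomials in `x` and `y`. -/
theorem phi_eq (hx : t * x = y * t - (q - 1) • y) (hy : t * y = x * t + (q - 1) • y)
    (hc : y * x = x * y) : t * x - x * t = t * (x - y) + (q - 1) • y := by
  simp only [mul_sub, hx, hy]
  module

theorem phi_sq (hx : t * x = y * t - (q - 1) • y) (hy : t * y = x * t + (q - 1) • y)
    (hc : y * x = x * y)
    (ht : t * t = (q - 1) • t + q • (1 : A)) :
    (t * x - x * t) * (t * x - x * t) = - ((q • x - y) * (x - q • y)) := by
  have ht' : ∀ z, t * (t * z) = (q - 1) • (t * z) + q • z := fun z => by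
    rw [← mul_assoc, ht]; simp only [add_mul, smul_mul_assoc, one_mul]
  have hx' : ∀ z, t * (x * z) = y * (t * z) - (q - 1) • (y * z) := fun z => by
    rw [← mul_assoc, hx]; simp only [sub_mul, smul_mul_assoc, mul_assoc]
  have hy' : ∀ z, t * (y * z) = x * (t * z) + (q - 1) • (y * z) := fun z => by
    rw [← mul_assoc, hy]; simp only [add_mul, smul_mul_assoc, mul_assoc]
  have hc' : ∀ z, y * (x * z) = x * (y * z) := fun z => by rw [← mul_assoc, hc, mul_assoc]
  simp only [mul_add, add_mul, mul_sub, sub_mul, smul_mul_assoc, mul_smul_comm, mul_assoc,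
    hx, hy, hc, hx', hc', hy', ht, ht', mul_one, smul_add, smul_sub]
  module

/-- Moving a polynomial in `x` past `t` turns it into the same polynomial in `y`, up to a term
commuting with everything that commutes with `x` and `y`. -/
theorem t_aeval_x (hx : t * x = y * t - (q - 1) • y)
    (p : Polynomial F) :
    ∃ d : A, (∀ w, Commute w x → Commute w y → Commute w d) ∧
      t * Polynomial.aeval x p = Polynomial.aeval y p * t - d := by
  induction p using Polynomial.induction_on with
  | C a =>
    refine ⟨0, fun w _ _ => Commute.zero_right w, ?_⟩
    simp [Algebra.commutes]
  | add p r hp hr =>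
    obtain ⟨d, hd, h⟩ := hp
    obtain ⟨d', hd', h'⟩ := hr
    refine ⟨d + d', fun w h1 h2 => (hd w h1 h2).add_right (hd' w h1 h2), ?_⟩
    rw [map_add, map_add, mul_add, h, h', add_mul]
    abel
  | monomial k a ih =>
    obtain ⟨d, hd, h⟩ := ih
    refine ⟨Polynomial.aeval y (Polynomial.C a * Polynomial.X ^ k) * ((q - 1) • y) + d * x,
      fun w h1 h2 => ?_, ?_⟩
    · refine Commute.add_right (Commute.mul_right ?_ (h2.smul_right _)) ((hd w h1 h2).mul_right h1)
      exact (commute_aeval h2 _)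
    · rw [pow_succ, ← mul_assoc, map_mul (Polynomial.aeval x) _ Polynomial.X,
        map_mul (Polynomial.aeval y) _ Polynomial.X, Polynomial.aeval_X, Polynomial.aeval_X,
        ← mul_assoc, h, sub_mul, mul_assoc _ t x, hx]
      simp only [mul_sub, mul_assoc]
      abel

theorem t_aeval_y (hy : t * y = x * t + (q - 1) • y)
    (p : Polynomial F) :
    ∃ d : A, (∀ w, Commute w x → Commute w y → Commute w d) ∧
      t * Polynomial.aeval y p = Polynomial.aeval x p * t + d := by
  induction p using Polynomial.induction_on with
  | C a =>
    refine ⟨0, fun w _ _ => Commute.zero_right w, ?_⟩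
    simp [Algebra.commutes]
  | add p r hp hr =>
    obtain ⟨d, hd, h⟩ := hp
    obtain ⟨d', hd', h'⟩ := hr
    refine ⟨d + d', fun w h1 h2 => (hd w h1 h2).add_right (hd' w h1 h2), ?_⟩
    rw [map_add, map_add, mul_add, h, h', add_mul]
    abel
  | monomial k a ih =>
    obtain ⟨d, hd, h⟩ := ih
    refine ⟨Polynomial.aeval x (Polynomial.C a * Polynomial.X ^ k) * ((q - 1) • y) + d * y,
      fun w h1 h2 => ?_, ?_⟩
    · refine Commute.add_right (Commute.mul_right ?_ (h2.smul_right _)) ((hd w h1 h2).mul_right h2)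
      exact (commute_aeval h1 _)
    · rw [pow_succ, ← mul_assoc, map_mul (Polynomial.aeval x) _ Polynomial.X,
        map_mul (Polynomial.aeval y) _ Polynomial.X, Polynomial.aeval_X, Polynomial.aeval_X,
        ← mul_assoc, h, add_mul, mul_assoc _ t y, hy]
      simp only [mul_add, mul_assoc]
      abel

end TwoStrands

section ThreeStrands

variable {F A : Type} [Field F] [Ring A] [Algebra F A] {q : F} {s t x y z : A}

/-- `T₁ φ₂ φ₁ = φ₂ φ₁ T₂`. -/
theorem t_phi_phi (hs2 : s * s = (q - 1) • s + q • (1 : A)) (ht2 : t * t = (q - 1) • t + q • (1 : A))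
    (hb : t * s * t = s * t * s)
    (sx : s * x = y * s - (q - 1) • y) (sy : s * y = x * s + (q - 1) • y) (sz : s * z = z * s)
    (ty : t * y = z * t - (q - 1) • z) (tz : t * z = y * t + (q - 1) • z) (tx : t * x = x * t)
    (yx : y * x = x * y) (zx : z * x = x * z) (zy : z * y = y * z) : s * ((t * y - y * t) * (s * x - x * s)) =
    (t * y - y * t) * (s * x - x * s) * t := by
  rw [phi_eq ty tz zy, phi_eq sx sy yx]
  have assoc : ∀ {a b c : A}, a * b = c → ∀ w, a * (b * w) = c * w := fun h w => by
    rw [← mul_assoc, h]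
  have hb1 : t * (s * t) = s * (t * s) := by simpa only [mul_assoc] using hb
  have hb2 : ∀ w, t * (s * (t * w)) = s * (t * (s * w)) := fun w => by
    have := congrArg (· * w) hb
    simpa only [mul_assoc] using this
  simp only [mul_add, add_mul, mul_sub, sub_mul, smul_mul_assoc, mul_smul_comm, mul_assoc,
    mul_one, one_mul, smul_add, smul_sub, hs2, ht2, sx, sy, sz, ty, tz, tx, yx, zx, zy,
    assoc hs2, assoc ht2, assoc sx, assoc sy, assoc sz, assoc ty, assoc tz, assoc tx,
    assoc yx, assoc zx, assoc zy, hb1, hb2]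
  module

/-- `T₂ φ₁ φ₂ = φ₁ φ₂ T₁`. -/
theorem t_phi_phi' (hs2 : s * s = (q - 1) • s + q • (1 : A)) (ht2 : t * t = (q - 1) • t + q • (1 : A))
    (hb : t * s * t = s * t * s)
    (sx : s * x = y * s - (q - 1) • y) (sy : s * y = x * s + (q - 1) • y) (sz : s * z = z * s)
    (ty : t * y = z * t - (q - 1) • z) (tz : t * z = y * t + (q - 1) • z) (tx : t * x = x * t)
    (yx : y * x = x * y) (zx : z * x = x * z) (zy : z * y = y * z) : t * ((s * x - x * s) * (t * y - y * t)) =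
    (s * x - x * s) * (t * y - y * t) * s := by
  rw [phi_eq ty tz zy, phi_eq sx sy yx]
  have assoc : ∀ {a b c : A}, a * b = c → ∀ w, a * (b * w) = c * w := fun h w => by
    rw [← mul_assoc, h]
  have hb1 : t * (s * t) = s * (t * s) := by simpa only [mul_assoc] using hb
  have hb2 : ∀ w, t * (s * (t * w)) = s * (t * (s * w)) := fun w => by
    have := congrArg (· * w) hb
    simpa only [mul_assoc] using this
  simp only [mul_add, add_mul, mul_sub, sub_mul, smul_mul_assoc, mul_smul_comm, mul_assoc,
    mul_one, one_mul, smul_add, smul_sub, hs2, ht2, sx, sy, sz, ty, tz, tx, yx, zx, zy,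
    assoc hs2, assoc ht2, assoc sx, assoc sy, assoc sz, assoc ty, assoc tz, assoc tx,
    assoc yx, assoc zx, assoc zy, hb1, hb2]
  module

/-- The intertwiners satisfy the braid relation. -/
theorem phi_braid (hs2 : s * s = (q - 1) • s + q • (1 : A)) (ht2 : t * t = (q - 1) • t + q • (1 : A))
    (hb : t * s * t = s * t * s)
    (sx : s * x = y * s - (q - 1) • y) (sy : s * y = x * s + (q - 1) • y) (sz : s * z = z * s)
    (ty : t * y = z * t - (q - 1) • z) (tz : t * z = y * t + (q - 1) • z) (tx : t * x = x * t)
    (yx : y * x = x * y) (zx : z * x = x * z) (zy : z * y = y * z) : (s * x - x * s) * (t * y - y * t) * (s * x - x * s) =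
    (t * y - y * t) * (s * x - x * s) * (t * y - y * t) := by
  have h := t_phi_phi hs2 ht2 hb sx sy sz ty tz tx yx zx zy
  set f := s * x - x * s with hf
  set g := t * y - y * t with hg
  have fx : f * x = y * f := phi_x sx sy yx
  have fy : f * y = x * f := phi_y sx sy yx
  have gy : g * y = z * g := phi_x ty tz zy
  have gz : g * z = y * g := phi_y ty tz zy
  have fz : f * z = z * f := by
    simp only [hf, sub_mul, mul_sub, mul_assoc]
    rw [← zx, ← mul_assoc s z x, sz, ← mul_assoc x z s, ← zx, mul_assoc, mul_assoc]
  have gx : g * x = x * g := by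
    simp only [hg, sub_mul, mul_sub, mul_assoc]
    rw [yx, ← mul_assoc t x y, tx, ← mul_assoc y x t, yx, mul_assoc, mul_assoc]
  have ef : f = s * (x - y) + (q - 1) • y := phi_eq sx sy yx
  have eg : g = t * (y - z) + (q - 1) • z := phi_eq ty tz zy
  have hz : g * f * z = y * (g * f) := by
    rw [mul_assoc, fz, ← mul_assoc, gz, mul_assoc]
  have hy : g * f * y = x * (g * f) := by
    rw [mul_assoc, fy, ← mul_assoc, gx, mul_assoc]
  calc f * g * f = (s * (x - y) + (q - 1) • y) * (g * f) := by rw [← ef, mul_assoc]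
    _ = s * (x * (g * f) - y * (g * f)) + (q - 1) • (y * (g * f)) := by
        simp only [add_mul, sub_mul, mul_sub, mul_assoc, smul_mul_assoc]
    _ = (s * (g * f)) * (y - z) + (q - 1) • (g * f * z) := by
        rw [← hy, ← hz]; simp only [mul_sub, mul_assoc]
    _ = g * f * (t * (y - z) + (q - 1) • z) := by
        rw [h]; simp only [mul_add, mul_assoc, mul_smul_comm]
    _ = g * f * g := by rw [← eg]

end ThreeStrands

/-! ### The affine Hecke relations in an Ariki–Koike algebra -/

namespace AffHecke

variable {F A : Type} [Field F] [Ring A] [Algebra F A] {n : ℕ} {q : F} {T X : ℕ → A}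

/-- The Jucys–Murphy elements built from `g 0 = T_0` and the `g i = T_i`. -/
noncomputable def jm (q : F) (g : ℕ → A) : ℕ → A
  | 0 => g 0
  | k + 1 => q⁻¹ • (g (k + 1) * jm q g k * g (k + 1))

theorem jm_comm_lt {g : ℕ → A} (hcomm : ∀ i j, i + 2 ≤ j → j < n → Commute (g i) (g j)) (j : ℕ)
    (hj : j < n) : ∀ k, k + 1 < j → Commute (g j) (jm q g k) := by
  intro k
  induction k with
  | zero => intro h; exact (hcomm 0 j (by omega) hj).symm
  | succ k ih =>
    intro h
    have h1 := (hcomm (k + 1) j (by omega) hj).symm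
    exact ((h1.mul_right (ih (by omega))).mul_right h1).smul_right _

theorem jm_comm_gt {g : ℕ → A} (hcomm : ∀ i j, i + 2 ≤ j → j < n → Commute (g i) (g j))
    (hbraid : ∀ i, 1 ≤ i → i + 1 < n → g i * g (i + 1) * g i = g (i + 1) * g i * g (i + 1))
    (j : ℕ) (hj : 1 ≤ j) : ∀ d, j + 1 + d < n → Commute (g j) (jm q g (j + 1 + d)) := by
  intro d
  induction d with
  | zero =>
    intro h
    obtain ⟨i, rfl⟩ : ∃ i, j = i + 1 := ⟨j - 1, by omega⟩
    have hb := hbraid (i + 1) hj h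
    have hc := jm_comm_lt (q := q) hcomm (i + 2) h i (by omega)
    simp only [add_zero, jm]
    refine Commute.smul_right ?_ _
    rw [mul_smul_comm, smul_mul_assoc]
    refine Commute.smul_right ?_ _
    set a := g (i + 1)
    set b := g (i + 1 + 1)
    set x := jm q g i
    have hc' : b * x = x * b := hc
    show a * (b * (a * x * a) * b) = b * (a * x * a) * b * a
    calc a * (b * (a * x * a) * b) = (a * b * a) * x * (a * b) := by simp only [mul_assoc]
      _ = b * a * (b * x) * (a * b) := by rw [hb]; simp only [mul_assoc]
      _ = b * a * x * (b * a * b) := by rw [hc']; simp only [mul_assoc]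
      _ = _ := by rw [← hb]; simp only [mul_assoc]
  | succ d ih =>
    intro h
    have h1 := hcomm j (j + 1 + d + 1) (by omega) h
    exact ((h1.mul_right (ih (by omega))).mul_right h1).smul_right _

/-- Elements satisfying the non-cyclotomic Ariki–Koike relations give rise to elements satisfying
the affine Hecke relations. -/
theorem ofGen {g : ℕ → A} (hq : q ≠ 0)
    (hquad : ∀ i, 1 ≤ i → i < n → g i * g i = (q - 1) • g i + q • 1)
    (hbraid : ∀ i, 1 ≤ i → i + 1 < n → g i * g (i + 1) * g i = g (i + 1) * g i * g (i + 1))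
    (hcomm : ∀ i j, i + 2 ≤ j → j < n → Commute (g i) (g j))
    (h01 : 1 < n → g 0 * g 1 * g 0 * g 1 = g 1 * g 0 * g 1 * g 0) :
    AffHecke n q (fun i => g (i + 1)) (jm q g) := by
  have hTX : ∀ j k, 1 ≤ j → j < n → k < n → k + 1 ≠ j → k ≠ j → Commute (g j) (jm q g k) := by
    intro j k h1 h2 h3 h4 h5
    rcases lt_or_gt_of_ne h4 with h | h
    · exact jm_comm_lt hcomm j h2 k h
    · obtain ⟨d, rfl⟩ : ∃ d, k = j + 1 + d := ⟨k - (j + 1), by omega⟩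
      exact jm_comm_gt hcomm hbraid j h1 d h3
  have h0 : ∀ j, j < n → Commute (g 0) (jm q g j) := by
    intro j
    induction j with
    | zero => intro _; exact Commute.refl _
    | succ j ih =>
      intro h
      rcases Nat.eq_zero_or_pos j with rfl | hj
      · refine Commute.smul_right ?_ _
        show g 0 * (g 1 * g 0 * g 1) = g 1 * g 0 * g 1 * g 0
        rw [← h01 h]; simp only [mul_assoc]
      · have h1 := hcomm 0 (j + 1) (by omega) h
        exact ((h1.mul_right (ih (by omega))).mul_right h1).smul_right _
  have hXX : ∀ i j, i < j → j < n → Commute (jm q g i) (jm q g j) := by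
    intro i
    induction i with
    | zero => intro j _ h; exact h0 j h
    | succ i ih =>
      intro j h1 h2
      have h3 := hTX (i + 1) j (by omega) (by omega) h2 (by omega) (by omega)
      exact ((h3.mul_left (ih j (by omega) h2)).mul_left h3).smul_left _
  refine ⟨hq, fun i h => hquad _ (by omega) h, fun i h => hbraid _ (by omega) h,
    fun i j h1 h2 => hcomm _ _ (by omega) h2, fun i j hi hj => ?_, fun i h => ?_,
    fun i k h1 h2 h3 h4 => hTX _ _ (by omega) h1 h2 (by omega) h4⟩
  · rcases lt_trichotomy i j with h | rfl | h
    · exact hXX i j h hj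
    · exact Commute.refl _
    · exact (hXX j i h hi).symm
  · show _ = q • (q⁻¹ • _)
    rw [smul_smul, mul_inv_cancel₀ hq, one_smul]

variable (h : AffHecke n q T X)

theorem hx (h : AffHecke n q T X) {i : ℕ} (hi : i + 1 < n) :
    T i * X i = X (i + 1) * T i - (q - 1) • X (i + 1) :=
  tx_left h.q_ne (h.quad i hi) (h.txt i hi)

theorem hy (h : AffHecke n q T X) {i : ℕ} (hi : i + 1 < n) :
    T i * X (i + 1) = X i * T i + (q - 1) • X (i + 1) :=
  ty_left h.q_ne (h.quad i hi) (h.txt i hi)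

theorem hc (h : AffHecke n q T X) {i : ℕ} (hi : i + 1 < n) :
    X (i + 1) * X i = X i * X (i + 1) := h.commX _ _ hi (by omega)

end AffHecke

/-- The intertwiner exchanging the positions `i` and `i + 1`. -/
def phi {A : Type} [Ring A] (T X : ℕ → A) (i : ℕ) : A := T i * X i - X i * T i

namespace AffHecke

variable {F A : Type} [Field F] [Ring A] [Algebra F A] {n : ℕ} {q : F} {T X : ℕ → A}

theorem phi_mul_X (h : AffHecke n q T X) {i : ℕ} (hi : i + 1 < n) :
    phi T X i * X i = X (i + 1) * phi T X i := phi_x (h.hx hi) (h.hy hi) (h.hc hi)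

theorem phi_mul_X' (h : AffHecke n q T X) {i : ℕ} (hi : i + 1 < n) :
    phi T X i * X (i + 1) = X i * phi T X i := phi_y (h.hx hi) (h.hy hi) (h.hc hi)

theorem phi_comm_X (h : AffHecke n q T X) {i k : ℕ} (hi : i + 1 < n) (hk : k < n) (h1 : k ≠ i)
    (h2 : k ≠ i + 1) : Commute (phi T X i) (X k) := by
  have a := h.commTX i k hi hk h1 h2
  have b := h.commX i k (by omega) hk
  exact (a.mul_left b).sub_left (b.mul_left a)

theorem phi_comm_T (h : AffHecke n q T X) {i j : ℕ} (hi : i + 1 < n) (hj : j + 1 < n)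
    (hij : i + 2 ≤ j ∨ j + 2 ≤ i) : Commute (phi T X i) (T j) := by
  have a : Commute (T i) (T j) := by
    rcases hij with hij | hij
    · exact h.commT i j hij hj
    · exact (h.commT j i hij hi).symm
  have b : Commute (X i) (T j) := (h.commTX j i hj (by omega) (by omega) (by omega)).symm
  exact (a.mul_left b).sub_left (b.mul_left a)

theorem phi_comm_phi (h : AffHecke n q T X) {i j : ℕ} (hi : i + 1 < n) (hj : j + 1 < n)
    (hij : i + 2 ≤ j ∨ j + 2 ≤ i) : Commute (phi T X i) (phi T X j) := by
  have a := h.phi_comm_T hi hj hij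
  have b : Commute (phi T X i) (X j) := h.phi_comm_X hi (by omega) (by omega) (by omega)
  exact (a.mul_right b).sub_right (b.mul_right a)

theorem phi_mul_phi (h : AffHecke n q T X) {i : ℕ} (hi : i + 1 < n) :
    phi T X i * phi T X i = - ((q • X i - X (i + 1)) * (X i - q • X (i + 1))) :=
  phi_sq (h.hx hi) (h.hy hi) (h.hc hi) (h.quad i hi)

theorem phi_expand (h : AffHecke n q T X) {i : ℕ} (hi : i + 1 < n) :
    phi T X i = T i * (X i - X (i + 1)) + (q - 1) • X (i + 1) :=
  phi_eq (h.hx hi) (h.hy hi) (h.hc hi)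

theorem T_phi_phi (h : AffHecke n q T X) {i : ℕ} (hi : i + 2 < n) :
    T i * (phi T X (i + 1) * phi T X i) = phi T X (i + 1) * phi T X i * T (i + 1) :=
  t_phi_phi (h.quad i (by omega)) (h.quad (i + 1) hi) (h.braid i hi).symm (h.hx (by omega))
    (h.hy (by omega)) (h.commTX i (i + 2) (by omega) hi (by omega) (by omega)) (h.hx hi) (h.hy hi)
    (h.commTX (i + 1) i hi (by omega) (by omega) (by omega)) (h.hc (by omega))
    (h.commX _ _ hi (by omega)) (h.hc hi)

theorem T_phi_phi' (h : AffHecke n q T X) {i : ℕ} (hi : i + 2 < n) :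
    T (i + 1) * (phi T X i * phi T X (i + 1)) = phi T X i * phi T X (i + 1) * T i :=
  t_phi_phi' (h.quad i (by omega)) (h.quad (i + 1) hi) (h.braid i hi).symm (h.hx (by omega))
    (h.hy (by omega)) (h.commTX i (i + 2) (by omega) hi (by omega) (by omega)) (h.hx hi) (h.hy hi)
    (h.commTX (i + 1) i hi (by omega) (by omega) (by omega)) (h.hc (by omega))
    (h.commX _ _ hi (by omega)) (h.hc hi)

theorem phi_phi_phi (h : AffHecke n q T X) {i : ℕ} (hi : i + 2 < n) :
    phi T X i * phi T X (i + 1) * phi T X i = phi T X (i + 1) * phi T X i * phi T X (i + 1) :=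
  phi_braid (h.quad i (by omega)) (h.quad (i + 1) hi) (h.braid i hi).symm (h.hx (by omega))
    (h.hy (by omega)) (h.commTX i (i + 2) (by omega) hi (by omega) (by omega)) (h.hx hi) (h.hy hi)
    (h.commTX (i + 1) i hi (by omega) (by omega) (by omega)) (h.hc (by omega))
    (h.commX _ _ hi (by omega)) (h.hc hi)

end AffHecke

/-! ### Generators of Ariki–Koike algebras -/

section AK

variable (F : Type) [Field F] (n r : ℕ) (q : F) (Q : Fin r → F)

/-- The generator `T_i` of the Ariki–Koike algebra (and `0` for `i ≥ n`). -/
noncomputable def akGen (i : ℕ) : ArikiKoike F n r q Q :=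
  if h : i < n then RingQuot.mkAlgHom F (AKRel F n r q Q) (FreeAlgebra.ι F ⟨i, h⟩) else 0

/-- The element `T_{i+1}` of the Ariki–Koike algebra, exchanging the positions `i`, `i + 1`. -/
noncomputable def akT (i : ℕ) : ArikiKoike F n r q Q := akGen F n r q Q (i + 1)

/-- The Jucys–Murphy elements of the Ariki–Koike algebra. -/
noncomputable def akX (k : ℕ) : ArikiKoike F n r q Q := AffHecke.jm q (akGen F n r q Q) k

variable {F n r q Q}

theorem akGen_eq {i : ℕ} (h : i < n) : akGen F n r q Q i =
    RingQuot.mkAlgHom F (AKRel F n r q Q) (FreeAlgebra.ι F ⟨i, h⟩) := dif_pos h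

theorem akAff (hq : q ≠ 0) : AffHecke n q (akT F n r q Q) (akX F n r q Q) := by
  refine AffHecke.ofGen hq ?_ ?_ ?_ ?_
  · intro i h1 h2
    have := RingQuot.mkAlgHom_rel F (AKRel.quadratic (F := F) (r := r) (q := q) (Q := Q) i h1 h2)
    rw [map_mul, map_add, map_sub, map_one, map_zero, AlgHom.commutes, ← akGen_eq h2] at this
    rw [Algebra.algebraMap_eq_smul_one, add_mul, mul_sub, mul_sub, mul_smul_comm, mul_one, one_mul,
      one_mul] at this
    rw [← sub_eq_zero, ← this]
    module
  · intro i h1 h2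
    have := RingQuot.mkAlgHom_rel F (AKRel.braid (F := F) (r := r) (q := q) (Q := Q) i h1 h2)
    simpa only [map_mul, ← akGen_eq] using this
  · intro i j h1 h2
    have := RingQuot.mkAlgHom_rel F (AKRel.comm (F := F) (r := r) (q := q) (Q := Q) i j h1 h2)
    show _ * _ = _ * _
    simpa only [map_mul, ← akGen_eq] using this
  · intro h1
    have := RingQuot.mkAlgHom_rel F (AKRel.braid01 (F := F) (r := r) (q := q) (Q := Q) h1)
    simpa only [map_mul, ← akGen_eq] using this

/-- The polynomial `∏ (Z - Q_i)`. -/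
noncomputable def cycPoly {F : Type} [Field F] {r : ℕ} (Q : Fin r → F) : Polynomial F :=
  ∏ i, (Polynomial.X - Polynomial.C (Q i))

theorem aeval_cycPoly {A : Type} [Ring A] [Algebra F A] (x : A) :
    Polynomial.aeval x (cycPoly Q) =
      ((List.finRange r).map fun j => x - algebraMap F A (Q j)).prod := by
  rw [cycPoly, ← List.prod_ofFn, map_list_prod, List.ofFn_eq_map, List.map_map]
  simp [Function.comp_def]

theorem ak_cyc (hn : 0 < n) : Polynomial.aeval (akX F n r q Q 0) (cycPoly Q) = 0 := by
  have := RingQuot.mkAlgHom_rel F (AKRel.cyclotomic (F := F) (r := r) (q := q) (Q := Q) hn)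
  rw [map_list_prod, map_zero, List.map_map] at this
  rw [aeval_cycPoly, ← this]
  congr 2
  funext j
  simp [akX, AffHecke.jm, akGen_eq hn]

/-- The universal property of the Ariki–Koike algebra, phrased with the affine Hecke relations. -/
theorem ak_lift {A : Type} [Ring A] [Algebra F A] {T X : ℕ → A} (h : AffHecke n q T X)
    (hcyc : 0 < n → Polynomial.aeval (X 0) (cycPoly Q) = 0) :
    ∃ f : ArikiKoike F n r q Q →ₐ[F] A, (∀ i, i + 1 < n → f (akT F n r q Q i) = T i) ∧
      ∀ k, k < n → f (akX F n r q Q k) = X k := by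
  classical
  let g : ℕ → A := fun i => if i = 0 then X 0 else T (i - 1)
  let f0 : FreeAlgebra F (Fin n) →ₐ[F] A := FreeAlgebra.lift F fun i => g i
  have f0ι : ∀ i, f0 (FreeAlgebra.ι F i) = g i := fun i => FreeAlgebra.lift_ι_apply _ _
  have hf0 : ∀ ⦃x y⦄, AKRel F n r q Q x y → f0 x = f0 y := by
    intro x y hxy
    cases hxy with
    | cyclotomic hn =>
      rw [map_list_prod, map_zero, List.map_map, ← hcyc hn, aeval_cycPoly]
      congr 2
      funext j
      simp [f0ι, g]
    | braid01 hn =>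
      simp only [map_mul, f0ι]
      have h1 : T 0 * X 0 * T 0 = q • X 1 := h.txt 0 hn
      have h2 := (h.commX 0 1 (by omega) hn).eq
      show X 0 * T 0 * X 0 * T 0 = T 0 * X 0 * T 0 * X 0
      rw [h1, smul_mul_assoc, ← h2, ← mul_smul_comm, ← h1]
      simp only [mul_assoc]
    | quadratic i h1 h2 =>
      obtain ⟨i, rfl⟩ : ∃ j, i = j + 1 := ⟨i - 1, by omega⟩
      simp only [map_mul, map_add, map_sub, map_one, map_zero, AlgHom.commutes, f0ι]
      show (T i + 1) * (T i - _) = 0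
      rw [Algebra.algebraMap_eq_smul_one, add_mul, mul_sub, mul_sub, mul_smul_comm, mul_one,
        one_mul, one_mul, h.quad i h2]
      module
    | braid i h1 h2 =>
      obtain ⟨i, rfl⟩ : ∃ j, i = j + 1 := ⟨i - 1, by omega⟩
      simp only [map_mul, f0ι]
      exact h.braid i h2
    | comm i j hij hj =>
      obtain ⟨j, rfl⟩ : ∃ k, j = k + 1 := ⟨j - 1, by omega⟩
      simp only [map_mul, f0ι]
      rcases Nat.eq_zero_or_pos i with rfl | hi
      · exact (h.commTX j 0 hj (by omega) (by omega) (by omega)).symm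
      · obtain ⟨i, rfl⟩ : ∃ k, i = k + 1 := ⟨i - 1, by omega⟩
        exact h.commT i j (by omega) hj
  let f : ArikiKoike F n r q Q →ₐ[F] A := RingQuot.liftAlgHom F ⟨f0, hf0⟩
  have fg : ∀ i, i < n → f (akGen F n r q Q i) = g i := by
    intro i hi
    rw [akGen_eq hi]
    simp only [f, RingQuot.liftAlgHom_mkAlgHom_apply, f0ι]
  refine ⟨f, fun i hi => fg (i + 1) hi, fun k => ?_⟩
  induction k with
  | zero => exact fun hk => fg 0 hk
  | succ k ih =>
    intro hk
    show f (q⁻¹ • (akGen F n r q Q (k + 1) * akX F n r q Q k * akGen F n r q Q (k + 1))) = _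
    rw [map_smul, map_mul, map_mul, ih (by omega), fg (k + 1) hk]
    show q⁻¹ • (T k * X k * T k) = _
    rw [h.txt k hk, smul_smul, inv_mul_cancel₀ h.q_ne, one_smul]

/-- A predicate on the Ariki–Koike algebra which holds for scalars and for the generators and which
is stable under sums and products holds everywhere. -/
theorem ak_induction {P : ArikiKoike F n r q Q → Prop} (hs : ∀ a : F, P (algebraMap F _ a))
    (h0 : 0 < n → P (akX F n r q Q 0)) (hT : ∀ i, i + 1 < n → P (akT F n r q Q i))
    (hadd : ∀ a b, P a → P b → P (a + b)) (hmul : ∀ a b, P a → P b → P (a * b))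
    (z : ArikiKoike F n r q Q) : P z := by
  obtain ⟨w, rfl⟩ := RingQuot.mkAlgHom_surjective F (AKRel F n r q Q) z
  induction w using FreeAlgebra.induction with
  | grade0 a => rw [AlgHom.commutes]; exact hs a
  | grade1 i =>
    rw [← akGen_eq i.2]
    rcases i with ⟨i, hi⟩
    cases i with
    | zero => exact h0 hi
    | succ i => exact hT i hi
  | mul a b ha hb => rw [map_mul]; exact hmul _ _ ha hb
  | add a b ha hb => rw [map_add]; exact hadd _ _ ha hb

end AK

open Polynomial

/-! ### The polynomials bounding the spectrum of the Jucys–Murphy elements -/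

section Poly

variable {F : Type} [Field F]

/-- If the roots of `p` are the `Q_i`, then those of `pw q p m` are the `q ^ a * Q_i` with
`|a| ≤ m`. -/
noncomputable def pw (q : F) (p : F[X]) : ℕ → F[X]
  | 0 => p
  | m + 1 => pw q p m * ((pw q p m).comp (C q * X) * (pw q p m).comp (C q⁻¹ * X))

theorem comp_CX_comp_CX (p : F[X]) (s t : F) :
    (p.comp (C s * X)).comp (C t * X) = p.comp (C (s * t) * X) := by
  rw [comp_assoc]; congr 1
  simp [mul_assoc]

theorem pw_coprime_left {q : F} (hq : q ≠ 0) {p p' : F[X]} {n : ℕ}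
    (hbase : ∀ a b : ℤ, |a - b| < n →
      IsCoprime (p.comp (C (q ^ a) * X)) (p'.comp (C (q ^ b) * X))) (m : ℕ) :
    ∀ a b : ℤ, |a - b| + m < n →
      IsCoprime ((pw q p m).comp (C (q ^ a) * X)) (p'.comp (C (q ^ b) * X)) := by
  induction m with
  | zero => intro a b h; exact hbase a b (by simpa using h)
  | succ m ih =>
    intro a b h
    push_cast at h
    rw [pw, mul_comp, mul_comp, comp_CX_comp_CX, comp_CX_comp_CX]
    have e1 : q * q ^ a = q ^ (a + 1) := by rw [zpow_add_one₀ hq]; ring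
    have e2 : q⁻¹ * q ^ a = q ^ (a - 1) := by rw [zpow_sub_one₀ hq]; ring
    rw [e1, e2]
    refine (ih a b ?_).mul_left ((ih (a + 1) b ?_).mul_left (ih (a - 1) b ?_)) <;>
      (rcases abs_cases (a - b) with h1 | h1 <;> rcases abs_cases (a + 1 - b) with h2 | h2 <;>
        rcases abs_cases (a - 1 - b) with h3 | h3 <;> omega)

theorem pw_coprime_both {q : F} (hq : q ≠ 0) {p p' : F[X]} {n : ℕ}
    (hbase : ∀ a b : ℤ, |a - b| < n →
      IsCoprime (p.comp (C (q ^ a) * X)) (p'.comp (C (q ^ b) * X))) (m m' : ℕ)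
    (h : m + m' < n) : IsCoprime (pw q p m) (pw q p' m') := by
  have key : ∀ m' : ℕ, ∀ a b : ℤ, |a - b| + m + m' < n →
      IsCoprime ((pw q p m).comp (C (q ^ a) * X)) ((pw q p' m').comp (C (q ^ b) * X)) := by
    intro m'
    induction m' with
    | zero => intro a b h; exact pw_coprime_left hq hbase m a b (by simpa using h)
    | succ m' ih =>
      intro a b h
      push_cast at h
      rw [pw, mul_comp, mul_comp, comp_CX_comp_CX, comp_CX_comp_CX]
      have e1 : q * q ^ b = q ^ (b + 1) := by rw [zpow_add_one₀ hq]; ring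
      have e2 : q⁻¹ * q ^ b = q ^ (b - 1) := by rw [zpow_sub_one₀ hq]; ring
      rw [e1, e2]
      refine (ih a b ?_).mul_right ((ih a (b + 1) ?_).mul_right (ih a (b - 1) ?_)) <;>
        (rcases abs_cases (a - b) with h1 | h1 <;> rcases abs_cases (a - (b + 1)) with h2 | h2 <;>
          rcases abs_cases (a - (b - 1)) with h3 | h3 <;> omega)
  have := key m' 0 0 (by simp; exact_mod_cast h)
  simpa using this

theorem cycPoly_coprime {q : F} (hq : q ≠ 0) {r r' n : ℕ} {Q : Fin r → F} {Q' : Fin r' → F}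
    (hsep : ∀ i j, ∀ a : ℤ, -(n : ℤ) < a → a < n → q ^ a * Q i - Q' j ≠ 0) (a b : ℤ)
    (hab : |a - b| < n) :
    IsCoprime ((cycPoly Q).comp (C (q ^ a) * X)) ((cycPoly Q').comp (C (q ^ b) * X)) := by
  rw [cycPoly, cycPoly, prod_comp, prod_comp]
  refine IsCoprime.prod_left fun i _ => IsCoprime.prod_right fun j _ => ?_
  have h1 := hsep i j (b - a) (by rcases abs_cases (a - b) with h | h <;> omega)
    (by rcases abs_cases (a - b) with h | h <;> omega)
  have h2 : q ^ b * Q i - q ^ a * Q' j ≠ 0 := by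
    intro h0
    apply h1
    rw [zpow_sub₀ hq]
    have := zpow_ne_zero a hq
    field_simp
    linear_combination h0
  refine ⟨C (-(q ^ b * Q i - q ^ a * Q' j)⁻¹ * q ^ b), C ((q ^ b * Q i - q ^ a * Q' j)⁻¹ * q ^ a), ?_⟩
  simp only [sub_comp, X_comp, C_comp]
  have : (1 : F[X]) = C ((q ^ b * Q i - q ^ a * Q' j)⁻¹ * (q ^ b * Q i - q ^ a * Q' j)) := by
    rw [inv_mul_cancel₀ h2, C_1]
  rw [this]
  simp only [C_mul, C_sub, C_neg]
  ring

end Poly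

/-! ### Divided differences in a noncommutative algebra -/

section Div

variable {F A : Type} [Field F] [Ring A] [Algebra F A] {x y : A}

theorem commute_adjoin {w d : A} (hx : Commute w x) (hy : Commute w y)
    (hd : d ∈ Algebra.adjoin F {x, y}) : Commute w d := by
  have : Algebra.adjoin F {x, y} ≤ Subalgebra.centralizer F {w} := by
    refine Algebra.adjoin_le ?_
    rintro _ (rfl | rfl)
    · exact (Subalgebra.mem_centralizer_iff F).2 (by rintro _ rfl; exact hx)
    · exact (Subalgebra.mem_centralizer_iff F).2 (by rintro _ rfl; exact hy)
  exact (Subalgebra.mem_centralizer_iff F).1 (this hd) w rfl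

theorem aeval_mem_adjoin_left (p : F[X]) : aeval x p ∈ Algebra.adjoin F {x, y} :=
  Algebra.adjoin_mono (by simp) (aeval_mem_adjoin_singleton F _)

theorem aeval_mem_adjoin_right (p : F[X]) : aeval y p ∈ Algebra.adjoin F {x, y} :=
  Algebra.adjoin_mono (by simp) (aeval_mem_adjoin_singleton F _)

theorem aeval_comp_CX (p : F[X]) (s : F) : aeval y (p.comp (C s * X)) = aeval (s • y) p := by
  rw [aeval_comp]; simp [Algebra.smul_def]

theorem aeval_sub_aeval (hc : Commute x y) (s : F) (p : F[X]) : ∃ d ∈ Algebra.adjoin F {x, y},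
    aeval y (p.comp (C s * X)) - aeval x p = d * (s • y - x) := by
  have hxm : x ∈ Algebra.adjoin F {x, y} := Algebra.subset_adjoin (by simp)
  have hym : y ∈ Algebra.adjoin F {x, y} := Algebra.subset_adjoin (by simp)
  rw [aeval_comp_CX]
  induction p using Polynomial.induction_on with
  | C a => exact ⟨0, zero_mem _, by simp⟩
  | add p r hp hr =>
    obtain ⟨d, hd, h⟩ := hp
    obtain ⟨d', hd', h'⟩ := hr
    refine ⟨d + d', add_mem hd hd', ?_⟩
    rw [map_add, map_add, add_mul, ← h, ← h']
    abel
  | monomial k a ih =>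
    obtain ⟨d, hd, h⟩ := ih
    refine ⟨s • (d * y) + aeval x (C a * X ^ k), add_mem (Subalgebra.smul_mem _ (mul_mem hd hym) _)
      (aeval_mem_adjoin_left _), ?_⟩
    have hc' : x * y = y * x := hc
    have h2 : aeval (s • y) (C a * X ^ k) = aeval x (C a * X ^ k) + d * (s • y - x) := by
      rw [← h]; abel
    rw [pow_succ, ← mul_assoc, map_mul (aeval x) _ X, map_mul (aeval (s • y)) _ X, aeval_X,
      aeval_X, h2]
    simp only [add_mul, mul_add, mul_sub, sub_mul, mul_assoc, mul_smul_comm, smul_mul_assoc, hc']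
    module

/-- Where `x` and `y` have coprime spectra, up to the scalar `s`, the element `x - s • y` acts
invertibly. -/
theorem inv_on (hc : Commute x y) (s : F) {p p' : F[X]} (hcop : IsCoprime (p.comp (C s * X)) p') :
    ∃ u ∈ Algebra.adjoin F {x, y}, ∀ z, aeval x p * z = 0 → aeval y p' * z = 0 →
      u * ((x - s • y) * z) = z := by
  obtain ⟨a, b, hab⟩ := hcop
  obtain ⟨d, hd, h⟩ := aeval_sub_aeval hc s p
  refine ⟨- (aeval y a * d), neg_mem (mul_mem (aeval_mem_adjoin_right _) hd), fun z h1 h2 => ?_⟩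
  have h3 := congrArg (fun w => aeval y w * z) hab
  simp only [map_add, map_mul, map_one, add_mul, one_mul, mul_assoc, h2, mul_zero, add_zero] at h3
  rw [sub_eq_iff_eq_add.1 h, add_mul, h1, add_zero] at h3
  have : x - s • y = -(s • y - x) := by abel
  rw [this]
  simpa only [neg_mul, mul_neg, neg_neg, mul_assoc] using h3

/-- The step bounding the spectrum of `y` by that of `x`. -/
theorem spec_step {q : F} (hq : q ≠ 0) (hc : Commute x y) {R p : F[X]} {z : A}
    (h1 : aeval y R * ((q • x - y) * (x - q • y) * z) = 0) (h2 : aeval x p * z = 0) :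
    aeval y (R * (p.comp (C q * X) * p.comp (C q⁻¹ * X))) * z = 0 := by
  obtain ⟨d, hd, h⟩ := aeval_sub_aeval hc q p
  obtain ⟨d', hd', h'⟩ := aeval_sub_aeval hc q⁻¹ p
  have e1 : aeval y (p.comp (C q⁻¹ * X)) * z = d' * ((q⁻¹ • y - x) * z) := by
    rw [sub_eq_iff_eq_add.1 h', add_mul, h2, add_zero, mul_assoc]
  have cx : Commute (aeval x p) (q⁻¹ • y - x) :=
    ((commute_aeval hc.symm p).symm.smul_right _).sub_right (commute_aeval (Commute.refl x) p).symm
  have cd' : Commute (aeval x p) d' := commute_adjoin (commute_aeval (Commute.refl x) p).symm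
    (commute_aeval hc.symm p).symm hd'
  have e2 : aeval y (p.comp (C q * X)) * (d' * ((q⁻¹ • y - x) * z)) =
      d * ((q • y - x) * (d' * ((q⁻¹ • y - x) * z))) := by
    have : aeval x p * (d' * ((q⁻¹ • y - x) * z)) = 0 := by
      rw [← mul_assoc, cd'.eq, mul_assoc, ← mul_assoc (aeval x p), cx.eq, mul_assoc, h2, mul_zero,
        mul_zero]
    rw [sub_eq_iff_eq_add.1 h, add_mul, this, add_zero, mul_assoc]
  have cy : ∀ e ∈ Algebra.adjoin F {x, y}, Commute (aeval y R) e := fun e he =>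
    commute_adjoin (commute_aeval hc R).symm (commute_aeval (Commute.refl y) R).symm he
  have cdy : Commute (q • y - x) d' := by
    refine commute_adjoin ?_ ?_ hd'
    · exact (hc.symm.smul_left _).sub_left (Commute.refl x)
    · exact ((Commute.refl y).smul_left _).sub_left hc
  have e3 : (q • y - x) * (q⁻¹ • y - x) * z = q⁻¹ • ((q • x - y) * (x - q • y) * z) := by
    have hc' : x * y = y * x := hc
    rw [← smul_mul_assoc]
    congr 1
    simp only [mul_sub, sub_mul, mul_smul_comm, smul_mul_assoc, hc']
    match_scalars <;> field_simp
  rw [map_mul, map_mul, mul_assoc, mul_assoc, e1, e2, ← mul_assoc (q • y - x), cdy.eq,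
    ← mul_assoc (aeval y R), (cy d hd).eq, mul_assoc, mul_assoc d', ← mul_assoc (aeval y R),
    (cy d' hd').eq, mul_assoc, ← mul_assoc (q • y - x), e3, mul_smul_comm, h1, smul_zero,
    mul_zero, mul_zero]

end Div

/-- In a cyclotomic quotient the `k`-th Jucys–Murphy element is killed by `pw q p k`. -/
theorem AffHecke.spec {F A : Type} [Field F] [Ring A] [Algebra F A] {n : ℕ} {q : F} {T X : ℕ → A}
    (h : AffHecke n q T X) {p : F[X]} (h0 : 0 < n → aeval (X 0) p = 0) :
    ∀ k, k < n → aeval (X k) (pw q p k) = 0 := by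
  intro k
  induction k with
  | zero => exact h0
  | succ k ih =>
    intro hk
    have ih := ih (by omega)
    have := spec_step h.q_ne (h.commX k (k + 1) (by omega) hk) (R := pw q p k) (p := pw q p k)
      (z := 1) ?_ (by rw [ih, zero_mul])
    · simpa [pw] using this
    · have e := congrArg Neg.neg (h.phi_mul_phi hk)
      rw [neg_neg] at e
      rw [mul_one, ← e, mul_neg, ← mul_assoc, ← semiconj_aeval (h.phi_mul_X hk), ih, mul_zero,
        zero_mul, neg_zero]

/-! ### Weight idempotents -/

section Words

variable {ι : Type} [DecidableEq ι]

/-- The number of occurrences of the letter `α` among the first `k` letters of the word `c`. -/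
def cnt (c : ℕ → ι) (α : ι) (k : ℕ) : ℕ := Nat.count (fun j => c j = α) k

theorem cnt_zero (c : ℕ → ι) (α : ι) : cnt c α 0 = 0 := Nat.count_zero _

theorem cnt_succ (c : ℕ → ι) (α : ι) (k : ℕ) :
    cnt c α (k + 1) = cnt c α k + if c k = α then 1 else 0 := Nat.count_succ _ _

theorem cnt_congr {c d : ℕ → ι} {k : ℕ} (h : ∀ j, j < k → c j = d j) (α : ι) :
    cnt c α k = cnt d α k := by
  induction k with
  | zero => rw [cnt_zero, cnt_zero]
  | succ k ih =>
    rw [cnt_succ, cnt_succ, ih fun j hj => h j (by omega), h k (by omega)]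

theorem cnt_add_cnt (c : ℕ → ι) {α β : ι} (h : α ≠ β) (k : ℕ) : cnt c α k + cnt c β k ≤ k := by
  induction k with
  | zero => simp [cnt_zero]
  | succ k ih =>
    rw [cnt_succ, cnt_succ]
    by_cases h1 : c k = α
    · have : ¬ c k = β := fun h2 => h (h1.symm.trans h2)
      simp only [h1, h, if_true, if_false]; omega
    · by_cases h2 : c k = β <;> simp only [h1, h2, h.symm, if_true, if_false] <;> omega

/-- The word obtained by exchanging the letters in positions `i` and `i + 1`. -/
def sw (i : ℕ) (c : ℕ → ι) : ℕ → ι := fun j => c (Equiv.swap i (i + 1) j)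

@[simp] theorem sw_left (i : ℕ) (c : ℕ → ι) : sw i c i = c (i + 1) := by simp [sw]

@[simp] theorem sw_right (i : ℕ) (c : ℕ → ι) : sw i c (i + 1) = c i := by simp [sw]

theorem sw_ne {i j : ℕ} (c : ℕ → ι) (h1 : j ≠ i) (h2 : j ≠ i + 1) : sw i c j = c j := by
  simp [sw, Equiv.swap_apply_of_ne_of_ne h1 h2]

@[simp] theorem sw_sw (i : ℕ) (c : ℕ → ι) : sw i (sw i c) = c := by
  funext j; simp [sw]

theorem sw_comm {i j : ℕ} (h : i + 2 ≤ j) (c : ℕ → ι) : sw i (sw j c) = sw j (sw i c) := by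
  funext k
  by_cases h1 : k = i
  · subst h1; rw [sw_left, sw_ne _ (by omega) (by omega), sw_ne _ (by omega) (by omega), sw_left]
  by_cases h2 : k = i + 1
  · subst h2; rw [sw_right, sw_ne _ (by omega) (by omega), sw_ne _ (by omega) (by omega), sw_right]
  rw [sw_ne _ h1 h2]
  by_cases h3 : k = j
  · subst h3; rw [sw_left, sw_left, sw_ne _ (by omega) (by omega)]
  by_cases h4 : k = j + 1
  · subst h4; rw [sw_right, sw_right, sw_ne _ (by omega) (by omega)]
  rw [sw_ne _ h3 h4, sw_ne _ h3 h4, sw_ne _ h1 h2]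

theorem sw_braid (i : ℕ) (c : ℕ → ι) :
    sw i (sw (i + 1) (sw i c)) = sw (i + 1) (sw i (sw (i + 1) c)) := by
  funext k
  by_cases h1 : k = i
  · subst h1
    rw [sw_left, sw_left, sw_ne _ (by omega) (by omega), sw_ne _ (by omega) (by omega), sw_left,
      sw_left]
  by_cases h2 : k = i + 1
  · subst h2
    rw [sw_right, sw_ne _ (by omega) (by omega), sw_left, sw_left,
      sw_ne _ (by omega) (by omega), sw_right]
  by_cases h3 : k = i + 1 + 1
  · subst h3
    rw [sw_right, sw_right, sw_ne _ (by omega) (by omega), sw_right, sw_right,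
      sw_ne _ (by omega) (by omega)]
  rw [sw_ne _ h1 h2, sw_ne _ h2 h3, sw_ne _ h1 h2, sw_ne _ h2 h3, sw_ne _ h1 h2, sw_ne _ h2 h3]

theorem cnt_sw_of_le {i k : ℕ} (c : ℕ → ι) (α : ι) (h : k ≤ i) : cnt (sw i c) α k = cnt c α k :=
  cnt_congr (fun j hj => sw_ne c (by omega) (by omega)) α

theorem cnt_sw_add_two (i : ℕ) (c : ℕ → ι) (α : ι) :
    cnt (sw i c) α (i + 2) = cnt c α (i + 2) := by
  rw [cnt_succ, cnt_succ, cnt_succ, cnt_succ, cnt_sw_of_le c α le_rfl, sw_left, sw_right]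
  omega

theorem cnt_sw_of_ge {i k : ℕ} (c : ℕ → ι) (α : ι) (h : i + 2 ≤ k) :
    cnt (sw i c) α k = cnt c α k := by
  induction k, h using Nat.le_induction with
  | base => exact cnt_sw_add_two i c α
  | succ k hk ih => rw [cnt_succ, cnt_succ, ih, sw_ne c (by omega) (by omega)]

end Words

section Weights

variable {F A : Type} [Field F] [Ring A] [Algebra F A] {n : ℕ} {q : F} {T X : ℕ → A}
variable {ι : Type} [Fintype ι] [DecidableEq ι] {p : ι → F[X]}

open Classical in
/-- A polynomial congruent to `1` modulo `f α` and to `0` modulo `f β` for `β ≠ α`, for a pairwise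
coprime family `f`. -/
noncomputable def crt (f : ι → F[X]) (α : ι) : F[X] :=
  if h : IsCoprime (f α) (∏ β ∈ Finset.univ.erase α, f β) then
    h.choose_spec.choose * ∏ β ∈ Finset.univ.erase α, f β else 0

theorem prod_erase_dvd_crt (f : ι → F[X]) (α : ι) :
    (∏ β ∈ Finset.univ.erase α, f β) ∣ crt f α := by
  unfold crt
  split_ifs
  · exact dvd_mul_left _ _
  · exact dvd_zero _

theorem dvd_crt_sub_one {f : ι → F[X]} {α : ι} (h : ∀ β, β ≠ α → IsCoprime (f α) (f β)) :
    f α ∣ crt f α - 1 := by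
  have h' : IsCoprime (f α) (∏ β ∈ Finset.univ.erase α, f β) :=
    IsCoprime.prod_right fun β hβ => h β (Finset.ne_of_mem_erase hβ)
  have := h'.choose_spec.choose_spec
  rw [crt, dif_pos h']
  exact ⟨- h'.choose, by linear_combination this⟩

theorem prod_dvd_sum_crt {f : ι → F[X]} (h : ∀ α β, α ≠ β → IsCoprime (f α) (f β)) :
    (∏ α, f α) ∣ ∑ α, crt f α - 1 := by
  refine Finset.prod_dvd_of_coprime (fun α _ β _ hab => h α β hab) fun α _ => ?_
  rw [← Finset.add_sum_erase _ _ (Finset.mem_univ α), add_sub_right_comm]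
  refine dvd_add (dvd_crt_sub_one fun β hβ => h α β hβ.symm) (Finset.dvd_sum fun β hβ => ?_)
  refine (Finset.dvd_prod_of_mem f ?_).trans (prod_erase_dvd_crt f β)
  exact Finset.mem_erase.2 ⟨(Finset.ne_of_mem_erase hβ).symm, Finset.mem_univ _⟩

/-- The affine Hecke relations, together with the vanishing at `X 0` of the product of a family of
polynomials whose spectra stay disjoint up to multiplication by `q ^ a` with `|a| < n`. -/
structure CycAff (n : ℕ) (q : F) (T X : ℕ → A) (p : ι → F[X]) : Prop
    extends AffHecke n q T X where
  pos : 0 < n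
  sep : ∀ α β, α ≠ β → ∀ m m', m + m' < n → IsCoprime (pw q (p α) m) (pw q (p β) m')
  cyc : aeval (X 0) (∏ α, p α) = 0

/-- The polynomial bounding the eigenvalues of colour `α` of `X k` on the weight space of `c`. -/
noncomputable def fam (q : F) (p : ι → F[X]) (c : ℕ → ι) (k : ℕ) (α : ι) : F[X] :=
  pw q (p α) (cnt c α k)

/-- The idempotent attached to the first `k` letters of the word `c`: it projects onto the common
generalized eigenspace on which the eigenvalues of `X j` have colour `c j` for `j < k`. -/
noncomputable def wt (q : F) (p : ι → F[X]) (X : ℕ → A) (c : ℕ → ι) : ℕ → A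
  | 0 => 1
  | k + 1 => aeval (X k) (crt (fam q p c k) (c k)) * wt q p X c k

theorem fam_congr {c d : ℕ → ι} {k : ℕ} (h : ∀ j, j < k → c j = d j) :
    fam q p c k = fam q p d k := by
  funext α; rw [fam, fam, cnt_congr h]

theorem wt_congr {c d : ℕ → ι} {k : ℕ} (h : ∀ j, j < k → c j = d j) :
    wt q p X c k = wt q p X d k := by
  induction k with
  | zero => rfl
  | succ k ih =>
    rw [wt, wt, ih fun j hj => h j (by omega), h k (by omega),
      fam_congr fun j hj => h j (by omega)]

theorem commute_wt {w : A} (c : ℕ → ι) {k : ℕ} (h : ∀ j, j < k → Commute w (X j)) :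
    Commute w (wt q p X c k) := by
  induction k with
  | zero => exact Commute.one_right w
  | succ k ih =>
    exact (commute_aeval (h k (by omega)) _).mul_right (ih fun j hj => h j (by omega))

namespace CycAff

theorem fam_coprime (h : CycAff n q T X p) (c : ℕ → ι) {k : ℕ} (hk : k < n) {α β : ι}
    (hab : α ≠ β) : IsCoprime (fam q p c k α) (fam q p c k β) :=
  h.sep α β hab _ _ ((cnt_add_cnt c hab k).trans_lt hk)

theorem commute_X_wt (h : CycAff n q T X p) (c : ℕ → ι) {j k : ℕ} (hj : j < n) (hk : k ≤ n) :
    Commute (X j) (wt q p X c k) := commute_wt c fun i hi => h.commX j i hj (by omega)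

theorem fam_mul_wt_succ (h : CycAff n q T X p) (c : ℕ → ι) {k : ℕ} (hk : k < n)
    (hR : aeval (X k) (∏ α, fam q p c k α) * wt q p X c k = 0) :
    aeval (X k) (fam q p c k (c k)) * wt q p X c (k + 1) = 0 := by
  obtain ⟨g, hg⟩ := prod_erase_dvd_crt (fam q p c k) (c k)
  rw [wt, ← mul_assoc, ← map_mul, hg, ← mul_assoc, Finset.mul_prod_erase _ _ (Finset.mem_univ _),
    mul_comm, map_mul, mul_assoc, hR, mul_zero]

/-- On the weight space of the first `k` letters, `X k` has its eigenvalues among the roots of the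
polynomials `fam q p c k α`. -/
theorem prod_fam_mul_wt (h : CycAff n q T X p) (c : ℕ → ι) : ∀ k, k < n →
    aeval (X k) (∏ α, fam q p c k α) * wt q p X c k = 0 := by
  intro k
  induction k with
  | zero =>
    intro _
    have : ∀ α, fam q p c 0 α = p α := fun α => by rw [fam, cnt_zero, pw]
    simp only [this, h.cyc, zero_mul]
  | succ k ih =>
    intro hk
    have ih := ih (by omega)
    have hz := h.fam_mul_wt_succ c (by omega) ih
    have hR : aeval (X (k + 1)) (∏ α, fam q p c k α) *
        ((q • X k - X (k + 1)) * (X k - q • X (k + 1)) * wt q p X c (k + 1)) = 0 := by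
      have e := congrArg Neg.neg (h.phi_mul_phi hk)
      rw [neg_neg] at e
      have cphi : Commute (phi T X k) (wt q p X c k) :=
        commute_wt c fun j hj => h.phi_comm_X hk (by omega) (by omega) (by omega)
      rw [← e, wt]
      set a := aeval (X (k + 1)) (∏ α, fam q p c k α)
      have ca : Commute (X (k + 1)) (aeval (X k) (crt (fam q p c k) (c k))) :=
        commute_aeval (h.commX _ _ hk (by omega)) _
      have ca' : Commute (X k) (aeval (X k) (crt (fam q p c k) (c k))) :=
        commute_aeval (Commute.refl _) _
      have c1 : Commute (phi T X k * phi T X k) (aeval (X k) (crt (fam q p c k) (c k))) := by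
        rw [h.phi_mul_phi hk]
        exact (((ca'.smul_left _).sub_left ca).mul_left (ca'.sub_left (ca.smul_left _))).neg_left
      have c2 : Commute a (aeval (X k) (crt (fam q p c k) (c k))) := (commute_aeval ca.symm _).symm
      have e1 : a * (phi T X k * phi T X k) * wt q p X c k = 0 := by
        rw [← mul_assoc, ← semiconj_aeval (h.phi_mul_X hk), mul_assoc, mul_assoc, cphi.eq,
          ← mul_assoc (aeval (X k) _), ih, zero_mul, mul_zero]
      rw [neg_mul, mul_neg, ← mul_assoc (phi T X k * phi T X k), c1.eq, mul_assoc, ← mul_assoc a,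
        c2.eq, mul_assoc, ← mul_assoc a, e1, mul_zero, neg_zero]
    have key := spec_step h.q_ne (h.commX k (k + 1) (by omega) hk) hR hz
    have hprod : (∏ α, fam q p c (k + 1) α) = (∏ α, fam q p c k α) *
        ((fam q p c k (c k)).comp (C q * Polynomial.X) * (fam q p c k (c k)).comp (C q⁻¹ * Polynomial.X)) := by
      rw [← Finset.mul_prod_erase _ _ (Finset.mem_univ (c k)),
        ← Finset.mul_prod_erase _ (fam q p c k) (Finset.mem_univ (c k))]
      have e1 : fam q p c (k + 1) (c k) = fam q p c k (c k) *
          ((fam q p c k (c k)).comp (C q * Polynomial.X) * (fam q p c k (c k)).comp (C q⁻¹ * Polynomial.X)) := by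
        rw [fam, cnt_succ, if_pos rfl, pw, fam]
      have e2 : ∏ β ∈ Finset.univ.erase (c k), fam q p c (k + 1) β =
          ∏ β ∈ Finset.univ.erase (c k), fam q p c k β := by
        refine Finset.prod_congr rfl fun β hβ => ?_
        rw [fam, cnt_succ, if_neg (Finset.ne_of_mem_erase hβ).symm, add_zero, fam]
      rw [e1, e2]
      ring
    rw [hprod]
    exact key

theorem fam_mul_wt (h : CycAff n q T X p) (c : ℕ → ι) {k : ℕ} (hk : k < n) :
    aeval (X k) (fam q p c k (c k)) * wt q p X c n = 0 := by
  have : ∀ j, k + 1 ≤ j → j ≤ n → aeval (X k) (fam q p c k (c k)) * wt q p X c j = 0 := by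
    intro j hj
    induction j, hj using Nat.le_induction with
    | base => intro _; exact h.fam_mul_wt_succ c hk (h.prod_fam_mul_wt c k hk)
    | succ j hj ih =>
      intro hjn
      have cm : Commute (aeval (X k) (fam q p c k (c k)))
          (aeval (X j) (crt (fam q p c j) (c j))) :=
        commute_aeval (commute_aeval (h.commX j k (by omega) hk) _).symm _
      rw [wt, ← mul_assoc, cm.eq, mul_assoc, ih (by omega), mul_zero]
  exact this n hk le_rfl

/-- The weight space of a word is characterized by the spectra of the Jucys–Murphy elements. -/
theorem wt_mul_of (h : CycAff n q T X p) (c : ℕ → ι) {z : A}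
    (hz : ∀ k, k < n → ∃ R : F[X], aeval (X k) R * z = 0 ∧
      ∀ β, β ≠ c k → IsCoprime R (fam q p c k β)) : wt q p X c n * z = z := by
  have : ∀ k, k ≤ n → wt q p X c k * z = z := by
    intro k
    induction k with
    | zero => intro _; rw [wt, one_mul]
    | succ k ih =>
      intro hk
      have ih := ih (by omega)
      obtain ⟨R, hR, hcop⟩ := hz k hk
      have hG : IsCoprime R (∏ β ∈ Finset.univ.erase (c k), fam q p c k β) :=
        IsCoprime.prod_right fun β hβ => hcop β (Finset.ne_of_mem_erase hβ)
      obtain ⟨a, b, hab⟩ := hG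
      have hP : aeval (X k) (∏ α, fam q p c k α) * z = 0 := by
        rw [← ih, ← mul_assoc, h.prod_fam_mul_wt c k hk, zero_mul]
      have h1 : fam q p c k (c k) = (fam q p c k (c k) * a) * R + b * ∏ α, fam q p c k α := by
        rw [← Finset.mul_prod_erase _ _ (Finset.mem_univ (c k))]
        linear_combination - fam q p c k (c k) * hab
      have h2 : aeval (X k) (fam q p c k (c k)) * z = 0 := by
        rw [h1, map_add, map_mul, map_mul (aeval (X k)) b, add_mul, mul_assoc, hR, mul_assoc, hP,
          mul_zero, mul_zero, add_zero]
      obtain ⟨g, hg⟩ := dvd_crt_sub_one (f := fam q p c k) (α := c k)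
        fun β hβ => h.fam_coprime c hk hβ.symm
      rw [wt, mul_assoc, ih, sub_eq_iff_eq_add.1 hg, mul_comm, map_add, map_mul, map_one, add_mul,
        mul_assoc, h2, mul_zero, zero_add, one_mul]
  exact this n le_rfl

theorem wt_mul_of' (h : CycAff n q T X p) (c : ℕ → ι) {z : A}
    (hz : ∀ k, k < n → aeval (X k) (fam q p c k (c k)) * z = 0) : wt q p X c n * z = z :=
  h.wt_mul_of c fun k hk => ⟨_, hz k hk, fun β hβ => h.fam_coprime c hk hβ.symm⟩

theorem fam_mul (h : CycAff n q T X p) {c : ℕ → ι} {z : A} (hz : wt q p X c n * z = z) {k : ℕ}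
    (hk : k < n) : aeval (X k) (fam q p c k (c k)) * z = 0 := by
  rw [← hz, ← mul_assoc, h.fam_mul_wt c hk, zero_mul]

theorem wt_idem (h : CycAff n q T X p) (c : ℕ → ι) :
    wt q p X c n * wt q p X c n = wt q p X c n :=
  h.wt_mul_of' c fun k hk => h.fam_mul_wt c hk

theorem commute_wt_wt (h : CycAff n q T X p) (c d : ℕ → ι) :
    Commute (wt q p X c n) (wt q p X d n) :=
  commute_wt d fun j hj => (h.commute_X_wt c hj le_rfl).symm

/-- Weight spaces of different words intersect trivially. -/
theorem eq_zero_of_wt (h : CycAff n q T X p) {c d : ℕ → ι} (hcd : ∃ k, k < n ∧ c k ≠ d k) {z : A}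
    (hc : wt q p X c n * z = z) (hd : wt q p X d n * z = z) : z = 0 := by
  classical
  have hk := Nat.find_spec hcd
  have hlt : ∀ j, j < Nat.find hcd → c j = d j := fun j hj => by
    have := Nat.find_min hcd hj
    push Not at this
    exact this (by omega)
  obtain ⟨a, b, hab⟩ := h.fam_coprime c hk.1 hk.2
  have h1 := h.fam_mul hc hk.1
  have h2 := h.fam_mul hd hk.1
  rw [← fam_congr hlt] at h2
  have := congrArg (fun w => aeval (X (Nat.find hcd)) w * z) hab
  simp only [map_add, map_mul, map_one, add_mul, one_mul, mul_assoc, h1, h2, mul_zero,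
    add_zero] at this
  exact this.symm

theorem wt_mul_eq_zero (h : CycAff n q T X p) {c d : ℕ → ι} (hcd : ∃ k, k < n ∧ c k ≠ d k) {z : A}
    (hc : wt q p X c n * z = z) : wt q p X d n * z = 0 := by
  refine h.eq_zero_of_wt hcd ?_ ?_
  · rw [← mul_assoc, (h.commute_wt_wt c d).eq, mul_assoc, hc]
  · rw [← mul_assoc, h.wt_idem]

theorem wt_X_mul (h : CycAff n q T X p) {c : ℕ → ι} {z : A} (hz : wt q p X c n * z = z) {k : ℕ}
    (hk : k < n) : wt q p X c n * (X k * z) = X k * z := by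
  rw [← mul_assoc, ← (h.commute_X_wt c hk le_rfl).eq, mul_assoc, hz]

/-- `phi i` exchanges the weight spaces of `c` and of `sw i c` if `c i ≠ c (i + 1)`. -/
theorem wt_phi_mul (h : CycAff n q T X p) {c : ℕ → ι} {z : A} (hz : wt q p X c n * z = z) {i : ℕ}
    (hi : i + 1 < n) (hc : c i ≠ c (i + 1)) :
    wt q p X (sw i c) n * (phi T X i * z) = phi T X i * z := by
  refine h.wt_mul_of' _ fun k hk => ?_
  by_cases h1 : k = i
  · subst h1
    have e : fam q p (sw k c) k (sw k c k) = fam q p c (k + 1) (c (k + 1)) := by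
      rw [sw_left, fam, fam, cnt_sw_of_le c _ le_rfl, cnt_succ, if_neg hc, add_zero]
    rw [e, ← mul_assoc, ← semiconj_aeval (h.phi_mul_X' hi), mul_assoc, h.fam_mul hz hi, mul_zero]
  by_cases h2 : k = i + 1
  · subst h2
    have e : fam q p (sw i c) (i + 1) (sw i c (i + 1)) = fam q p c i (c i) := by
      rw [sw_right, fam, fam, cnt_succ, cnt_sw_of_le c _ le_rfl, sw_left, if_neg hc.symm, add_zero]
    rw [e, ← mul_assoc, ← semiconj_aeval (h.phi_mul_X hi), mul_assoc, h.fam_mul hz (by omega),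
      mul_zero]
  · have e : fam q p (sw i c) k (sw i c k) = fam q p c k (c k) := by
      rw [sw_ne c h1 h2, fam, fam]
      rcases Nat.lt_or_ge k i with h3 | h3
      · rw [cnt_sw_of_le c _ h3.le]
      · rw [cnt_sw_of_ge c _ (by omega)]
    rw [e, ← mul_assoc, ← (commute_aeval (h.phi_comm_X hi hk h1 h2) _).eq, mul_assoc,
      h.fam_mul hz hk, mul_zero]

/-- `T i` preserves the weight space of `c` if `c i = c (i + 1)`. -/
theorem wt_T_mul (h : CycAff n q T X p) {c : ℕ → ι} {z : A} (hz : wt q p X c n * z = z) {i : ℕ}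
    (hi : i + 1 < n) (hc : c i = c (i + 1)) :
    wt q p X c n * (T i * z) = T i * z := by
  set P := fam q p c (i + 1) (c (i + 1)) with hPdef
  have hP : P = fam q p c i (c i) *
      ((fam q p c i (c i)).comp (C q * Polynomial.X) * (fam q p c i (c i)).comp (C q⁻¹ * Polynomial.X)) := by
    rw [hPdef, ← hc, fam, cnt_succ, if_pos rfl, pw, fam]
  have hy : aeval (X (i + 1)) P * z = 0 := h.fam_mul hz hi
  have hx : aeval (X i) P * z = 0 := by
    rw [hP, mul_comm, map_mul, mul_assoc, h.fam_mul hz (by omega), mul_zero]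
  have hcomm := h.commX i (i + 1) (by omega) hi
  have hcopP : ∀ k, (k = i ∨ k = i + 1) → ∀ β, β ≠ c k → IsCoprime (P * P) (fam q p c k β) := by
    intro k hk β hβ
    have h1 : c k = c (i + 1) := by rcases hk with rfl | rfl <;> simp [hc]
    have : IsCoprime P (fam q p c k β) := by
      refine h.sep _ _ (h1 ▸ hβ.symm) _ _ ?_
      have h2 := cnt_add_cnt c (h1 ▸ hβ.symm : c (i + 1) ≠ β) (i + 1)
      have h3 : cnt c β k ≤ cnt c β (i + 1) := Nat.count_monotone _ (by omega)
      omega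
    exact this.mul_left this
  refine h.wt_mul_of c fun k hk => ?_
  by_cases h1 : k = i
  · subst h1
    obtain ⟨d, hd, e⟩ := t_aeval_y (h.hy hi) P
    refine ⟨P * P, ?_, hcopP k (Or.inl rfl)⟩
    have e1 : aeval (X k) P * (T k * z) = - (d * z) := by
      have := congrArg (· * z) e
      simp only [add_mul, mul_assoc, hy, mul_zero] at this
      exact eq_neg_of_add_eq_zero_left this.symm
    rw [map_mul, mul_assoc, e1, mul_neg, ← mul_assoc, (hd _ (commute_aeval (Commute.refl _) _).symm
      (commute_aeval hcomm.symm _).symm).eq, mul_assoc, hx, mul_zero, neg_zero]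
  by_cases h2 : k = i + 1
  · subst h2
    obtain ⟨d, hd, e⟩ := t_aeval_x (h.hx hi) P
    refine ⟨P * P, ?_, hcopP (i + 1) (Or.inr rfl)⟩
    have e1 : aeval (X (i + 1)) P * (T i * z) = d * z := by
      have := congrArg (· * z) e
      simp only [sub_mul, mul_assoc, hx, mul_zero] at this
      exact (sub_eq_zero.1 this.symm)
    rw [map_mul, mul_assoc, e1, ← mul_assoc, (hd _ (commute_aeval hcomm _).symm
      (commute_aeval (Commute.refl _) _).symm).eq, mul_assoc, hy, mul_zero]
  · refine ⟨_, ?_, fun β hβ => h.fam_coprime c hk hβ.symm⟩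
    rw [← mul_assoc, ← (commute_aeval (h.commTX i k hi hk h1 h2) _).eq, mul_assoc,
      h.fam_mul hz hk, mul_zero]

/-- On a weight space with `c i ≠ c (i + 1)`, the elements `X i - s • X (i + 1)` are invertible
for `s = q ^ a` with `|a| ≤ 1`. -/
theorem inv_on_wt (h : CycAff n q T X p) {c : ℕ → ι} {i : ℕ}
    (hi : i + 1 < n) (hc : c i ≠ c (i + 1)) {s : F} (hs : s = 1 ∨ s = q ∨ s = q⁻¹) :
    ∃ u ∈ Algebra.adjoin F {X i, X (i + 1)}, ∀ z, wt q p X c n * z = z →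
      u * ((X i - s • X (i + 1)) * z) = z := by
  have hcnt : cnt c (c i) i + cnt c (c (i + 1)) i ≤ i := cnt_add_cnt c hc i
  have hcnt' : cnt c (c (i + 1)) (i + 1) = cnt c (c (i + 1)) i := by
    rw [cnt_succ, if_neg hc, add_zero]
  have hcop := h.sep _ _ hc (cnt c (c i) i + 1) (cnt c (c (i + 1)) (i + 1)) (by omega)
  have hcop' : IsCoprime ((fam q p c i (c i)).comp (C s * Polynomial.X))
      (fam q p c (i + 1) (c (i + 1))) := by
    rw [pw] at hcop
    have h1 := hcop.of_mul_left_left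
    have h2 := hcop.of_mul_left_right.of_mul_left_left
    have h3 := hcop.of_mul_left_right.of_mul_left_right
    rcases hs with rfl | rfl | rfl
    · simpa [fam] using h1
    · exact h2
    · exact h3
  obtain ⟨u, hu, h1⟩ := inv_on (h.commX i (i + 1) (by omega) hi) s hcop'
  exact ⟨u, hu, fun z hz => h1 z (h.fam_mul hz (by omega)) (h.fam_mul hz hi)⟩

end CycAff

end Weights

/-! ### The idempotents of nondecreasing words generate the unit ideal -/

section Full

variable {F A : Type} [Field F] [Ring A] [Algebra F A] {n : ℕ} {q : F} {T X : ℕ → A}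
variable {κ : ℕ} {p : Fin κ → F[X]}

/-- A word is sorted if its first `n` letters are nondecreasing. -/
def Sorted (n : ℕ) (c : ℕ → Fin κ) : Prop := ∀ i, i + 1 < n → c i ≤ c (i + 1)

theorem sw_two {ι : Type} [DecidableEq ι] (i : ℕ) (c : ℕ → ι) : sw i c (i + 1 + 1) = c (i + 1 + 1) :=
  sw_ne c (by omega) (by omega)

theorem sw_pred {ι : Type} [DecidableEq ι] (i : ℕ) (c : ℕ → ι) : sw (i + 1) c i = c i :=
  sw_ne c (by omega) (by omega)

/-- Sorting a descent decreases this weighted sum of the letters. -/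
theorem disorder_sw (n : ℕ) (c : ℕ → Fin κ) {i : ℕ} (hi : i + 1 < n) (hc : c (i + 1) < c i) :
    ∑ k ∈ Finset.range n, (n - k) * ((sw i c k : Fin κ) : ℕ) < ∑ k ∈ Finset.range n, (n - k) * ((c k : Fin κ) : ℕ) := by
  have key : ∀ m, i + 2 ≤ m → ∑ k ∈ Finset.range m, (n - k) * ((sw i c k : Fin κ) : ℕ) <
      ∑ k ∈ Finset.range m, (n - k) * ((c k : Fin κ) : ℕ) := by
    intro m hm
    induction m, hm using Nat.le_induction with
    | base =>
      rw [Finset.sum_range_succ, Finset.sum_range_succ, Finset.sum_range_succ,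
        Finset.sum_range_succ, sw_left, sw_right]
      have e : ∑ k ∈ Finset.range i, (n - k) * ((sw i c k : Fin κ) : ℕ) =
          ∑ k ∈ Finset.range i, (n - k) * ((c k : Fin κ) : ℕ) := by
        refine Finset.sum_congr rfl fun k hk => ?_
        rw [sw_ne c (by have := Finset.mem_range.1 hk; omega)
          (by have := Finset.mem_range.1 hk; omega)]
      rw [e]
      obtain ⟨d, hd⟩ : ∃ d, n - i = d + 1 := ⟨n - i - 1, by omega⟩
      have hd' : n - (i + 1) = d := by omega
      rw [hd, hd']
      have : (c (i + 1) : ℕ) < c i := hc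
      nlinarith
    | succ m hm ih =>
      rw [Finset.sum_range_succ, Finset.sum_range_succ, sw_ne c (by omega) (by omega)]
      omega
  exact key n hi

namespace CycAff

/-- The two-sided ideal generated by `wt (sw i c)` contains `wt c`: the square of the intertwiner
is invertible on the weight space of `c`. -/
theorem wt_mem_of_sw (h : CycAff n q T X p) (J : AddSubgroup A) (hl : ∀ a, ∀ z ∈ J, a * z ∈ J)
    (hr : ∀ a, ∀ z ∈ J, z * a ∈ J) {c : ℕ → Fin κ} {i : ℕ} (hi : i + 1 < n)
    (hc : c i ≠ c (i + 1)) (hJ : wt q p X (sw i c) n ∈ J) : wt q p X c n ∈ J := by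
  set e := wt q p X c n with he
  have hw : e * e = e := h.wt_idem c
  have h1 : phi T X i * e ∈ J := by
    rw [← h.wt_phi_mul hw hi hc]; exact hr _ _ hJ
  have h2 := hl (phi T X i) _ h1
  rw [← mul_assoc, h.phi_mul_phi hi] at h2
  obtain ⟨u, hu, hu'⟩ := h.inv_on_wt hi hc (s := q) (by simp)
  obtain ⟨w, _, hw'⟩ := h.inv_on_wt hi hc (s := q⁻¹) (by simp)
  have hz : e * ((X i - q • X (i + 1)) * e) = (X i - q • X (i + 1)) * e := by
    have c1 := h.commute_X_wt c (j := i) (k := n) (by omega) le_rfl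
    have c2 := h.commute_X_wt c (j := i + 1) (k := n) hi le_rfl
    have c3 : Commute (X i - q • X (i + 1)) e := c1.sub_left (c2.smul_left _)
    rw [← mul_assoc, ← c3.eq, mul_assoc, hw]
  have e1 := hw' _ hz
  have e2 := hu' _ hw
  have e3 : q • X i - X (i + 1) = q • (X i - q⁻¹ • X (i + 1)) := by
    rw [smul_sub, smul_smul, mul_inv_cancel₀ h.q_ne, one_smul]
  have e4 : (- (q⁻¹ • (u * w))) * (-((q • X i - X (i + 1)) * (X i - q • X (i + 1))) * e) = e := by
    rw [e3]
    simp only [neg_mul, mul_neg, neg_neg, smul_mul_assoc, mul_smul_comm, smul_smul,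
      inv_mul_cancel₀ h.q_ne, one_smul, mul_assoc]
    rw [e1, e2, smul_neg, neg_neg, smul_smul, mul_inv_cancel₀ h.q_ne, one_smul]
  rw [← e4]
  exact hl _ _ h2

/-- A two-sided ideal containing the idempotents of all sorted words contains those of all words,
by induction on the disorder of the word. -/
theorem wt_mem (h : CycAff n q T X p) (J : AddSubgroup A) (hl : ∀ a, ∀ z ∈ J, a * z ∈ J)
    (hr : ∀ a, ∀ z ∈ J, z * a ∈ J) (hJ : ∀ c : ℕ → Fin κ, Sorted n c → wt q p X c n ∈ J) :
    ∀ (m : ℕ) (c : ℕ → Fin κ), ∑ k ∈ Finset.range n, (n - k) * ((c k : Fin κ) : ℕ) ≤ m →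
      wt q p X c n ∈ J := by
  intro m
  induction m with
  | zero =>
    intro c hm
    refine hJ c fun i hi => ?_
    by_contra hlt
    have := disorder_sw n c hi (not_le.1 hlt)
    omega
  | succ m ih =>
    intro c hm
    by_cases hc : Sorted n c
    · exact hJ c hc
    · unfold Sorted at hc
      push Not at hc
      obtain ⟨i, hi, hlt⟩ := hc
      refine h.wt_mem_of_sw J hl hr hi hlt.ne' (ih _ ?_)
      have := disorder_sw n c hi hlt
      omega

/-- The idempotents of the sorted words generate the unit ideal, because `1` is the sum of the
idempotents of all words. -/
theorem one_mem (h : CycAff n q T X p) (J : AddSubgroup A) (hl : ∀ a, ∀ z ∈ J, a * z ∈ J)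
    (hr : ∀ a, ∀ z ∈ J, z * a ∈ J) (hJ : ∀ c : ℕ → Fin κ, Sorted n c → wt q p X c n ∈ J)
    (c₀ : ℕ → Fin κ) : 1 ∈ J := by
  have key : ∀ d, ∀ k, k + d = n → ∀ c : ℕ → Fin κ, wt q p X c k ∈ J := by
    intro d
    induction d with
    | zero => rintro k rfl c; exact h.wt_mem J hl hr hJ _ c le_rfl
    | succ d ih =>
      intro k hk c
      obtain ⟨g, hg⟩ := prod_dvd_sum_crt (f := fam q p c k)
        fun α β hab => h.fam_coprime c (by omega) hab
      have e : wt q p X c k = ∑ α, wt q p X (Function.update c k α) (k + 1) := by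
        have e1 : ∀ α, wt q p X (Function.update c k α) (k + 1) =
            aeval (X k) (crt (fam q p c k) α) * wt q p X c k := by
          intro α
          have hne : ∀ j, j < k → Function.update c k α j = c j := fun j hj =>
            Function.update_of_ne (by omega) _ _
          rw [wt, wt_congr hne, fam_congr hne, Function.update_self]
        simp only [e1]
        rw [← Finset.sum_mul, ← map_sum, sub_eq_iff_eq_add.1 hg, mul_comm, map_add, map_mul,
          map_one, add_mul, mul_assoc, h.prod_fam_mul_wt c k (by omega), mul_zero, zero_add,
          one_mul]
      rw [e]
      exact sum_mem fun α _ => ih (k + 1) (by omega) _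
  exact key n 0 (by omega) c₀

end CycAff

end Full

/-! ### Generating the left ideals of the sorted idempotents -/

section LeftIdeal

variable {F A : Type} [Field F] [Ring A] [Algebra F A] {n : ℕ} {q : F} {T X : ℕ → A}
variable {κ : ℕ} {p : Fin κ → F[X]} {c₀ : ℕ → Fin κ} {N : Submodule F A}

/-- The elements obtained from `N`, placed in weight `c₀`, by applying `k` intertwiners, each of
which turns an ascent of the current word into a descent. The indices are the number of
intertwiners and the weight reached. -/
inductive Lv (n : ℕ) (T X : ℕ → A) (N : Submodule F A) (c₀ : ℕ → Fin κ) :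
    ℕ → (ℕ → Fin κ) → A → Prop
  | base (z : A) (hz : z ∈ N) : Lv n T X N c₀ 0 c₀ z
  | step (k : ℕ) (c : ℕ → Fin κ) (z : A) (i : ℕ) (hi : i + 1 < n) (hc : c i < c (i + 1))
      (hz : Lv n T X N c₀ k c z) : Lv n T X N c₀ (k + 1) (sw i c) (phi T X i * z)

theorem Lv.pos_of_descent (h0 : Sorted n c₀) {k : ℕ} {c : ℕ → Fin κ} {z : A}
    (hz : Lv n T X N c₀ k c z) {j : ℕ} (hj : j + 1 < n) (hc : c (j + 1) < c j) :
    ∃ m, k = m + 1 := by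
  cases hz with
  | base _ _ => exact absurd (h0 j hj) (not_le.2 hc)
  | step k _ _ _ _ _ _ => exact ⟨k, rfl⟩

/-- The last intertwiner applied may be chosen to be at any prescribed descent. -/
theorem Lv.descent (h : AffHecke n q T X) (h0 : Sorted n c₀) : ∀ (k : ℕ) {c : ℕ → Fin κ} {z : A},
    Lv n T X N c₀ (k + 1) c z → ∀ {j : ℕ}, j + 1 < n → c (j + 1) < c j →
      ∃ w, z = phi T X j * w ∧ Lv n T X N c₀ k (sw j c) w := by
  intro k
  induction k using Nat.strong_induction_on with
  | _ k ih =>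
  intro c z hz j hj hdes
  cases hz with
  | step _ c₁ z₁ i hi hasc hz₁ =>
    rcases Nat.lt_trichotomy i j with hij | rfl | hij
    · rcases Nat.eq_or_lt_of_le hij with rfl | hij
      · -- Adjacent positions, `j = i + 1`
        have d1 : c₁ (i + 2) < c₁ i := by
          have := hdes
          rwa [sw_right, sw_ne _ (by omega) (by omega)] at this
        obtain ⟨k, rfl⟩ := hz₁.pos_of_descent h0 hj (d1.trans hasc)
        obtain ⟨z₃, rfl, hz₃⟩ := ih k (by omega) hz₁ hj (d1.trans hasc)
        have d2 : sw (i + 1) c₁ (i + 1) < sw (i + 1) c₁ i := by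
          rw [sw_left, sw_ne _ (by omega) (by omega)]; exact d1
        obtain ⟨k, rfl⟩ := hz₃.pos_of_descent h0 hi d2
        obtain ⟨z₄, rfl, hz₄⟩ := ih k (by omega) hz₃ hi d2
        refine ⟨phi T X i * (phi T X (i + 1) * z₄), ?_, ?_⟩
        · simp only [← mul_assoc]
          rw [← h.phi_phi_phi hj]
        · have hs := Lv.step _ _ _ (i + 1) hj ?_ hz₄
          · have hs' := Lv.step _ _ _ i hi ?_ hs
            · rw [← sw_braid, sw_sw] at hs'
              exact hs'
            · simp only [sw_left, sw_right, sw_two, sw_pred]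
              exact d1.trans hasc
          · simp only [sw_left, sw_right, sw_two, sw_pred]
            exact hasc
      · have d1 : c₁ (j + 1) < c₁ j := by
          have := hdes
          rwa [sw_ne _ (by omega) (by omega), sw_ne _ (by omega) (by omega)] at this
        obtain ⟨k, rfl⟩ := hz₁.pos_of_descent h0 hj d1
        obtain ⟨z₃, rfl, hz₃⟩ := ih k (by omega) hz₁ hj d1
        refine ⟨phi T X i * z₃, ?_, ?_⟩
        · rw [← mul_assoc, ← mul_assoc, (h.phi_comm_phi hi hj (Or.inl (by omega))).eq]
        · rw [← sw_comm (by omega)]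
          refine Lv.step _ _ _ i hi ?_ hz₃
          rw [sw_ne _ (by omega) (by omega), sw_ne _ (by omega) (by omega)]
          exact hasc
    · exact ⟨z₁, rfl, by rw [sw_sw]; exact hz₁⟩
    · rcases Nat.eq_or_lt_of_le hij with rfl | hij
      · -- Adjacent positions, `i = j + 1`
        have d1 : c₁ (j + 2) < c₁ j := by
          have := hdes
          rwa [sw_left, sw_ne _ (by omega) (by omega)] at this
        obtain ⟨k, rfl⟩ := hz₁.pos_of_descent h0 hj (hasc.trans d1)
        obtain ⟨z₃, rfl, hz₃⟩ := ih k (by omega) hz₁ hj (hasc.trans d1)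
        have d2 : sw j c₁ (j + 1 + 1) < sw j c₁ (j + 1) := by
          rw [sw_right, sw_ne _ (by omega) (by omega)]; exact d1
        obtain ⟨k, rfl⟩ := hz₃.pos_of_descent h0 hi d2
        obtain ⟨z₄, rfl, hz₄⟩ := ih k (by omega) hz₃ hi d2
        refine ⟨phi T X (j + 1) * (phi T X j * z₄), ?_, ?_⟩
        · simp only [← mul_assoc]
          rw [← h.phi_phi_phi hi]
        · have hs := Lv.step _ _ _ j hj ?_ hz₄
          · have hs' := Lv.step _ _ _ (j + 1) hi ?_ hs
            · rw [sw_braid, sw_sw] at hs'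
              exact hs'
            · simp only [sw_left, sw_right, sw_two, sw_pred]
              exact hasc.trans d1
          · simp only [sw_left, sw_right, sw_two, sw_pred]
            exact hasc
      · have d1 : c₁ (j + 1) < c₁ j := by
          have := hdes
          rwa [sw_ne _ (by omega) (by omega), sw_ne _ (by omega) (by omega)] at this
        obtain ⟨k, rfl⟩ := hz₁.pos_of_descent h0 hj d1
        obtain ⟨z₃, rfl, hz₃⟩ := ih k (by omega) hz₁ hj d1
        refine ⟨phi T X i * z₃, ?_, ?_⟩
        · rw [← mul_assoc, ← mul_assoc, (h.phi_comm_phi hi hj (Or.inr (by omega))).eq]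
        · rw [sw_comm (by omega)]
          refine Lv.step _ _ _ i hi ?_ hz₃
          rw [sw_ne _ (by omega) (by omega), sw_ne _ (by omega) (by omega)]
          exact hasc

theorem Lv.mul_X (h : AffHecke n q T X) (hNX : ∀ k, k < n → ∀ z ∈ N, X k * z ∈ N) {k : ℕ}
    {c : ℕ → Fin κ} {z : A} (hz : Lv n T X N c₀ k c z) :
    ∀ j, j < n → Lv n T X N c₀ k c (X j * z) := by
  induction hz with
  | base z hz => exact fun j hj => .base _ (hNX j hj z hz)
  | step k c z i hi hc hz ih =>
    intro j hj
    by_cases h1 : j = i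
    · subst h1
      rw [← mul_assoc, ← h.phi_mul_X' hi, mul_assoc]
      exact .step _ _ _ _ hi hc (ih _ hi)
    by_cases h2 : j = i + 1
    · subst h2
      rw [← mul_assoc, ← h.phi_mul_X hi, mul_assoc]
      exact .step _ _ _ _ hi hc (ih _ (by omega))
    rw [← mul_assoc, ← (h.phi_comm_X hi hj h1 h2).eq, mul_assoc]
    exact .step _ _ _ _ hi hc (ih _ hj)

theorem Lv.mul_T (h : AffHecke n q T X) (h0 : Sorted n c₀)
    (hNT : ∀ i, i + 1 < n → c₀ i = c₀ (i + 1) → ∀ z ∈ N, T i * z ∈ N) : ∀ (k : ℕ)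
    {c : ℕ → Fin κ} {z : A}, Lv n T X N c₀ k c z → ∀ {i : ℕ}, i + 1 < n → c i = c (i + 1) →
      Lv n T X N c₀ k c (T i * z) := by
  intro k
  induction k using Nat.strong_induction_on with
  | _ k ih =>
  intro c z hz i hi heq
  cases hz with
  | base _ hz => exact .base _ (hNT i hi heq z hz)
  | step k c₁ z₁ j hj hasc hz₁ =>
    rcases Nat.lt_trichotomy i j with hij | rfl | hij
    · rcases Nat.eq_or_lt_of_le hij with rfl | hij
      · have e1 : c₁ i = c₁ (i + 2) := by
          have := heq
          rwa [sw_left, sw_ne _ (by omega) (by omega)] at this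
        have d1 : c₁ (i + 1) < c₁ i := by rw [e1]; exact hasc
        obtain ⟨k, rfl⟩ := hz₁.pos_of_descent h0 hi d1
        obtain ⟨z₃, rfl, hz₃⟩ := Lv.descent h h0 k hz₁ hi d1
        have hT := ih k (by omega) hz₃ hj (by
          rw [sw_right, sw_ne _ (by omega) (by omega)]; exact e1)
        have hs := Lv.step _ _ _ i hi (by rw [sw_left, sw_right]; exact d1) hT
        rw [sw_sw] at hs
        have hs := Lv.step _ _ _ (i + 1) hj hasc hs
        rw [← mul_assoc, ← mul_assoc, ← h.T_phi_phi hj] at hs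
        simpa only [mul_assoc] using hs
      · rw [← mul_assoc, ← (h.phi_comm_T hj hi (Or.inr (by omega))).eq, mul_assoc]
        refine Lv.step _ _ _ j hj hasc (ih k (by omega) hz₁ hi ?_)
        have := heq
        rwa [sw_ne _ (by omega) (by omega), sw_ne _ (by omega) (by omega)] at this
    · rw [sw_left, sw_right] at heq
      exact absurd heq hasc.ne'
    · rcases Nat.eq_or_lt_of_le hij with rfl | hij
      · have e1 : c₁ j = c₁ (j + 2) := by
          have := heq
          rwa [sw_right, sw_ne _ (by omega) (by omega)] at this
        have d1 : c₁ (j + 1 + 1) < c₁ (j + 1) := by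
          rw [show c₁ (j + 1 + 1) = c₁ j from e1.symm]; exact hasc
        obtain ⟨k, rfl⟩ := hz₁.pos_of_descent h0 hi d1
        obtain ⟨z₃, rfl, hz₃⟩ := Lv.descent h h0 k hz₁ hi d1
        have hT := ih k (by omega) hz₃ hj (by
          rw [sw_left, sw_ne _ (by omega) (by omega)]; exact e1)
        have hs := Lv.step _ _ _ (j + 1) hi (by rw [sw_left, sw_right]; exact d1) hT
        rw [sw_sw] at hs
        have hs := Lv.step _ _ _ j hj hasc hs
        rw [← mul_assoc, ← mul_assoc, ← h.T_phi_phi' hi] at hs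
        simpa only [mul_assoc] using hs
      · rw [← mul_assoc, ← (h.phi_comm_T hj hi (Or.inl (by omega))).eq, mul_assoc]
        refine Lv.step _ _ _ j hj hasc (ih k (by omega) hz₁ hi ?_)
        have := heq
        rwa [sw_ne _ (by omega) (by omega), sw_ne _ (by omega) (by omega)] at this

theorem Lv.wt (h : CycAff n q T X p) (hN : ∀ z ∈ N, wt q p X c₀ n * z = z) {k : ℕ}
    {c : ℕ → Fin κ} {z : A} (hz : Lv n T X N c₀ k c z) : wt q p X c n * z = z := by
  induction hz with
  | base z hz => exact hN z hz
  | step k c z i hi hc hz ih => exact h.wt_phi_mul ih hi hc.ne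

theorem Lv.eq_base {k : ℕ} {c : ℕ → Fin κ} {z : A} (hz : Lv n T X N c₀ k c z)
    (hc : Sorted n c) : c = c₀ ∧ z ∈ N := by
  cases hz with
  | base _ hz => exact ⟨rfl, hz⟩
  | step k c z i hi hasc hz =>
    have := hc i hi
    rw [sw_left, sw_right] at this
    exact absurd hasc (not_lt.2 this)

/-- A subspace `N` of the weight space of a sorted word `c₀` which is stable under the
`X k` and under the `T i` preserving that weight is contained in a subspace stable under all `X k` and `T i`
whose part of weight `c₀` is `N` and whose parts of other sorted weights vanish. -/
theorem exists_left_ideal (h : CycAff n q T X p) (h0 : Sorted n c₀)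
    (hN : ∀ z ∈ N, wt q p X c₀ n * z = z) (hNX : ∀ k, k < n → ∀ z ∈ N, X k * z ∈ N)
    (hNT : ∀ i, i + 1 < n → c₀ i = c₀ (i + 1) → ∀ z ∈ N, T i * z ∈ N) :
    ∃ S : Submodule F A, N ≤ S ∧ (∀ k, k < n → ∀ z ∈ S, X k * z ∈ S) ∧
      (∀ i, i + 1 < n → ∀ z ∈ S, T i * z ∈ S) ∧
      (∀ z ∈ S, wt q p X c₀ n * z ∈ N) ∧
      ∀ d : ℕ → Fin κ, Sorted n d → (∃ k, k < n ∧ c₀ k ≠ d k) → ∀ z ∈ S,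
        wt q p X d n * z = 0 := by
  let S' : ℕ → (ℕ → Fin κ) → Submodule F A := fun k c => Submodule.span F {z | Lv n T X N c₀ k c z}
  let S : Submodule F A := Submodule.span F {z | ∃ k c, Lv n T X N c₀ k c z}
  have hS' : ∀ k c, S' k c ≤ S := fun k c => Submodule.span_mono fun z hz => ⟨k, c, hz⟩
  have map_le : ∀ (a : A) (s : Set A) (P : Submodule F A), (∀ z ∈ s, a * z ∈ P) →
      ∀ z ∈ Submodule.span F s, a * z ∈ P := by
    intro a s P hs z hz
    have : Submodule.span F s ≤ P.comap (LinearMap.mulLeft F a) := Submodule.span_le.2 hs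
    exact this hz
  have hX' : ∀ k c j, j < n → ∀ z ∈ S' k c, X j * z ∈ S' k c := fun k c j hj =>
    map_le _ _ _ fun z hz => Submodule.subset_span (hz.mul_X h.toAffHecke hNX j hj)
  have hadj : ∀ k c i, i + 1 < n → ∀ u ∈ Algebra.adjoin F {X i, X (i + 1)}, ∀ z ∈ S' k c,
      u * z ∈ S' k c := by
    intro k c i hi u hu
    induction hu using Algebra.adjoin_induction with
    | mem x hx =>
      rcases hx with rfl | rfl
      · exact hX' k c i (by omega)
      · exact hX' k c (i + 1) hi
    | algebraMap r =>
      intro z hz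
      rw [← Algebra.smul_def]
      exact Submodule.smul_mem _ _ hz
    | add x y _ _ hx hy => intro z hz; rw [add_mul]; exact add_mem (hx z hz) (hy z hz)
    | mul x y _ _ hx hy => intro z hz; rw [mul_assoc]; exact hx _ (hy z hz)
  have hphi : ∀ k c i, i + 1 < n → c i ≠ c (i + 1) → ∀ z ∈ S' k c, phi T X i * z ∈ S := by
    intro k c i hi hc
    refine map_le _ _ _ fun z hz => ?_
    have hz : Lv n T X N c₀ k c z := hz
    rcases lt_or_gt_of_ne hc with hlt | hgt
    · exact hS' _ _ (Submodule.subset_span (Lv.step _ _ _ i hi hlt hz))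
    · obtain ⟨k, rfl⟩ := hz.pos_of_descent h0 hi hgt
      obtain ⟨w, rfl, hw⟩ := Lv.descent h.toAffHecke h0 k hz hi hgt
      rw [← mul_assoc, h.phi_mul_phi hi]
      refine hS' k _ (hadj k _ i hi _ ?_ w (Submodule.subset_span hw))
      have hx : X i ∈ Algebra.adjoin F {X i, X (i + 1)} := Algebra.subset_adjoin (by simp)
      have hy : X (i + 1) ∈ Algebra.adjoin F {X i, X (i + 1)} := Algebra.subset_adjoin (by simp)
      exact neg_mem (mul_mem (sub_mem (Subalgebra.smul_mem _ hx _) hy)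
        (sub_mem hx (Subalgebra.smul_mem _ hy _)))
  refine ⟨S, fun z hz => Submodule.subset_span ⟨0, c₀, .base z hz⟩, fun j hj => ?_,
    fun i hi => ?_, ?_, fun d hd hne => ?_⟩
  · refine map_le _ _ _ ?_
    rintro z ⟨k, c, hz⟩
    exact hS' k c (hX' k c j hj z (Submodule.subset_span hz))
  · refine map_le _ _ _ ?_
    rintro z ⟨k, c, hz⟩
    by_cases hc : c i = c (i + 1)
    · exact Submodule.subset_span ⟨k, c, Lv.mul_T h.toAffHecke h0 hNT k hz hi hc⟩
    · obtain ⟨u, hu, hu'⟩ := h.inv_on_wt hi hc (s := 1) (by simp)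
      have huz := hu' z (hz.wt h hN)
      rw [one_smul] at huz
      have hmem : u * z ∈ S' k c := hadj k c i hi u hu z (Submodule.subset_span hz)
      have cc := h.commX i (i + 1) (by omega) hi
      have hcu : Commute (X i - X (i + 1)) u :=
        commute_adjoin ((Commute.refl _).sub_left cc.symm) (cc.sub_left (Commute.refl _)) hu
      have e : T i * z = phi T X i * (u * z) - (q - 1) • (X (i + 1) * (u * z)) := by
        rw [h.phi_expand hi, add_mul, smul_mul_assoc, add_sub_cancel_right, mul_assoc,
          ← mul_assoc (X i - X (i + 1)), hcu.eq, mul_assoc, huz]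
      rw [e]
      exact sub_mem (hphi k c i hi hc _ hmem) (Submodule.smul_mem _ _
        (hS' k c (hX' k c (i + 1) hi _ hmem)))
  · refine map_le _ _ _ ?_
    rintro z ⟨k, c, hz⟩
    by_cases hc : ∃ k, k < n ∧ c k ≠ c₀ k
    · rw [h.wt_mul_eq_zero hc (hz.wt h hN)]
      exact zero_mem _
    · push Not at hc
      have hsort : Sorted n c := fun i hi => by
        rw [hc i (by omega), hc (i + 1) hi]; exact h0 i hi
      obtain ⟨rfl, hzN⟩ := hz.eq_base hsort
      rw [hN z hzN]
      exact hzN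
  · intro z hz
    have := map_le (wt q p X d n) _ ⊥ ?_ z hz
    · simpa using this
    rintro z ⟨k, c, hz⟩
    rw [Submodule.mem_bot]
    by_cases hc : ∃ k, k < n ∧ c k ≠ d k
    · exact h.wt_mul_eq_zero hc (hz.wt h hN)
    · push Not at hc
      have hsort : Sorted n c := fun i hi => by
        rw [hc i (by omega), hc (i + 1) hi]; exact hd i hi
      obtain ⟨rfl, hzN⟩ := hz.eq_base hsort
      obtain ⟨k, hk, hne⟩ := hne
      exact absurd (hc k hk) hne

end LeftIdeal

/-! ### The braid relation from the intertwiners -/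

section Defect

variable {F A : Type} [Field F] [Ring A] [Algebra F A] {q : F} {t₁ t₂ x₁ x₂ x₃ : A}

/-- The relations on three strands, apart from the braid relation. -/
structure ThreeStrands (q : F) (t₁ t₂ x₁ x₂ x₃ : A) : Prop where
  q₁ : t₁ * t₁ = (q - 1) • t₁ + q • 1
  q₂ : t₂ * t₂ = (q - 1) • t₂ + q • 1
  a₁ : t₁ * x₁ = x₂ * t₁ - (q - 1) • x₂
  a₂ : t₁ * x₂ = x₁ * t₁ + (q - 1) • x₂
  a₃ : t₁ * x₃ = x₃ * t₁
  b₁ : t₂ * x₁ = x₁ * t₂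
  b₂ : t₂ * x₂ = x₃ * t₂ - (q - 1) • x₃
  b₃ : t₂ * x₃ = x₂ * t₂ + (q - 1) • x₃
  c₁ : x₂ * x₁ = x₁ * x₂
  c₂ : x₃ * x₁ = x₁ * x₃
  c₃ : x₃ * x₂ = x₂ * x₃

/-- Turns a rewriting rule for `a * b` into one for right-associated products. -/
theorem assoc_rule {a b c : A} (h : a * b = c) (z : A) : a * (b * z) = c * z := by
  rw [← mul_assoc, h]

namespace ThreeStrands

/-- This identity and the next two express multiples of the braid defect by the intertwiners
`φᵢ = (xᵢ₊₁ - xᵢ) tᵢ - (q - 1) xᵢ₊₁`; the braid relation itself is not assumed. Here, the failure of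
`t₁ φ₂ φ₁ = φ₂ φ₁ t₂`. -/
theorem defect_left (h : ThreeStrands q t₁ t₂ x₁ x₂ x₃) :
    t₁ * ((x₃ - x₂) * t₂ - (q - 1) • x₃) * ((x₂ - x₁) * t₁ - (q - 1) • x₂) -
      ((x₃ - x₂) * t₂ - (q - 1) • x₃) * ((x₂ - x₁) * t₁ - (q - 1) • x₂) * t₂ =
    (x₃ - x₂) * (x₃ - x₁) * (t₁ * t₂ * t₁ - t₂ * t₁ * t₂) := by
  simp only [mul_add, add_mul, mul_sub, sub_mul, smul_mul_assoc, mul_smul_comm, mul_assoc,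
    h.q₁, h.q₂, h.a₁, h.a₂, h.a₃, h.b₁, h.b₂, h.b₃, h.c₁, h.c₂, h.c₃, mul_one, one_mul,
    assoc_rule h.q₁, assoc_rule h.q₂, assoc_rule h.a₁, assoc_rule h.a₂, assoc_rule h.a₃,
    assoc_rule h.b₁, assoc_rule h.b₂, assoc_rule h.b₃, assoc_rule h.c₁, assoc_rule h.c₂,
    assoc_rule h.c₃]
  module

/-- The failure of `φ₁ φ₂ t₁ = t₂ φ₁ φ₂`. -/
theorem defect_right (h : ThreeStrands q t₁ t₂ x₁ x₂ x₃) :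
    ((x₂ - x₁) * t₁ - (q - 1) • x₂) * ((x₃ - x₂) * t₂ - (q - 1) • x₃) * t₁ -
      t₂ * ((x₂ - x₁) * t₁ - (q - 1) • x₂) * ((x₃ - x₂) * t₂ - (q - 1) • x₃) =
    (x₂ - x₁) * (x₃ - x₁) * (t₁ * t₂ * t₁ - t₂ * t₁ * t₂) := by
  simp only [mul_add, add_mul, mul_sub, sub_mul, smul_mul_assoc, mul_smul_comm, mul_assoc,
    h.q₁, h.q₂, h.a₁, h.a₂, h.a₃, h.b₁, h.b₂, h.b₃, h.c₁, h.c₂, h.c₃, mul_one, one_mul,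
    assoc_rule h.q₁, assoc_rule h.q₂, assoc_rule h.a₁, assoc_rule h.a₂, assoc_rule h.a₃,
    assoc_rule h.b₁, assoc_rule h.b₂, assoc_rule h.b₃, assoc_rule h.c₁, assoc_rule h.c₂,
    assoc_rule h.c₃]
  module

/-- The failure of the braid relation of the intertwiners. -/
theorem defect_all (h : ThreeStrands q t₁ t₂ x₁ x₂ x₃) :
    ((x₂ - x₁) * t₁ - (q - 1) • x₂) * ((x₃ - x₂) * t₂ - (q - 1) • x₃) *
        ((x₂ - x₁) * t₁ - (q - 1) • x₂) -
      ((x₃ - x₂) * t₂ - (q - 1) • x₃) * ((x₂ - x₁) * t₁ - (q - 1) • x₂) *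
        ((x₃ - x₂) * t₂ - (q - 1) • x₃) =
    (x₂ - x₁) * (x₃ - x₁) * (x₃ - x₂) * (t₁ * t₂ * t₁ - t₂ * t₁ * t₂) := by
  simp only [mul_add, add_mul, mul_sub, sub_mul, smul_mul_assoc, mul_smul_comm, mul_assoc,
    h.q₁, h.q₂, h.a₁, h.a₂, h.a₃, h.b₁, h.b₂, h.b₃, h.c₁, h.c₂, h.c₃, mul_one, one_mul,
    assoc_rule h.q₁, assoc_rule h.q₂, assoc_rule h.a₁, assoc_rule h.a₂, assoc_rule h.a₃,
    assoc_rule h.b₁, assoc_rule h.b₂, assoc_rule h.b₃, assoc_rule h.c₁, assoc_rule h.c₂,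
    assoc_rule h.c₃]
  module

/-- The braid defect intertwines `t₁` and `q - 1 - t₂`. -/
theorem defect_T (h : ThreeStrands q t₁ t₂ x₁ x₂ x₃) :
    t₁ * (t₁ * t₂ * t₁ - t₂ * t₁ * t₂) =
      (q - 1) • (t₁ * t₂ * t₁ - t₂ * t₁ * t₂) - (t₁ * t₂ * t₁ - t₂ * t₁ * t₂) * t₂ := by
  simp only [mul_add, add_mul, mul_sub, sub_mul, smul_mul_assoc, mul_smul_comm, mul_assoc,
    h.q₁, h.q₂, mul_one, one_mul, assoc_rule h.q₁, assoc_rule h.q₂]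
  module

end ThreeStrands

end Defect

/-! ### A representation on functions on words -/

section CoefficientIdentities

-- Identities between the matrix coefficients of the operators on words at a pair of positions of
-- distinct colours, where `a` and `b` are the values of the two Jucys–Murphy elements and `u` is
-- the inverse of `b - a`.

variable {F B : Type} [Field F] [Ring B] [Algebra F B] {q : F} {a b u : B}

theorem coef_X (ba : b * a = a * b) (ua : u * a = a * u) (ub : u * b = b * u)
    (hu : b * u = 1 + a * u) :
    ((q - 1) • b * u) * a = b * ((q - 1) • b * u) - (q - 1) • b := by
  simp only [mul_add, add_mul, mul_sub, sub_mul, smul_mul_assoc, mul_smul_comm, mul_assoc, ba, ua,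
    ub, hu, assoc_rule ba, assoc_rule ua, assoc_rule ub, assoc_rule hu, mul_one, one_mul]
  module

theorem coef_Y (ba : b * a = a * b) (ua : u * a = a * u) (ub : u * b = b * u)
    (hu : b * u = 1 + a * u) :
    ((q - 1) • b * u) * b = a * ((q - 1) • b * u) + (q - 1) • b := by
  simp only [mul_add, add_mul, mul_sub, sub_mul, smul_mul_assoc, mul_smul_comm, mul_assoc, ba, ua,
    ub, hu, assoc_rule ba, assoc_rule ua, assoc_rule ub, assoc_rule hu, mul_one, one_mul]
  module

theorem coef_quad (ba : b * a = a * b) (ua : u * a = a * u) (ub : u * b = b * u)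
    (hu : b * u = 1 + a * u) :
    ((q - 1) • b * u) * ((q - 1) • b * u) + ((q • b - a) * u) * ((q • a - b) * (-u)) =
      (q - 1) • ((q - 1) • b * u) + q • 1 := by
  simp only [mul_add, add_mul, mul_sub, sub_mul, smul_mul_assoc, mul_smul_comm, mul_assoc, ba, ua,
    ub, hu, assoc_rule ba, assoc_rule ua, assoc_rule ub, assoc_rule hu, mul_one, one_mul, mul_neg]
  module

theorem coef_quad' (ba : b * a = a * b) (ua : u * a = a * u) (ub : u * b = b * u)
    (hu : b * u = 1 + a * u) :
    ((q - 1) • b * u) * ((q • b - a) * u) + ((q • b - a) * u) * ((q - 1) • a * (-u)) =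
      (q - 1) • ((q • b - a) * u) := by
  simp only [mul_add, add_mul, mul_sub, sub_mul, smul_mul_assoc, mul_smul_comm, mul_assoc, ba, ua,
    ub, hu, assoc_rule ba, assoc_rule ua, assoc_rule ub, assoc_rule hu, mul_one, one_mul, mul_neg]
  module

theorem coef_symm {t : B} (tx : t * a = b * t - (q - 1) • b) (ty : t * b = a * t + (q - 1) • b)
    (ba : b * a = a * b) {y : B} (ty' : t * y = y * t) (ya : y * a = a * y) (yb : y * b = b * y) :
    t * ((q • y - b) * (q • y - a)) = (q • y - b) * (q • y - a) * t := by
  simp only [mul_add, add_mul, mul_sub, sub_mul, smul_mul_assoc, mul_smul_comm, mul_assoc, ba, tx,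
    ty, ty', ya, yb, assoc_rule ba, assoc_rule tx, assoc_rule ty, assoc_rule ty', assoc_rule ya,
    assoc_rule yb]
  module

theorem coef_symm' {t : B} (tx : t * a = b * t - (q - 1) • b) (ty : t * b = a * t + (q - 1) • b)
    (ba : b * a = a * b) {y : B} (ty' : t * y = y * t) (ya : y * a = a * y) (yb : y * b = b * y) :
    t * ((q • a - y) * (q • b - y)) = (q • a - y) * (q • b - y) * t := by
  simp only [mul_add, add_mul, mul_sub, sub_mul, smul_mul_assoc, mul_smul_comm, mul_assoc, ba, tx,
    ty, ty', ya, yb, assoc_rule ba, assoc_rule tx, assoc_rule ty, assoc_rule ty', assoc_rule ya,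
    assoc_rule yb]
  module

end CoefficientIdentities

section WordRep

variable {ι : Type} [DecidableEq ι]

theorem cnt_mono (c : ℕ → ι) (α : ι) : Monotone (cnt c α) := Nat.count_monotone _

theorem cnt_lt_cnt (c : ℕ → ι) {j k : ℕ} (h : j < k) : cnt c (c j) j < cnt c (c j) k := by
  have := cnt_mono c (c j) (show j + 1 ≤ k from h)
  rw [cnt_succ, if_pos rfl] at this
  omega

/-- Words in which the letter `α` occurs `v α` times among the first `n` letters. -/
abbrev Wd (n : ℕ) (v : ι → ℕ) : Type := {c : ℕ → ι // ∀ α, cnt c α n = v α}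

variable {n : ℕ} {v : ι → ℕ}

/-- The exchange of the letters in positions `i` and `i + 1`; trivial unless `i + 1 < n`. -/
def Wd.sw (i : ℕ) (c : Wd n v) : Wd n v :=
  if hi : i + 1 < n then ⟨_root_.sw i c.1, fun α => by rw [cnt_sw_of_ge _ _ hi, c.2 α]⟩ else c

theorem Wd.sw_val {i : ℕ} (hi : i + 1 < n) (c : Wd n v) : (c.sw i).1 = _root_.sw i c.1 := by
  rw [Wd.sw, dif_pos hi]

theorem Wd.lt (c : Wd n v) {k : ℕ} (hk : k < n) : cnt c.1 (c.1 k) k < v (c.1 k) := by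
  rw [← c.2]; exact cnt_lt_cnt c.1 hk

theorem Wd.succ_lt (c : Wd n v) {k : ℕ} (hk : k + 1 < n) (h : c.1 k = c.1 (k + 1)) :
    cnt c.1 (c.1 k) k + 1 < v (c.1 k) := by
  have h1 := c.lt hk
  rw [← h, cnt_succ, if_pos rfl] at h1
  exact h1

theorem Wd.succ_succ_lt (c : Wd n v) {k : ℕ} (hk : k + 2 < n) (h : c.1 k = c.1 (k + 1))
    (h' : c.1 (k + 1) = c.1 (k + 2)) : cnt c.1 (c.1 k) k + 2 < v (c.1 k) := by
  have h1 := c.lt hk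
  rw [← h', ← h, cnt_succ, if_pos h.symm, cnt_succ, if_pos rfl] at h1
  exact h1

theorem Wd.sw_of_eq (c : Wd n v) {i : ℕ} (h : c.1 i = c.1 (i + 1)) : c.sw i = c := by
  by_cases hi : i + 1 < n
  · refine Subtype.ext ?_
    rw [Wd.sw_val hi]
    funext j
    by_cases h1 : j = i
    · rw [h1, sw_left, h]
    by_cases h2 : j = i + 1
    · rw [h2, sw_right, h]
    rw [sw_ne _ h1 h2]
  · rw [Wd.sw, dif_neg hi]

theorem Wd.sw_sw (c : Wd n v) (i : ℕ) : (c.sw i).sw i = c := by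
  by_cases hi : i + 1 < n
  · refine Subtype.ext ?_
    rw [Wd.sw_val hi, Wd.sw_val hi, _root_.sw_sw]
  · rw [Wd.sw, dif_neg hi, Wd.sw, dif_neg hi]

theorem Wd.sw_comm (c : Wd n v) {i j : ℕ} (hij : i + 2 ≤ j) (hj : j + 1 < n) :
    (c.sw i).sw j = (c.sw j).sw i := by
  refine Subtype.ext ?_
  rw [Wd.sw_val hj, Wd.sw_val (by omega), Wd.sw_val (by omega), Wd.sw_val hj,
    _root_.sw_comm hij]

theorem Wd.sw_braid (c : Wd n v) {i : ℕ} (hi : i + 2 < n) :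
    ((c.sw i).sw (i + 1)).sw i = ((c.sw (i + 1)).sw i).sw (i + 1) := by
  refine Subtype.ext ?_
  have h1 : i + 1 < n := by omega
  simp only [Wd.sw_val hi, Wd.sw_val h1, _root_.sw_braid]

variable {F B : Type} [Field F] [Ring B] [Algebra F B] {q : F} {T X : ι → ℕ → B}

/-- Commuting affine Hecke families of sizes `v α`, the spectra of distinct families being
separated. -/
structure ColData (q : F) (v : ι → ℕ) (T X : ι → ℕ → B) : Prop where
  aff : ∀ α, AffHecke (v α) q (T α) (X α)
  cTT : ∀ α β, α ≠ β → ∀ i j, Commute (T α i) (T β j)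
  cTX : ∀ α β, α ≠ β → ∀ i j, Commute (T α i) (X β j)
  cXX : ∀ α β, α ≠ β → ∀ i j, Commute (X α i) (X β j)
  unit : ∀ α β, α ≠ β → ∀ i j, i < v α → j < v β → IsUnit (X β j - X α i)
  unitq : ∀ α β, α ≠ β → ∀ i j, i < v α → j < v β → IsUnit (q • X β j - X α i)

/-- The action of the `k`-th Jucys–Murphy element at the word `c`. -/
def xx (X : ι → ℕ → B) (c : ℕ → ι) (k : ℕ) : B := X (c k) (cnt c (c k) k)

/-- The diagonal coefficient of the `i`-th Hecke generator at the word `c`. The element inverted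
by `Ring.inverse` is a unit under `ColData`. -/
noncomputable def HH (q : F) (T X : ι → ℕ → B) (c : ℕ → ι) (i : ℕ) : B :=
  if c i = c (i + 1) then T (c i) (cnt c (c i) i)
  else (q - 1) • xx X c (i + 1) * Ring.inverse (xx X c (i + 1) - xx X c i)

/-- The off-diagonal coefficient of the `i`-th Hecke generator at the word `c`. -/
noncomputable def GG (q : F) (X : ι → ℕ → B) (c : ℕ → ι) (i : ℕ) : B :=
  if c i = c (i + 1) then 0
  else (q • xx X c (i + 1) - xx X c i) * Ring.inverse (xx X c (i + 1) - xx X c i)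

theorem xx_sw_left (X : ι → ℕ → B) {c : ℕ → ι} {i : ℕ} (h : c i ≠ c (i + 1)) :
    xx X (sw i c) i = xx X c (i + 1) := by
  rw [xx, xx, sw_left, cnt_sw_of_le _ _ le_rfl, cnt_succ, if_neg h, add_zero]

theorem xx_sw_right (X : ι → ℕ → B) {c : ℕ → ι} {i : ℕ} (h : c i ≠ c (i + 1)) :
    xx X (sw i c) (i + 1) = xx X c i := by
  rw [xx, xx, sw_right, cnt_succ, sw_left, if_neg h.symm, cnt_sw_of_le _ _ le_rfl, add_zero]

theorem cnt_sw_ne {i k : ℕ} (c : ℕ → ι) (α : ι) (h2 : k ≠ i + 1) :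
    cnt (sw i c) α k = cnt c α k := by
  rcases Nat.lt_or_ge i k with h | h
  · exact cnt_sw_of_ge _ _ (by omega)
  · exact cnt_sw_of_le _ _ h

theorem xx_sw_ne (X : ι → ℕ → B) {c : ℕ → ι} {i k : ℕ} (h1 : k ≠ i) (h2 : k ≠ i + 1) :
    xx X (sw i c) k = xx X c k := by
  rw [xx, xx, sw_ne _ h1 h2, cnt_sw_ne _ _ h2]

theorem HH_sw_ne (q : F) (T X : ι → ℕ → B) {c : ℕ → ι} {i k : ℕ} (h : i + 2 ≤ k ∨ k + 2 ≤ i) :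
    HH q T X (sw i c) k = HH q T X c k := by
  rw [HH, HH, xx_sw_ne X (by omega) (by omega), xx_sw_ne X (by omega) (by omega),
    sw_ne _ (by omega) (by omega), sw_ne _ (by omega) (by omega), cnt_sw_ne _ _ (by omega)]

theorem GG_sw_ne (q : F) (X : ι → ℕ → B) {c : ℕ → ι} {i k : ℕ} (h : i + 2 ≤ k ∨ k + 2 ≤ i) :
    GG q X (sw i c) k = GG q X c k := by
  rw [GG, GG, xx_sw_ne X (by omega) (by omega), xx_sw_ne X (by omega) (by omega),
    sw_ne _ (by omega) (by omega), sw_ne _ (by omega) (by omega)]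

theorem commute_inverse {z w : B} (h : Commute z w) : Commute z (Ring.inverse w) := by
  by_cases hw : IsUnit w
  · obtain ⟨w, rfl⟩ := hw
    rw [Ring.inverse_unit]
    exact h.units_inv_right
  · rw [Ring.inverse_non_unit _ hw]
    exact Commute.zero_right _

theorem commute_HH {z : B} {c : ℕ → ι} {i : ℕ}
    (ht : c i = c (i + 1) → Commute z (T (c i) (cnt c (c i) i)))
    (hx : Commute z (xx X c i)) (hy : Commute z (xx X c (i + 1))) : Commute z (HH q T X c i) := by
  rw [HH]
  split_ifs with h
  · exact ht h
  · exact (hy.smul_right _).mul_right (commute_inverse (hy.sub_right hx))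

theorem commute_GG {z : B} {c : ℕ → ι} {i : ℕ}
    (hx : Commute z (xx X c i)) (hy : Commute z (xx X c (i + 1))) : Commute z (GG q X c i) := by
  rw [GG]
  split_ifs with h
  · exact Commute.zero_right _
  · exact ((hy.smul_right _).sub_right hx).mul_right (commute_inverse (hy.sub_right hx))

namespace ColData

theorem commute_xx (h : ColData q v T X) (c : Wd n v) {j k : ℕ} (hj : j < n) (hk : k < n) :
    Commute (xx X c.1 j) (xx X c.1 k) := by
  by_cases e : c.1 j = c.1 k
  · have h1 := c.lt hj
    have h2 := c.lt hk
    rw [xx, xx, ← e]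
    rw [← e] at h2
    exact (h.aff _).commX _ _ h1 h2
  · exact h.cXX _ _ e _ _

theorem commute_t_xx (h : ColData q v T X) (c : Wd n v) {i k : ℕ} (hi : i + 1 < n) (hk : k < n)
    (e : c.1 i = c.1 (i + 1)) (h1 : k ≠ i) (h2 : k ≠ i + 1) :
    Commute (T (c.1 i) (cnt c.1 (c.1 i) i)) (xx X c.1 k) := by
  by_cases e' : c.1 i = c.1 k
  · have hk' := c.lt hk
    have hi' := c.succ_lt hi e
    rw [xx, ← e']
    rw [← e'] at hk'
    have hsucc : cnt c.1 (c.1 i) (i + 1) = cnt c.1 (c.1 i) i + 1 := by rw [cnt_succ, if_pos rfl]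
    refine (h.aff _).commTX _ _ hi' hk' ?_ ?_
    · rcases Nat.lt_or_ge k i with hlt | hge
      · have := cnt_lt_cnt c.1 hlt
        rw [← e'] at this; omega
      · have := cnt_lt_cnt c.1 (show i < k by omega)
        omega
    · rcases Nat.lt_or_ge k i with hlt | hge
      · have := cnt_lt_cnt c.1 hlt
        rw [← e'] at this; omega
      · have := cnt_lt_cnt c.1 (show i + 1 < k by omega)
        rw [← e] at this
        omega
  · exact h.cTX _ _ e' _ _

theorem commute_t_t (h : ColData q v T X) (c : Wd n v) {i j : ℕ} (hij : i + 2 ≤ j)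
    (hj : j + 1 < n) (e : c.1 i = c.1 (i + 1)) (e₂ : c.1 j = c.1 (j + 1)) :
    Commute (T (c.1 i) (cnt c.1 (c.1 i) i)) (T (c.1 j) (cnt c.1 (c.1 j) j)) := by
  by_cases e' : c.1 i = c.1 j
  · have hj' := c.succ_lt hj e₂
    rw [← e'] at hj' ⊢
    refine (h.aff _).commT _ _ ?_ hj'
    have := cnt_lt_cnt c.1 (show i + 1 < j by omega)
    rw [← e, cnt_succ, if_pos rfl] at this
    omega
  · exact h.cTT _ _ e' _ _

theorem isUnit_sub (h : ColData q v T X) (c : Wd n v) {j k : ℕ} (hj : j < n) (hk : k < n)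
    (e : c.1 j ≠ c.1 k) : IsUnit (xx X c.1 k - xx X c.1 j) :=
  h.unit _ _ e _ _ (c.lt hj) (c.lt hk)

theorem isUnit_subq (h : ColData q v T X) (c : Wd n v) {j k : ℕ} (hj : j < n) (hk : k < n)
    (e : c.1 j ≠ c.1 k) : IsUnit (q • xx X c.1 k - xx X c.1 j) :=
  h.unitq _ _ e _ _ (c.lt hj) (c.lt hk)

theorem xx_succ (c : ℕ → ι) {i : ℕ} (e : c i = c (i + 1)) :
    xx X c (i + 1) = X (c i) (cnt c (c i) i + 1) := by
  rw [xx, ← e, cnt_succ, if_pos rfl]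

/-- The relations of an adjacent pair of positions of the same colour. -/
theorem same (h : ColData q v T X) (c : Wd n v) {i : ℕ} (hi : i + 1 < n)
    (e : c.1 i = c.1 (i + 1)) :
    T (c.1 i) (cnt c.1 (c.1 i) i) * xx X c.1 i =
      xx X c.1 (i + 1) * T (c.1 i) (cnt c.1 (c.1 i) i) - (q - 1) • xx X c.1 (i + 1) ∧
    T (c.1 i) (cnt c.1 (c.1 i) i) * xx X c.1 (i + 1) =
      xx X c.1 i * T (c.1 i) (cnt c.1 (c.1 i) i) + (q - 1) • xx X c.1 (i + 1) := by
  have hi' := c.succ_lt hi e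
  rw [xx_succ c.1 e]
  exact ⟨(h.aff _).hx hi', (h.aff _).hy hi'⟩

/-- The inverse used for an adjacent pair of positions of distinct colours. -/
theorem mixed (h : ColData q v T X) (c : Wd n v) {i : ℕ} (hi : i + 1 < n)
    (e : c.1 i ≠ c.1 (i + 1)) :
    ∃ u, Ring.inverse (xx X c.1 (i + 1) - xx X c.1 i) = u ∧
      Ring.inverse (xx X c.1 i - xx X c.1 (i + 1)) = -u ∧
      u * xx X c.1 i = xx X c.1 i * u ∧ u * xx X c.1 (i + 1) = xx X c.1 (i + 1) * u ∧
      xx X c.1 (i + 1) * u = 1 + xx X c.1 i * u := by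
  have hu := h.isUnit_sub c (by omega) hi e
  have hc := h.commute_xx c (j := i) (k := i + 1) (by omega) hi
  refine ⟨_, rfl, ?_, ?_, ?_, ?_⟩
  · refine hu.neg.mul_left_cancel (b := _) ?_ |>.symm
    rw [neg_mul_neg, Ring.mul_inverse_cancel _ hu, neg_sub,
      Ring.mul_inverse_cancel _ (by rw [← neg_sub]; exact hu.neg)]
  · exact (commute_inverse (hc.sub_right (Commute.refl _))).symm.eq
  · exact (commute_inverse ((Commute.refl _).sub_right hc.symm)).symm.eq
  · rw [← sub_eq_iff_eq_add, ← sub_mul, Ring.mul_inverse_cancel _ hu]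

end ColData

/-- The `k`-th Jucys–Murphy operator on functions on words. -/
noncomputable def opX (F : Type) [Field F] [Algebra F B] (n : ℕ) (v : ι → ℕ) (X : ι → ℕ → B)
    (k : ℕ) : Module.End F (Wd n v → B) where
  toFun f c := xx X c.1 k * f c
  map_add' f g := by funext c; exact mul_add _ _ _
  map_smul' a f := by funext c; exact mul_smul_comm _ _ _

/-- The `i`-th Hecke operator on functions on words. -/
noncomputable def opT (n : ℕ) (v : ι → ℕ) (q : F) (T X : ι → ℕ → B) (i : ℕ) :
    Module.End F (Wd n v → B) where
  toFun f c := HH q T X c.1 i * f c + GG q X c.1 i * f (c.sw i)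
  map_add' f g := by funext c; simp only [Pi.add_apply, mul_add]; abel
  map_smul' a f := by
    funext c; simp only [Pi.smul_apply, mul_smul_comm, smul_add, RingHom.id_apply]

theorem opX_apply (X : ι → ℕ → B) (k : ℕ) (f : Wd n v → B) (c : Wd n v) :
    opX F n v X k f c = xx X c.1 k * f c := rfl

theorem opT_apply (q : F) (T X : ι → ℕ → B) (i : ℕ) (f : Wd n v → B) (c : Wd n v) :
    opT n v q T X i f c = HH q T X c.1 i * f c + GG q X c.1 i * f (c.sw i) := rfl

theorem opT_same (q : F) (T X : ι → ℕ → B) {i : ℕ} (f : Wd n v → B) (c : Wd n v)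
    (e : c.1 i = c.1 (i + 1)) :
    opT n v q T X i f c = T (c.1 i) (cnt c.1 (c.1 i) i) * f c := by
  rw [opT_apply, HH, GG, if_pos e, if_pos e, zero_mul, add_zero]

namespace ColData

theorem op_tx (h : ColData q v T X) {i : ℕ} (hi : i + 1 < n) :
    opT n v q T X i * opX F n v X i =
      opX F n v X (i + 1) * opT n v q T X i - (q - 1) • opX F n v X (i + 1) := by
  refine LinearMap.ext fun f => funext fun c => ?_
  simp only [Module.End.mul_apply, LinearMap.sub_apply, LinearMap.smul_apply, Pi.sub_apply,
    Pi.smul_apply]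
  by_cases e : c.1 i = c.1 (i + 1)
  · simp only [opX_apply, opT_same q T X _ c e]
    rw [← mul_assoc, (h.same c hi e).1, sub_mul, mul_assoc, smul_mul_assoc]
  · obtain ⟨u, hu, -, ua, ub, bu⟩ := h.mixed c hi e
    have ba := (h.commute_xx c (j := i + 1) (k := i) hi (by omega)).eq
    simp only [opX_apply, opT_apply, Wd.sw_val hi, xx_sw_left X e]
    have k1 : HH q T X c.1 i * xx X c.1 i =
        xx X c.1 (i + 1) * HH q T X c.1 i - (q - 1) • xx X c.1 (i + 1) := by
      rw [HH, if_neg e, hu]; exact coef_X ba ua ub bu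
    have k2 : Commute (xx X c.1 (i + 1)) (GG q X c.1 i) := commute_GG ba (Commute.refl _)
    rw [← mul_assoc, k1, ← mul_assoc, ← k2.eq, sub_mul, mul_add, mul_assoc, mul_assoc,
      smul_mul_assoc]
    abel

theorem op_ty (h : ColData q v T X) {i : ℕ} (hi : i + 1 < n) :
    opT n v q T X i * opX F n v X (i + 1) =
      opX F n v X i * opT n v q T X i + (q - 1) • opX F n v X (i + 1) := by
  refine LinearMap.ext fun f => funext fun c => ?_
  simp only [Module.End.mul_apply, LinearMap.add_apply, LinearMap.smul_apply, Pi.add_apply,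
    Pi.smul_apply]
  by_cases e : c.1 i = c.1 (i + 1)
  · simp only [opX_apply, opT_same q T X _ c e]
    rw [← mul_assoc, (h.same c hi e).2, add_mul, mul_assoc, smul_mul_assoc]
  · obtain ⟨u, hu, -, ua, ub, bu⟩ := h.mixed c hi e
    have ba := (h.commute_xx c (j := i + 1) (k := i) hi (by omega)).eq
    simp only [opX_apply, opT_apply, Wd.sw_val hi, xx_sw_right X e]
    have k1 : HH q T X c.1 i * xx X c.1 (i + 1) =
        xx X c.1 i * HH q T X c.1 i + (q - 1) • xx X c.1 (i + 1) := by
      rw [HH, if_neg e, hu]; exact coef_Y ba ua ub bu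
    have k2 : Commute (xx X c.1 i) (GG q X c.1 i) := commute_GG (Commute.refl _) ba.symm
    rw [← mul_assoc, k1, ← mul_assoc, ← k2.eq, add_mul, mul_add, mul_assoc, mul_assoc,
      smul_mul_assoc]
    abel

theorem op_quad (h : ColData q v T X) {i : ℕ} (hi : i + 1 < n) :
    opT n v q T X i * opT n v q T X i = (q - 1) • opT n v q T X i + q • 1 := by
  refine LinearMap.ext fun f => funext fun c => ?_
  simp only [Module.End.mul_apply, LinearMap.add_apply, LinearMap.smul_apply, Pi.add_apply,
    Pi.smul_apply, Module.End.one_apply]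
  by_cases e : c.1 i = c.1 (i + 1)
  · simp only [opT_same q T X _ c e]
    rw [← mul_assoc, (h.aff _).quad _ (c.succ_lt hi e), add_mul, smul_mul_assoc, smul_mul_assoc,
      one_mul]
  · obtain ⟨u, hu, hu', ua, ub, bu⟩ := h.mixed c hi e
    have ba := (h.commute_xx c (j := i + 1) (k := i) hi (by omega)).eq
    have e' : ¬ (sw i c.1) i = (sw i c.1) (i + 1) := by
      rw [sw_left, sw_right]; exact fun h => e h.symm
    simp only [opT_apply, Wd.sw_sw, Wd.sw_val hi]
    simp only [HH, GG, if_neg e, if_neg e', xx_sw_left X e, xx_sw_right X e, hu, hu']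
    have k1 := coef_quad (q := q) ba ua ub bu
    have k2 := coef_quad' (q := q) ba ua ub bu
    have r1 := congrArg (· * f c) k1
    have r2 := congrArg (· * f (c.sw i)) k2
    simp only [add_mul, mul_assoc, smul_mul_assoc, one_mul] at r1 r2
    simp only [mul_add, mul_assoc, smul_add, smul_mul_assoc]
    linear_combination (norm := module) r1 + r2

theorem op_comm_X (h : ColData q v T X) {j k : ℕ} (hj : j < n) (hk : k < n) :
    Commute (opX F n v X j) (opX F n v X k) := by
  refine LinearMap.ext fun f => funext fun c => ?_
  simp only [Module.End.mul_apply, opX_apply]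
  rw [← mul_assoc, (h.commute_xx c hj hk).eq, mul_assoc]

theorem op_comm_TX (h : ColData q v T X) {i k : ℕ} (hi : i + 1 < n) (hk : k < n) (h1 : k ≠ i)
    (h2 : k ≠ i + 1) : Commute (opT n v q T X i) (opX F n v X k) := by
  refine LinearMap.ext fun f => funext fun c => ?_
  simp only [Module.End.mul_apply, opX_apply, opT_apply, Wd.sw_val hi, xx_sw_ne X h1 h2]
  have c1 : Commute (xx X c.1 k) (xx X c.1 i) := h.commute_xx c hk (by omega)
  have c2 : Commute (xx X c.1 k) (xx X c.1 (i + 1)) := h.commute_xx c hk hi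
  have k1 : Commute (xx X c.1 k) (HH q T X c.1 i) :=
    commute_HH (fun e => (h.commute_t_xx c hi hk e h1 h2).symm) c1 c2
  have k2 : Commute (xx X c.1 k) (GG q X c.1 i) := commute_GG c1 c2
  rw [← mul_assoc, ← k1.eq, ← mul_assoc, ← k2.eq, mul_add, mul_assoc, mul_assoc]

theorem op_comm_T (h : ColData q v T X) {i j : ℕ} (hij : i + 2 ≤ j) (hj : j + 1 < n) :
    Commute (opT n v q T X i) (opT n v q T X j) := by
  refine LinearMap.ext fun f => funext fun c => ?_
  have hi : i + 1 < n := by omega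
  simp only [Module.End.mul_apply, opT_apply, Wd.sw_val hi, Wd.sw_val hj,
    HH_sw_ne q T X (Or.inl hij), HH_sw_ne q T X (Or.inr hij), GG_sw_ne q X (Or.inl hij),
    GG_sw_ne q X (Or.inr hij), Wd.sw_comm c hij hj]
  have cxx : ∀ {a b : ℕ}, a < n → b < n → Commute (xx X c.1 a) (xx X c.1 b) :=
    fun ha hb => h.commute_xx c ha hb
  have xH : ∀ {k}, k < n → k ≠ j → k ≠ j + 1 → Commute (xx X c.1 k) (HH q T X c.1 j) :=
    fun hk h1 h2 => commute_HH (fun e => (h.commute_t_xx c hj hk e h1 h2).symm)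
      (cxx hk (by omega)) (cxx hk hj)
  have xG : ∀ {k}, k < n → Commute (xx X c.1 k) (GG q X c.1 j) :=
    fun hk => commute_GG (cxx hk (by omega)) (cxx hk hj)
  have HHc : Commute (HH q T X c.1 j) (HH q T X c.1 i) := by
    refine commute_HH (fun e => ?_) (xH (by omega) (by omega) (by omega)).symm
      (xH (by omega) (by omega) (by omega)).symm
    refine (commute_HH (fun e₂ => h.commute_t_t c hij hj e e₂) ?_ ?_).symm
    · exact h.commute_t_xx c hi (by omega) e (by omega) (by omega)
    · exact h.commute_t_xx c hi (by omega) e (by omega) (by omega)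
  have HGc : Commute (HH q T X c.1 j) (GG q X c.1 i) :=
    commute_GG (xH (by omega) (by omega) (by omega)).symm (xH (by omega) (by omega) (by omega)).symm
  have GHc : Commute (GG q X c.1 j) (HH q T X c.1 i) := by
    refine commute_HH (fun e => ?_) (xG (by omega)).symm (xG (by omega)).symm
    refine (commute_GG ?_ ?_).symm
    · exact h.commute_t_xx c hi (by omega) e (by omega) (by omega)
    · exact h.commute_t_xx c hi (by omega) e (by omega) (by omega)
  have GGc : Commute (GG q X c.1 j) (GG q X c.1 i) :=
    commute_GG (xG (by omega)).symm (xG (by omega)).symm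
  simp only [mul_add, ← mul_assoc, HHc.eq, HGc.eq, GHc.eq, GGc.eq]
  abel

end ColData

end WordRep

/-! ### The braid relation for the operators on words -/

section WordBraid

variable {ι : Type} [DecidableEq ι] {n : ℕ} {v : ι → ℕ}
variable {F B : Type} [Field F] [Ring B] [Algebra F B] {q : F} {T X : ι → ℕ → B}

namespace ColData

theorem three (h : ColData q v T X) {i : ℕ} (hi : i + 2 < n) :
    ThreeStrands q (opT n v q T X i) (opT n v q T X (i + 1)) (opX F n v X i)
      (opX F n v X (i + 1)) (opX F n v X (i + 2)) where
  q₁ := h.op_quad (by omega)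
  q₂ := h.op_quad hi
  a₁ := h.op_tx (by omega)
  a₂ := h.op_ty (by omega)
  a₃ := (h.op_comm_TX (by omega) hi (by omega) (by omega)).eq
  b₁ := (h.op_comm_TX hi (by omega) (by omega) (by omega)).eq
  b₂ := h.op_tx hi
  b₃ := h.op_ty hi
  c₁ := (h.op_comm_X (by omega) (by omega)).eq
  c₂ := (h.op_comm_X (by omega) (by omega)).eq
  c₃ := (h.op_comm_X (by omega) (by omega)).eq

/-- The intertwiner of positions `i` and `i + 1`. -/
noncomputable def opPhi (n : ℕ) (v : ι → ℕ) (q : F) (T X : ι → ℕ → B) (i : ℕ) :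
    Module.End F (Wd n v → B) :=
  (opX F n v X (i + 1) - opX F n v X i) * opT n v q T X i - (q - 1) • opX F n v X (i + 1)

/-- The intertwiner exchanges distinct adjacent letters, up to an invertible factor. -/
theorem phi_mixed (h : ColData q v T X) {i : ℕ} (hi : i + 1 < n) (f : Wd n v → B) (c : Wd n v)
    (e : c.1 i ≠ c.1 (i + 1)) :
    opPhi n v q T X i f c =
      (q • xx X c.1 (i + 1) - xx X c.1 i) * f (c.sw i) := by
  have hu := h.isUnit_sub c (by omega) hi e
  have hc := h.commute_xx c (j := i) (k := i + 1) (by omega) hi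
  have k1 : (xx X c.1 (i + 1) - xx X c.1 i) * HH q T X c.1 i = (q - 1) • xx X c.1 (i + 1) := by
    have cm : Commute (xx X c.1 (i + 1) - xx X c.1 i) ((q - 1) • xx X c.1 (i + 1)) :=
      (((Commute.refl _).sub_left hc)).smul_right _
    rw [HH, if_neg e, ← mul_assoc, cm.eq, mul_assoc, Ring.mul_inverse_cancel _ hu, mul_one]
  have k2 : (xx X c.1 (i + 1) - xx X c.1 i) * GG q X c.1 i = q • xx X c.1 (i + 1) - xx X c.1 i := by
    have cm : Commute (xx X c.1 (i + 1) - xx X c.1 i) (q • xx X c.1 (i + 1) - xx X c.1 i) :=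
      (((Commute.refl _).sub_left hc).smul_right _).sub_right (hc.symm.sub_left (Commute.refl _))
    rw [GG, if_neg e, ← mul_assoc, cm.eq, mul_assoc, Ring.mul_inverse_cancel _ hu, mul_one]
  simp only [opPhi, Module.End.mul_apply, LinearMap.sub_apply, LinearMap.smul_apply, Pi.sub_apply,
    Pi.smul_apply, opX_apply, opT_apply]
  rw [← sub_mul, mul_add, ← mul_assoc, k1, ← mul_assoc, k2, smul_mul_assoc]
  abel

/-- The failure of the braid relation. -/
noncomputable def defect (n : ℕ) (v : ι → ℕ) (q : F) (T X : ι → ℕ → B) (i : ℕ) :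
    Module.End F (Wd n v → B) :=
  opT n v q T X i * opT n v q T X (i + 1) * opT n v q T X i -
    opT n v q T X (i + 1) * opT n v q T X i * opT n v q T X (i + 1)

theorem defect_left_apply (h : ColData q v T X) {i : ℕ} (hi : i + 2 < n) (f : Wd n v → B)
    (c : Wd n v) :
    opT n v q T X i (opPhi n v q T X (i + 1) (opPhi n v q T X i f)) c -
      opPhi n v q T X (i + 1) (opPhi n v q T X i (opT n v q T X (i + 1) f)) c =
    (xx X c.1 (i + 2) - xx X c.1 (i + 1)) *
      ((xx X c.1 (i + 2) - xx X c.1 i) * defect n v q T X i f c) := by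
  have key := congrArg (fun Φ => Φ f c) (h.three hi).defect_left
  rw [sub_mul (xx X c.1 (i + 2)) (xx X c.1 i), sub_mul (xx X c.1 (i + 2)) (xx X c.1 (i + 1))]
  exact key

theorem defect_right_apply (h : ColData q v T X) {i : ℕ} (hi : i + 2 < n) (f : Wd n v → B)
    (c : Wd n v) :
    opPhi n v q T X i (opPhi n v q T X (i + 1) (opT n v q T X i f)) c -
      opT n v q T X (i + 1) (opPhi n v q T X i (opPhi n v q T X (i + 1) f)) c =
    (xx X c.1 (i + 1) - xx X c.1 i) *
      ((xx X c.1 (i + 2) - xx X c.1 i) * defect n v q T X i f c) := by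
  have key := congrArg (fun Φ => Φ f c) (h.three hi).defect_right
  rw [sub_mul, sub_mul (xx X c.1 (i + 2))]
  exact key

theorem defect_all_apply (h : ColData q v T X) {i : ℕ} (hi : i + 2 < n) (f : Wd n v → B)
    (c : Wd n v) :
    opPhi n v q T X i (opPhi n v q T X (i + 1) (opPhi n v q T X i f)) c -
      opPhi n v q T X (i + 1) (opPhi n v q T X i (opPhi n v q T X (i + 1) f)) c =
    (xx X c.1 (i + 1) - xx X c.1 i) * ((xx X c.1 (i + 2) - xx X c.1 i) *
      ((xx X c.1 (i + 2) - xx X c.1 (i + 1)) * defect n v q T X i f c)) := by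
  have key := congrArg (fun Φ => Φ f c) (h.three hi).defect_all
  rw [sub_mul, sub_mul (xx X c.1 (i + 2)), sub_mul (xx X c.1 (i + 2))]
  exact key

/-- Where the letters are `a a b`, the defect vanishes because the intertwiners carry `T i` to
`T (i + 1)`. -/
theorem defect_aab (h : ColData q v T X) {i : ℕ} (hi : i + 2 < n) (f : Wd n v → B) (c : Wd n v)
    (e : c.1 i = c.1 (i + 1)) (e' : c.1 i ≠ c.1 (i + 2)) : defect n v q T X i f c = 0 := by
  have hi' : i + 1 < n := by omega
  have e'' : c.1 (i + 1) ≠ c.1 (i + 1 + 1) := e ▸ e'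
  set d := c.sw (i + 1) with hd
  have hdv : d.1 = sw (i + 1) c.1 := Wd.sw_val hi c
  have hde : d.1 i ≠ d.1 (i + 1) := by rw [hdv, sw_left, sw_pred]; exact e'
  set g := d.sw i with hg
  have hgv : g.1 = sw i d.1 := Wd.sw_val hi' d
  have hge : g.1 (i + 1) = g.1 (i + 1 + 1) := by
    rw [hgv, sw_right, sw_two, hdv, sw_pred, sw_right, e]
  have key := h.defect_left_apply hi f c
  have et : T (g.1 (i + 1)) (cnt g.1 (g.1 (i + 1)) (i + 1)) = T (c.1 i) (cnt c.1 (c.1 i) i) := by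
    have g1 : g.1 (i + 1) = c.1 i := by rw [hgv, sw_right, hdv, sw_pred]
    have g0 : g.1 i = c.1 (i + 2) := by rw [hgv, sw_left, hdv, sw_left]
    rw [g1, cnt_succ, g0, if_neg e'.symm, add_zero, hgv, cnt_sw_of_le _ _ le_rfl, hdv,
      cnt_sw_of_le _ _ (by omega)]
  have ex1 : xx X d.1 (i + 1) = xx X c.1 (i + 2) := by rw [hdv, xx_sw_left X e'']
  have ex0 : xx X d.1 i = xx X c.1 i := by rw [hdv, xx_sw_ne X (by omega) (by omega)]
  rw [opT_same q T X _ c e, h.phi_mixed hi _ c e'', h.phi_mixed hi _ c e'', ← hd,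
    h.phi_mixed hi' _ d hde, h.phi_mixed hi' _ d hde, ← hg, opT_same q T X _ g hge, et, ex1, ex0,
    ← mul_assoc (q • xx X c.1 (i + 1 + 1) - _), ← mul_assoc (T _ _),
    coef_symm (h.same c hi' e).1 (h.same c hi' e).2 (h.commute_xx c hi' (by omega)).eq
      (h.commute_t_xx c hi' hi e (by omega) (by omega)).eq
      (h.commute_xx c hi (by omega)).eq (h.commute_xx c hi hi').eq, mul_assoc, mul_assoc] at key
  replace key := key.symm.trans (sub_self _)
  exact ((h.isUnit_sub c (by omega) hi e').mul_right_eq_zero).1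
    (((h.isUnit_sub c hi' hi e'').mul_right_eq_zero).1 key)

/-- The mirror image of `defect_aab`. -/
theorem defect_abb (h : ColData q v T X) {i : ℕ} (hi : i + 2 < n) (f : Wd n v → B) (c : Wd n v)
    (e : c.1 (i + 1) = c.1 (i + 2)) (e' : c.1 i ≠ c.1 (i + 1)) : defect n v q T X i f c = 0 := by
  have hi' : i + 1 < n := by omega
  have e'' : c.1 i ≠ c.1 (i + 2) := e ▸ e'
  set d := c.sw i with hd
  have hdv : d.1 = sw i c.1 := Wd.sw_val hi' c
  have hde : d.1 (i + 1) ≠ d.1 (i + 1 + 1) := by rw [hdv, sw_right, sw_two]; exact e''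
  set g := d.sw (i + 1) with hg
  have hgv : g.1 = sw (i + 1) d.1 := Wd.sw_val hi d
  have hge : g.1 i = g.1 (i + 1) := by
    rw [hgv, sw_pred, sw_left, hdv, sw_left, sw_two, e]
  have key := h.defect_right_apply hi f c
  have et : T (g.1 i) (cnt g.1 (g.1 i) i) = T (c.1 (i + 1)) (cnt c.1 (c.1 (i + 1)) (i + 1)) := by
    have g1 : g.1 i = c.1 (i + 1) := by rw [hgv, sw_pred, hdv, sw_left]
    rw [g1, cnt_succ, if_neg e', add_zero, hgv, cnt_sw_of_le _ _ (by omega), hdv,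
      cnt_sw_of_le _ _ le_rfl]
  have ex2 : xx X d.1 (i + 1 + 1) = xx X c.1 (i + 2) := by
    rw [hdv, xx_sw_ne X (by omega) (by omega)]
  have ex1 : xx X d.1 (i + 1) = xx X c.1 i := by rw [hdv, xx_sw_right X e']
  rw [opT_same q T X _ c e, h.phi_mixed hi' _ c e', h.phi_mixed hi' _ c e', ← hd,
    h.phi_mixed hi _ d hde, h.phi_mixed hi _ d hde, ← hg, opT_same q T X _ g hge, et, ex1, ex2,
    ← mul_assoc (q • xx X c.1 (i + 1) - _) (q • xx X c.1 (i + 2) - _) (f g), ← mul_assoc (T _ _),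
    coef_symm' (h.same c hi e).1 (h.same c hi e).2 (h.commute_xx c hi (by omega)).eq
      (h.commute_t_xx c hi (by omega) e (by omega) (by omega)).eq
      (h.commute_xx c (by omega) (by omega)).eq (h.commute_xx c (by omega) hi).eq, mul_assoc,
    mul_assoc, sub_self] at key
  exact ((h.isUnit_sub c (by omega) hi e'').mul_right_eq_zero).1
    (((h.isUnit_sub c (by omega) hi' e').mul_right_eq_zero).1 key.symm)

/-- Reduces to `defect_abb`, since the defect intertwines `T i` and `q - 1 - T (i + 1)`. -/
theorem defect_aba (h : ColData q v T X) {i : ℕ} (hi : i + 2 < n) (f : Wd n v → B) (c : Wd n v)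
    (e : c.1 i = c.1 (i + 2)) (e' : c.1 i ≠ c.1 (i + 1)) : defect n v q T X i f c = 0 := by
  have hi' : i + 1 < n := by omega
  set d := c.sw i with hd
  have hdv : d.1 = sw i c.1 := Wd.sw_val hi' c
  have hde : d.1 i ≠ d.1 (i + 1) := by rw [hdv, sw_left, sw_right]; exact e'.symm
  have hde' : d.1 (i + 1) = d.1 (i + 2) := by rw [hdv, sw_right, sw_two]; exact e
  have z : ∀ f, defect n v q T X i f d = 0 := fun f => h.defect_abb hi f d hde' hde
  have key := h.phi_mixed hi' (defect n v q T X i f) d hde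
  have k2 : opT n v q T X i (defect n v q T X i f) d = 0 := by
    have := congrArg (fun Φ => Φ f d) (h.three hi).defect_T
    refine this.trans ?_
    change (q - 1) • defect n v q T X i f d - defect n v q T X i (opT n v q T X (i + 1) f) d = 0
    rw [z, z, smul_zero, sub_zero]
  rw [hd, Wd.sw_sw, ← hd] at key
  simp only [opPhi, Module.End.mul_apply, LinearMap.sub_apply, LinearMap.smul_apply, Pi.sub_apply,
    Pi.smul_apply, opX_apply] at key
  rw [k2, z] at key
  simp only [mul_zero, smul_zero, sub_zero] at key
  exact ((h.isUnit_subq d (by omega) hi' hde).mul_right_eq_zero).1 key.symm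

/-- For distinct letters the intertwiners are exchanges of letters up to factors in `B`, and they
satisfy the braid relation. -/
theorem defect_abc (h : ColData q v T X) {i : ℕ} (hi : i + 2 < n) (f : Wd n v → B) (c : Wd n v)
    (e₁ : c.1 i ≠ c.1 (i + 1)) (e₂ : c.1 i ≠ c.1 (i + 2)) (e₃ : c.1 (i + 1) ≠ c.1 (i + 2)) :
    defect n v q T X i f c = 0 := by
  have hi' : i + 1 < n := by omega
  set d := c.sw i with hd
  have hdv : d.1 = sw i c.1 := Wd.sw_val hi' c
  have hde : d.1 (i + 1) ≠ d.1 (i + 1 + 1) := by rw [hdv, sw_right, sw_two]; exact e₂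
  set g := d.sw (i + 1) with hg
  have hgv : g.1 = sw (i + 1) d.1 := Wd.sw_val hi d
  have hge : g.1 i ≠ g.1 (i + 1) := by
    rw [hgv, sw_pred, sw_left, hdv, sw_left, sw_two]; exact e₃
  set d' := c.sw (i + 1) with hd'
  have hdv' : d'.1 = sw (i + 1) c.1 := Wd.sw_val hi c
  have hde' : d'.1 i ≠ d'.1 (i + 1) := by rw [hdv', sw_left, sw_pred]; exact e₂
  set g' := d'.sw i with hg'
  have hgv' : g'.1 = sw i d'.1 := Wd.sw_val hi' d'
  have hge' : g'.1 (i + 1) ≠ g'.1 (i + 1 + 1) := by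
    rw [hgv', sw_right, sw_two, hdv', sw_pred, sw_right]; exact e₁
  have key := h.defect_all_apply hi f c
  have x1 : xx X d.1 (i + 1 + 1) = xx X c.1 (i + 2) := by
    rw [hdv, xx_sw_ne X (by omega) (by omega)]
  have x2 : xx X d.1 (i + 1) = xx X c.1 i := by rw [hdv, xx_sw_right X e₁]
  have x3 : xx X g.1 (i + 1) = xx X c.1 (i + 2) := by rw [hgv, xx_sw_left X hde, x1]
  have x4 : xx X g.1 i = xx X c.1 (i + 1) := by
    rw [hgv, xx_sw_ne X (by omega) (by omega), hdv, xx_sw_left X e₁]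
  have x1' : xx X d'.1 i = xx X c.1 i := by rw [hdv', xx_sw_ne X (by omega) (by omega)]
  have x2' : xx X d'.1 (i + 1) = xx X c.1 (i + 2) := by rw [hdv', xx_sw_left X e₃]
  have x3' : xx X g'.1 (i + 1) = xx X c.1 i := by rw [hgv', xx_sw_right X hde', x1']
  have x4' : xx X g'.1 (i + 1 + 1) = xx X c.1 (i + 1) := by
    rw [hgv', xx_sw_ne X (by omega) (by omega), hdv', xx_sw_right X e₃]
  have hw : g.sw i = g'.sw (i + 1) := c.sw_braid hi
  have c01 := h.commute_xx c (j := i) (k := i + 1) (by omega) (by omega)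
  have c02 := h.commute_xx c (j := i) (k := i + 2) (by omega) (by omega)
  have c12 := h.commute_xx c (j := i + 1) (k := i + 2) (by omega) (by omega)
  have hcomm : ∀ {a b y : B}, Commute a b → Commute a y → Commute b y → ∀ z : B,
      (q • b - a) * ((q • y - a) * ((q • y - b) * z)) =
        (q • y - b) * ((q • y - a) * ((q • b - a) * z)) := by
    intro a b y hab hay hby z
    have k1 : Commute (q • b - a) (q • y - a) :=
      ((hby.smul_right _).sub_right hab.symm).smul_left _ |>.sub_left
        ((hay.smul_right _).sub_right (Commute.refl _))
    have k2 : Commute (q • b - a) (q • y - b) :=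
      ((hby.smul_right _).sub_right (Commute.refl _)).smul_left _ |>.sub_left
        ((hay.smul_right _).sub_right hab)
    have k3 : Commute (q • y - a) (q • y - b) :=
      (((Commute.refl y).smul_right _).sub_right hby.symm).smul_left _ |>.sub_left
        ((hay.smul_right _).sub_right hab)
    simp only [← mul_assoc]
    rw [(k2.mul_left k3).eq, k1.eq, ← mul_assoc]
  rw [h.phi_mixed hi' _ c e₁, ← hd, h.phi_mixed hi _ d hde, ← hg, h.phi_mixed hi' _ g hge,
    h.phi_mixed hi _ c e₃, ← hd', h.phi_mixed hi' _ d' hde', ← hg', h.phi_mixed hi _ g' hge', x1,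
    x2, x3, x4, x1', x2', x3', x4', hw, hcomm c01 c02 c12, sub_self] at key
  exact ((h.isUnit_sub c hi' hi e₃).mul_right_eq_zero).1
    (((h.isUnit_sub c (by omega) hi e₂).mul_right_eq_zero).1
      (((h.isUnit_sub c (by omega) hi' e₁).mul_right_eq_zero).1 key.symm))

theorem defect_aaa (h : ColData q v T X) {i : ℕ} (hi : i + 2 < n) (f : Wd n v → B) (c : Wd n v)
    (e : c.1 i = c.1 (i + 1)) (e' : c.1 (i + 1) = c.1 (i + 2)) :
    defect n v q T X i f c = 0 := by
  have hc := c.succ_succ_lt hi e e'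
  have ht : T (c.1 (i + 1)) (cnt c.1 (c.1 (i + 1)) (i + 1)) =
      T (c.1 i) (cnt c.1 (c.1 i) i + 1) := by
    rw [← e, cnt_succ, if_pos rfl]
  simp only [defect, LinearMap.sub_apply, Pi.sub_apply, Module.End.mul_apply]
  rw [opT_same q T X _ c e, opT_same q T X _ c e', opT_same q T X _ c e, opT_same q T X _ c e',
    opT_same q T X _ c e, opT_same q T X _ c e', ht]
  simp only [← mul_assoc]
  rw [(h.aff _).braid _ hc, sub_self]

theorem defect_eq_zero (h : ColData q v T X) {i : ℕ} (hi : i + 2 < n) :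
    defect n v q T X i = 0 := by
  refine LinearMap.ext fun f => funext fun c => ?_
  change _ = (0 : B)
  by_cases e : c.1 i = c.1 (i + 1)
  · by_cases e' : c.1 (i + 1) = c.1 (i + 2)
    · exact h.defect_aaa hi f c e e'
    · exact h.defect_aab hi f c e (e ▸ e')
  · by_cases e' : c.1 (i + 1) = c.1 (i + 2)
    · exact h.defect_abb hi f c e' e
    · by_cases e'' : c.1 i = c.1 (i + 2)
      · exact h.defect_aba hi f c e'' e
      · exact h.defect_abc hi f c e e'' (by assumption)

/-- The operators on functions on words satisfy the affine Hecke relations. -/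
theorem op_aff (h : ColData q v T X) (hq : q ≠ 0) :
    AffHecke n q (opT n v q T X) (opX F n v X) where
  q_ne := hq
  quad i hi := h.op_quad hi
  braid i hi := sub_eq_zero.1 (h.defect_eq_zero hi)
  commT i j hij hj := h.op_comm_T hij hj
  commX i j hi hj := h.op_comm_X hi hj
  txt i hi := by
    rw [h.op_tx hi, sub_mul, mul_assoc, h.op_quad hi, mul_add, mul_smul_comm, mul_smul_comm,
      mul_one, smul_mul_assoc, add_sub_cancel_left]
  commTX i k hi hk h1 h2 := h.op_comm_TX hi hk h1 h2

end ColData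

theorem aeval_opX (X : ι → ℕ → B) (k : ℕ) (P : F[X]) (f : Wd n v → B) (c : Wd n v) :
    aeval (opX F n v X k) P f c = aeval (xx X c.1 k) P * f c := by
  induction P using Polynomial.induction_on' generalizing f with
  | add P R hP hR => simp only [map_add, LinearMap.add_apply, Pi.add_apply, hP, hR, add_mul]
  | monomial m a =>
    rw [aeval_monomial, aeval_monomial, Module.End.mul_apply, Module.algebraMap_end_apply,
      Pi.smul_apply, mul_assoc, ← Algebra.smul_def]
    congr 1
    induction m generalizing f with
    | zero => simp
    | succ m ih => rw [pow_succ, pow_succ, Module.End.mul_apply, ih, opX_apply, mul_assoc]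

theorem wt_opX [Fintype ι] (p : ι → F[X]) (X : ι → ℕ → B) (d : ℕ → ι) (k : ℕ) (f : Wd n v → B)
    (c : Wd n v) : wt q p (opX F n v X) d k f c = wt q p (xx X c.1) d k * f c := by
  induction k with
  | zero => simp [wt]
  | succ k ih => rw [wt, wt, Module.End.mul_apply, aeval_opX, ih, mul_assoc]

end WordBraid

/-! ### Tensor products of Ariki–Koike algebras -/

theorem AffHecke.map {F A B : Type} [Field F] [Ring A] [Algebra F A] [Ring B] [Algebra F B] {n : ℕ}
    {q : F} {T X : ℕ → A} (h : AffHecke n q T X) (f : A →ₐ[F] B) :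
    AffHecke n q (fun i => f (T i)) (fun k => f (X k)) where
  q_ne := h.q_ne
  quad i hi := by rw [← map_mul, h.quad i hi]; simp
  braid i hi := by simp only [← map_mul, h.braid i hi]
  commT i j hij hj := (h.commT i j hij hj).map f
  commX i j hi hj := (h.commX i j hi hj).map f
  txt i hi := by rw [← map_mul, ← map_mul, h.txt i hi, map_smul]
  commTX i k hi hk h1 h2 := (h.commTX i k hi hk h1 h2).map f

theorem list_prod_mul_of_commute {ι A : Type} [Monoid A] (f g : ι → A)
    (h : ∀ i j, i ≠ j → Commute (f i) (g j)) (l : List ι) (hl : l.Nodup) :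
    (l.map fun i => f i * g i).prod = (l.map f).prod * (l.map g).prod := by
  induction l with
  | nil => simp
  | cons a l ih =>
    rw [List.nodup_cons] at hl
    have hc : Commute (l.map f).prod (g a) := by
      refine Commute.list_prod_left _ _ fun x hx => ?_
      obtain ⟨i, hi, rfl⟩ := List.mem_map.1 hx
      exact h i a fun e => hl.1 (e ▸ hi)
    rw [List.map_cons, List.prod_cons, ih hl.2, List.map_cons, List.map_cons, List.prod_cons,
      List.prod_cons, mul_assoc, mul_assoc, ← mul_assoc (g a), ← hc.eq, mul_assoc]

open scoped TensorProduct PiTensorProduct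

section GenTens

variable {F : Type} [Field F] {κ : ℕ} (A : Fin κ → Type) [∀ α, Ring (A α)] [∀ α, Algebra F (A α)]

variable (F) in
/-- The tensor product of a finite family of algebras, as a type with a single ring structure. -/
def Tens : Type := ⨂[F] α, A α

noncomputable instance : Ring (Tens F A) := inferInstanceAs (Ring (⨂[F] α, A α))

noncomputable instance : Algebra F (Tens F A) := inferInstanceAs (Algebra F (⨂[F] α, A α))

/-- The inclusion of a tensor factor. -/
noncomputable def tensIn (α : Fin κ) : A α →ₐ[F] Tens F A :=
  PiTensorProduct.singleAlgHom (R := F) (A := A) α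

variable {A}

theorem tensIn_commute {α β : Fin κ} (h : α ≠ β) (a : A α) (b : A β) :
    Commute (tensIn (F := F) A α a) (tensIn A β b) :=
  Commute.tprod (R := F) (A := A) (Pi.mulSingle_commute h a b)

theorem tens_induction {P : Tens F A → Prop} (h1 : ∀ α a, P (tensIn A α a))
    (hs : ∀ a : F, P (algebraMap F _ a))
    (hadd : ∀ a b, P a → P b → P (a + b)) (hmul : ∀ a b, P a → P b → P (a * b))
    (z : Tens F A) : P z := by
  let S : Submonoid (⨂[F] α, A α) :=
    { carrier := {z | P z}
      one_mem' := by have := hs 1; rwa [map_one] at this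
      mul_mem' := fun {a b} ha hb => hmul a b ha hb }
  have hS : ∀ x : ∀ α, A α, PiTensorProduct.tprod F x ∈ S := by
    intro x
    suffices x ∈ S.comap (PiTensorProduct.tprodMonoidHom F) from this
    rw [← Finset.noncommProd_mulSingle x]
    exact Submonoid.noncommProd_mem _ _ _ _ fun α _ => h1 α (x α)
  refine PiTensorProduct.induction_on (motive := fun z => P z) z (fun a x => ?_)
    fun a b ha hb => hadd a b ha hb
  have : P (algebraMap F (Tens F A) a * (show Tens F A from PiTensorProduct.tprod F x)) :=
    hmul _ _ (hs a) (hS x)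
  rw [← Algebra.smul_def] at this
  exact this

theorem tens_lift {B : Type} [Ring B] [Algebra F B] (g : ∀ α, A α →ₐ[F] B)
    (hc : ∀ α β, α ≠ β → ∀ a b, Commute (g α a) (g β b)) :
    ∃ f : Tens F A →ₐ[F] B, ∀ α a, f (tensIn A α a) = g α a := by
  let m : MultilinearMap F A B :=
    (MultilinearMap.mkPiAlgebraFin F κ B).compLinearMap fun α => (g α).toLinearMap
  have hm : ∀ x, m x = ((List.finRange κ).map fun α => g α (x α)).prod := by
    intro x
    simp only [m, MultilinearMap.compLinearMap_apply, MultilinearMap.mkPiAlgebraFin_apply,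
      List.ofFn_eq_map]
    rfl
  let f : (⨂[F] α, A α) →ₐ[F] B := PiTensorProduct.liftAlgHom m
    (by rw [hm]; simp) (by
      intro x y
      rw [hm, hm, hm, ← list_prod_mul_of_commute _ _ (fun i j hij => hc i j hij _ _) _
        (List.nodup_finRange κ)]
      simp)
  refine ⟨f, fun α a => ?_⟩
  refine (PiTensorProduct.lift.tprod (φ := m) (Pi.mulSingle α a)).trans ?_
  rw [hm, List.prod_map_eq_pow_single α]
  · simp [List.count_eq_one_of_mem (List.nodup_finRange κ) (List.mem_finRange α)]
  · intro β hβ _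
    rw [Pi.mulSingle_eq_of_ne hβ, map_one]

end GenTens

section Tens

variable {F : Type} [Field F] {κ : ℕ}

/-- The tensor product of the Ariki–Koike algebras with `v α` strands and parameters `Qs α`. -/
abbrev TB (v rs : Fin κ → ℕ) (q : F) (Qs : ∀ α, Fin (rs α) → F) : Type :=
  Tens F fun α => ArikiKoike F (v α) (rs α) q (Qs α)

variable (v rs : Fin κ → ℕ) (q : F) (Qs : ∀ α, Fin (rs α) → F)

/-- The inclusion of the factor of colour `α`. -/
noncomputable def tbIn (α : Fin κ) :
    ArikiKoike F (v α) (rs α) q (Qs α) →ₐ[F] TB v rs q Qs :=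
  tensIn (fun α => ArikiKoike F (v α) (rs α) q (Qs α)) α

/-- The Hecke generators of the factor of colour `α`. -/
noncomputable def tbT (α : Fin κ) (i : ℕ) : TB v rs q Qs :=
  tbIn v rs q Qs α (akT F (v α) (rs α) q (Qs α) i)

/-- The Jucys–Murphy elements of the factor of colour `α`. -/
noncomputable def tbX (α : Fin κ) (k : ℕ) : TB v rs q Qs :=
  tbIn v rs q Qs α (akX F (v α) (rs α) q (Qs α) k)

variable {v rs q Qs}

theorem tbIn_commute {α β : Fin κ} (h : α ≠ β) (a b) :
    Commute (tbIn v rs q Qs α a) (tbIn v rs q Qs β b) :=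
  tensIn_commute (A := fun α => ArikiKoike F (v α) (rs α) q (Qs α)) h a b

theorem tb_aff (hq : q ≠ 0) (α : Fin κ) : AffHecke (v α) q (tbT v rs q Qs α) (tbX v rs q Qs α) :=
  (akAff hq).map (tbIn v rs q Qs α)

theorem tb_cyc (α : Fin κ) (hα : 0 < v α) :
    aeval (tbX v rs q Qs α 0) (cycPoly (Qs α)) = 0 := by
  rw [tbX, aeval_algHom_apply, ak_cyc hα, map_zero]

/-- A predicate on the tensor product which holds for scalars and for the generators of the factors
and which is stable under sums and products holds everywhere. -/
theorem tb_induction {P : TB v rs q Qs → Prop} (hs : ∀ a : F, P (algebraMap F _ a))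
    (h0 : ∀ α, 0 < v α → P (tbX v rs q Qs α 0))
    (hT : ∀ α i, i + 1 < v α → P (tbT v rs q Qs α i))
    (hadd : ∀ a b, P a → P b → P (a + b)) (hmul : ∀ a b, P a → P b → P (a * b))
    (z : TB v rs q Qs) : P z := by
  have h1 : ∀ α a, P (tbIn v rs q Qs α a) := by
    intro α a
    induction a using ak_induction with
    | hs a => rw [AlgHom.commutes]; exact hs a
    | h0 h => exact h0 α h
    | hT i h => exact hT α i h
    | hadd a b ha hb => rw [map_add]; exact hadd _ _ ha hb
    | hmul a b ha hb => rw [map_mul]; exact hmul _ _ ha hb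
  exact tens_induction h1 hs hadd hmul z

/-- The universal property of the tensor product, in terms of generators. -/
theorem tb_lift {A : Type} [Ring A] [Algebra F A] {T X : Fin κ → ℕ → A}
    (h : ∀ α, AffHecke (v α) q (T α) (X α))
    (hcyc : ∀ α, 0 < v α → aeval (X α 0) (cycPoly (Qs α)) = 0)
    (hTT : ∀ α β, α ≠ β → ∀ i j, i + 1 < v α → j + 1 < v β → Commute (T α i) (T β j))
    (hTX : ∀ α β, α ≠ β → ∀ i j, i + 1 < v α → j < v β → Commute (T α i) (X β j))
    (hXX : ∀ α β, α ≠ β → ∀ i j, i < v α → j < v β → Commute (X α i) (X β j)) :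
    ∃ f : TB v rs q Qs →ₐ[F] A, (∀ α i, i + 1 < v α → f (tbT v rs q Qs α i) = T α i) ∧
      ∀ α k, k < v α → f (tbX v rs q Qs α k) = X α k := by
  choose g gT gX using fun α => ak_lift (h α) (hcyc α)
  have hc : ∀ α β, α ≠ β → ∀ a b, Commute (g α a) (g β b) := by
    intro α β hab a b
    induction a using ak_induction with
    | hs a => rw [AlgHom.commutes]; exact Algebra.commute_algebraMap_left _ _
    | hadd a b ha hb => rw [map_add]; exact ha.add_left hb
    | hmul a b ha hb => rw [map_mul]; exact ha.mul_left hb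
    | h0 ha =>
      rw [gX α 0 ha]
      induction b using ak_induction with
      | hs a => rw [AlgHom.commutes]; exact Algebra.commute_algebraMap_right _ _
      | hadd a b ha hb => rw [map_add]; exact ha.add_right hb
      | hmul a b ha hb => rw [map_mul]; exact ha.mul_right hb
      | h0 hb => rw [gX β 0 hb]; exact hXX α β hab 0 0 ha hb
      | hT j hb => rw [gT β j hb]; exact (hTX β α hab.symm j 0 hb ha).symm
    | hT i ha =>
      rw [gT α i ha]
      induction b using ak_induction with
      | hs a => rw [AlgHom.commutes]; exact Algebra.commute_algebraMap_right _ _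
      | hadd a b ha hb => rw [map_add]; exact ha.add_right hb
      | hmul a b ha hb => rw [map_mul]; exact ha.mul_right hb
      | h0 hb => rw [gX β 0 hb]; exact hTX α β hab i 0 ha hb
      | hT j hb => rw [gT β j hb]; exact hTT α β hab i j ha hb
  obtain ⟨f, hf⟩ := tens_lift g hc
  exact ⟨f, fun α i hi => (hf _ _).trans (gT α i hi), fun α k hk => (hf _ _).trans (gX α k hk)⟩

theorem tb_spec (hq : q ≠ 0) (α : Fin κ) {k : ℕ} (hk : k < v α) :
    aeval (tbX v rs q Qs α k) (pw q (cycPoly (Qs α)) k) = 0 :=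
  (tb_aff hq α).spec (tb_cyc α) k hk

theorem tb_col (hq : q ≠ 0) {n : ℕ} (hv : ∑ α, v α = n)
    (sep : ∀ α β, α ≠ β → ∀ m m', m + m' < n →
      IsCoprime (pw q (cycPoly (Qs α)) m) (pw q (cycPoly (Qs β)) m')) :
    ColData q v (tbT v rs q Qs) (tbX v rs q Qs) := by
  have hc : ∀ α β, α ≠ β → ∀ i j, Commute (tbX v rs q Qs α i) (tbX v rs q Qs β j) :=
    fun α β hab i j => tbIn_commute hab _ _
  have hu : ∀ α β, α ≠ β → ∀ i j, i < v α → j < v β → ∀ s : F, s = 1 ∨ s = q →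
      IsUnit (s • tbX v rs q Qs β j - tbX v rs q Qs α i) := by
    intro α β hab i j hi hj s hs
    have hvv : v α + v β ≤ n := by
      rw [← hv, ← Finset.sum_pair hab]
      exact Finset.sum_le_sum_of_subset (Finset.subset_univ _)
    have hcop := sep α β hab (i + 1) j (by omega)
    rw [pw] at hcop
    have hcop' : IsCoprime ((pw q (cycPoly (Qs α)) i).comp (C s * Polynomial.X))
        (pw q (cycPoly (Qs β)) j) := by
      rcases hs with rfl | rfl
      · simpa using hcop.of_mul_left_left
      · exact hcop.of_mul_left_right.of_mul_left_left
    obtain ⟨u, hu, h1⟩ := inv_on (hc α β hab i j) s hcop'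
    have h2 := h1 1 (by rw [tb_spec hq α hi, zero_mul]) (by rw [tb_spec hq β hj, zero_mul])
    rw [mul_one] at h2
    have hcu : Commute (tbX v rs q Qs α i - s • tbX v rs q Qs β j) u :=
      commute_adjoin ((Commute.refl _).sub_left ((hc α β hab i j).symm.smul_left s))
        ((hc α β hab i j).sub_left ((Commute.refl _).smul_left s)) hu
    rw [← neg_sub]
    exact IsUnit.neg ⟨⟨_, u, hcu.eq.trans h2, h2⟩, rfl⟩
  exact
    { aff := tb_aff hq
      cTT := fun α β hab i j => tbIn_commute hab _ _
      cTX := fun α β hab i j => tbIn_commute hab _ _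
      cXX := hc
      unit := fun α β hab i j hi hj => by simpa using hu α β hab i j hi hj 1 (Or.inl rfl)
      unitq := fun α β hab i j hi hj => hu α β hab i j hi hj q (Or.inr rfl) }

end Tens

/-! ### Sorted words -/

section SortedWords

variable {κ n : ℕ}

/-- `c` is the sorted word in which the letter `α` occurs `v α` times, starting at position
`off α`. -/
structure SWord (n : ℕ) (v : Fin κ → ℕ) (c : ℕ → Fin κ) (off : Fin κ → ℕ) : Prop where
  sorted : Sorted n c
  cnt_eq : ∀ α, cnt c α n = v α
  lt : ∀ α j, j < v α → off α + j < n
  col : ∀ α j, j < v α → c (off α + j) = α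
  cnt_off : ∀ α j, j < v α → cnt c α (off α + j) = j
  pos : ∀ k, k < n → off (c k) + cnt c (c k) k = k

theorem exists_sword (hn : 0 < n) (v : Fin κ → ℕ) (hv : ∑ α, v α = n) :
    ∃ c off, SWord n v c off := by
  let s : ℕ → ℕ := fun a => ∑ β ∈ Finset.univ.filter (fun β : Fin κ => β.1 < a), v β
  have hs : Monotone s := fun a b hab => Finset.sum_le_sum_of_subset fun β => by
    simp only [Finset.mem_filter, Finset.mem_univ, true_and]; omega
  have hsn : ∀ a, κ ≤ a → s a = n := by
    intro a ha
    rw [← hv]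
    refine Finset.sum_congr (Finset.filter_true_of_mem fun β _ => ?_) fun _ _ => rfl
    omega
  have hss : ∀ α : Fin κ, s (α.1 + 1) = s α.1 + v α := by
    intro α
    have : Finset.univ.filter (fun β : Fin κ => β.1 < α.1 + 1) =
        insert α (Finset.univ.filter (fun β : Fin κ => β.1 < α.1)) := by
      ext β
      simp only [Finset.mem_filter, Finset.mem_univ, true_and, Finset.mem_insert, Fin.ext_iff]
      omega
    simp only [s]
    rw [this, Finset.sum_insert (by simp), add_comm]
  have hκ : 0 < κ := by
    rcases Nat.eq_zero_or_pos κ with rfl | h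
    · simp at hv; omega
    · exact h
  have hex : ∀ k, k < n → ∃ α : Fin κ, s α.1 ≤ k ∧ k < s (α.1 + 1) := by
    intro k hk
    have he : ∃ a, k < s (a + 1) := ⟨κ, by rw [hsn _ (by omega)]; exact hk⟩
    have hlt : Nat.find he < κ := by
      by_contra hge
      refine Nat.find_min he (m := κ - 1) (by omega) ?_
      rw [hsn _ (by omega)]; exact hk
    refine ⟨⟨_, hlt⟩, ?_, Nat.find_spec he⟩
    show s (Nat.find he) ≤ k
    rcases Nat.eq_zero_or_pos (Nat.find he) with h0 | h0
    · rw [h0]; simp [s]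
    · have := Nat.find_min he (m := Nat.find he - 1) (by omega)
      rw [Nat.sub_add_cancel h0] at this
      omega
  have : Nonempty (Fin κ) := ⟨⟨0, hκ⟩⟩
  choose! c hc1 hc2 using fun k (hk : k < n) => hex k hk
  have hcol : ∀ k, k < n → ∀ α, c k = α ↔ s α.1 ≤ k ∧ k < s α.1 + v α := by
    intro k hk α
    constructor
    · rintro rfl; rw [← hss]; exact ⟨hc1 k hk, hc2 k hk⟩
    · rintro ⟨h1, h2⟩
      rw [← hss] at h2
      have a1 := hc1 k hk
      have a2 := hc2 k hk
      rcases lt_trichotomy (c k).1 α.1 with h | h | h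
      · have := hs (show (c k).1 + 1 ≤ α.1 from h); omega
      · exact Fin.ext h
      · have := hs (show α.1 + 1 ≤ (c k).1 from h); omega
  have hsv : ∀ α : Fin κ, s α.1 + v α ≤ n := by
    intro α; rw [← hss, ← hsn κ le_rfl]; exact hs (by omega)
  have hcnt : ∀ α m, m ≤ n → cnt c α m = min (m - s α.1) (v α) := by
    intro α m
    induction m with
    | zero => intro _; rw [cnt_zero]; omega
    | succ m ih =>
      intro hm
      rw [cnt_succ, ih (by omega)]
      have := hcol m (by omega) α
      split_ifs with h <;> simp only [h, true_iff, false_iff] at this <;> omega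
  refine ⟨c, fun α => s α.1, ?_, ?_, ?_, ?_, ?_, ?_⟩
  · intro i hi
    by_contra hlt
    rw [not_le, Fin.lt_def] at hlt
    have a1 := hc1 i (by omega)
    have a2 := hc2 (i + 1) hi
    have := hs (show (c (i + 1)).1 + 1 ≤ (c i).1 from hlt)
    omega
  · intro α; have := hsv α; rw [hcnt α n le_rfl]; omega
  · intro α j hj; have := hsv α; show s α.1 + j < n; omega
  · intro α j hj; have := hsv α
    exact (hcol _ (by omega) α).2 ⟨by omega, by omega⟩
  · intro α j hj; have := hsv α
    show cnt c α (s α.1 + j) = j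
    rw [hcnt α _ (by omega)]; omega
  · intro k hk
    have := (hcol k hk (c k)).1 rfl
    show s (c k).1 + cnt c (c k) k = k
    rw [hcnt _ k hk.le]; omega

theorem sum_cnt (c : ℕ → Fin κ) (n : ℕ) : ∑ α, cnt c α n = n := by
  induction n with
  | zero => simp [cnt_zero]
  | succ n ih => simp [cnt_succ, Finset.sum_add_distrib, ih]

theorem Sorted.le {c : ℕ → Fin κ} (h : Sorted n c) {j k : ℕ} (hjk : j ≤ k) (hk : k < n) :
    c j ≤ c k := by
  induction k, hjk using Nat.le_induction with
  | base => exact le_rfl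
  | succ k hk' ih => exact (ih (by omega)).trans (h k hk)

theorem cnt_eq_of_ne (c : ℕ → Fin κ) (α : Fin κ) {k m : ℕ} (hkm : k ≤ m)
    (h : ∀ j, k ≤ j → j < m → c j ≠ α) : cnt c α m = cnt c α k := by
  induction m, hkm using Nat.le_induction with
  | base => rfl
  | succ m hm ih =>
    rw [cnt_succ, if_neg (h m hm (by omega)), add_zero, ih fun j h1 h2 => h j h1 (by omega)]

/-- A sorted word is determined by the multiplicities of its letters. -/
theorem Sorted.eq {c d : ℕ → Fin κ} (hc : Sorted n c) (hd : Sorted n d)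
    (h : ∀ α, cnt c α n = cnt d α n) : ∀ k, k < n → c k = d k := by
  -- At the first difference, the smaller letter occurs once more in one word than in the other.
  have key : ∀ {c d : ℕ → Fin κ}, Sorted n d → (∀ α, cnt c α n = cnt d α n) → ∀ k, k < n →
      (∀ j, j < k → c j = d j) → ¬ c k < d k := by
    intro c d hd h k hk hj hlt
    have h1 := cnt_lt_cnt c hk
    rw [h, cnt_eq_of_ne d (c k) hk.le fun j h1 h2 =>
      (hlt.trans_le (hd.le h1 h2)).ne', cnt_congr hj] at h1
    exact lt_irrefl _ h1
  intro k
  induction k using Nat.strong_induction_on with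
  | _ k ih =>
    intro hk
    refine le_antisymm (not_lt.1 ?_) (not_lt.1 ?_)
    · exact key hc (fun α => (h α).symm) k hk fun j hj => (ih j hj (by omega)).symm
    · exact key hd h k hk fun j hj => ih j hj (by omega)

end SortedWords

/-! ### The corner attached to a sorted word -/

section Corner

variable {F A : Type} [Field F] [Ring A] [Algebra F A]

open Classical in
/-- Left multiplication by `a` on a subspace `N`, or zero if `N` is not stable under it. -/
noncomputable def lm (N : Submodule F A) (a : A) : Module.End F N :=
  if h : ∀ z ∈ N, a * z ∈ N then (LinearMap.mulLeft F a).restrict h else 0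

theorem lm_apply {N : Submodule F A} {a : A} (h : ∀ z ∈ N, a * z ∈ N) (z : N) :
    (lm N a z : A) = a * z := by
  rw [lm, dif_pos h]; rfl

theorem lm_aeval {N : Submodule F A} {a : A} (h : ∀ z ∈ N, a * z ∈ N) (P : F[X]) (z : N) :
    (aeval (lm N a) P z : A) = aeval a P * z := by
  induction P using Polynomial.induction_on' generalizing z with
  | add P R hP hR =>
    simp only [map_add, LinearMap.add_apply, Submodule.coe_add, hP, hR, add_mul]
  | monomial m b =>
    rw [aeval_monomial, aeval_monomial, Module.End.mul_apply, Module.algebraMap_end_apply,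
      Submodule.coe_smul, mul_assoc, ← Algebra.smul_def]
    congr 1
    induction m generalizing z with
    | zero => simp
    | succ m ih => rw [pow_succ, pow_succ, Module.End.mul_apply, ih, lm_apply h, mul_assoc]

theorem lm_commute {N : Submodule F A} {a b : A} (ha : ∀ z ∈ N, a * z ∈ N)
    (hb : ∀ z ∈ N, b * z ∈ N) (h : Commute a b) : Commute (lm N a) (lm N b) := by
  refine LinearMap.ext fun z => Subtype.ext ?_
  rw [Module.End.mul_apply, Module.End.mul_apply, lm_apply ha, lm_apply hb, lm_apply hb,
    lm_apply ha, ← mul_assoc, h.eq, mul_assoc]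

theorem AffHecke.lm {n m o : ℕ} {q : F} {T X : ℕ → A} (h : AffHecke n q T X) (N : Submodule F A)
    (ho : ∀ j, j < m → o + j < n) (hT : ∀ j, j + 1 < m → ∀ z ∈ N, T (o + j) * z ∈ N)
    (hX : ∀ j, j < m → ∀ z ∈ N, X (o + j) * z ∈ N) :
    AffHecke m q (fun j => lm N (T (o + j))) (fun j => lm N (X (o + j))) where
  q_ne := h.q_ne
  quad i hi := by
    refine LinearMap.ext fun z => Subtype.ext ?_
    have := h.quad (o + i) (ho (i + 1) hi)
    simp only [Module.End.mul_apply, LinearMap.add_apply, LinearMap.smul_apply, Submodule.coe_add,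
      Submodule.coe_smul, lm_apply (hT i hi), Module.End.one_apply]
    rw [← mul_assoc, this, add_mul, smul_mul_assoc, smul_mul_assoc, one_mul]
  braid i hi := by
    refine LinearMap.ext fun z => Subtype.ext ?_
    have := h.braid (o + i) (ho (i + 2) hi)
    simp only [Module.End.mul_apply, lm_apply (hT i (by omega)), lm_apply (hT (i + 1) hi)]
    simp only [← mul_assoc]
    exact congrArg (· * (z : A)) this
  commT i j hij hj := lm_commute (hT _ (by omega)) (hT _ hj)
    (h.commT _ _ (by omega) (ho (j + 1) hj))
  commX i j hi hj := lm_commute (hX _ hi) (hX _ hj) (h.commX _ _ (ho i hi) (ho j hj))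
  txt i hi := by
    refine LinearMap.ext fun z => Subtype.ext ?_
    have := h.txt (o + i) (ho (i + 1) hi)
    simp only [Module.End.mul_apply, LinearMap.smul_apply, Submodule.coe_smul,
      lm_apply (hT i hi), lm_apply (hX i (by omega)), lm_apply (hX (i + 1) hi)]
    rw [← mul_assoc, ← mul_assoc, this, smul_mul_assoc]; rfl
  commTX i k hi hk h1 h2 := lm_commute (hT _ hi) (hX _ hk)
    (h.commTX _ _ (ho (i + 1) hi) (ho k hk) (by omega) (by omega))

/-- The tensor product of the Ariki–Koike algebras with `v α` strands maps to the corner of the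
sorted word with multiplicities `v`: it acts on the weight space by left multiplication, and `φ b`
is the image of the idempotent under `b`. -/
theorem exists_corner {κ n : ℕ} {v rs : Fin κ → ℕ} {q : F} {Qs : ∀ α, Fin (rs α) → F}
    {T X : ℕ → A} {c : ℕ → Fin κ} {off : Fin κ → ℕ}
    (h : CycAff n q T X fun α => cycPoly (Qs α)) (hw : SWord n v c off) :
    ∃ φ : TB v rs q Qs →ₗ[F] A,
      (∀ a b, φ (a * b) = φ a * φ b) ∧ φ 1 = wt q (fun α => cycPoly (Qs α)) X c n ∧
      (∀ α k, k < v α → ∀ b, φ (tbX v rs q Qs α k * b) = X (off α + k) * φ b) ∧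
      ∀ α i, i + 1 < v α → ∀ b, φ (tbT v rs q Qs α i * b) = T (off α + i) * φ b := by
  set p : Fin κ → F[X] := fun α => cycPoly (Qs α) with hp
  set e := wt q p X c n with he
  let N : Submodule F A :=
    { carrier := {z | e * z = z}
      add_mem' := fun {a b} ha hb => by
        change e * (a + b) = a + b
        rw [mul_add, show e * a = a from ha, show e * b = b from hb]
      zero_mem' := mul_zero e
      smul_mem' := fun r a ha => by
        change e * (r • a) = r • a
        rw [mul_smul_comm, show e * a = a from ha] }
  have hX : ∀ α k, k < v α → ∀ z ∈ N, X (off α + k) * z ∈ N := fun α k hk z hz =>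
    h.wt_X_mul hz (hw.lt α k hk)
  have hT : ∀ α i, i + 1 < v α → ∀ z ∈ N, T (off α + i) * z ∈ N := fun α i hi z hz =>
    h.wt_T_mul hz (hw.lt α (i + 1) hi) (by rw [hw.col α i (by omega)]; exact (hw.col α _ hi).symm)
  have hne : ∀ α β, α ≠ β → ∀ i j, i < v α → j < v β → off α + i ≠ off β + j := by
    intro α β hab i j hi hj e
    apply hab
    rw [← hw.col α i hi, e, hw.col β j hj]
  obtain ⟨Θ, ΘT, ΘX⟩ := tb_lift (v := v) (q := q) (Qs := Qs)
    (T := fun α j => lm N (T (off α + j))) (X := fun α j => lm N (X (off α + j)))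
    (fun α => h.toAffHecke.lm N (hw.lt α) (hT α) (hX α))
    (fun α hα => by
      refine LinearMap.ext fun z => Subtype.ext ?_
      rw [lm_aeval (hX α 0 hα), LinearMap.zero_apply]
      have := h.fam_mul z.2 (hw.lt α 0 hα)
      rwa [fam, hw.col α 0 hα, hw.cnt_off α 0 hα, pw] at this)
    (fun α β hab i j hi hj => lm_commute (hT α i hi) (hT β j hj) (by
      have h1 := hne α β hab i j (by omega) (by omega)
      have h2 := hne α β hab i (j + 1) (by omega) hj
      have h3 := hne α β hab (i + 1) j hi (by omega)
      rcases lt_or_gt_of_ne h1 with h4 | h4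
      · exact h.commT (off α + i) (off β + j) (by omega) (hw.lt β (j + 1) hj)
      · exact (h.commT (off β + j) (off α + i) (by omega) (hw.lt α (i + 1) hi)).symm))
    (fun α β hab i j hi hj => lm_commute (hT α i hi) (hX β j hj) (by
      have h1 := hne α β hab i j (by omega) (by omega)
      have h3 := hne α β hab (i + 1) j hi (by omega)
      exact h.commTX _ _ (hw.lt α (i + 1) hi) (hw.lt β j hj) (by omega) (by omega)))
    (fun α β hab i j hi hj => lm_commute (hX α i hi) (hX β j hj)
      (h.commX _ _ (hw.lt α i hi) (hw.lt β j hj)))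
  have heN : e ∈ N := h.wt_idem c
  have hr : ∀ z ∈ N, ∀ x : A, z * x ∈ N := fun z hz x => by
    change e * (z * x) = z * x
    rw [← mul_assoc, show e * z = z from hz]
  -- The action commutes with right multiplication.
  have hΘr : ∀ b (z : N) (x : A), (Θ b ⟨z * x, hr z z.2 x⟩ : A) = Θ b z * x := by
    intro b
    induction b using tb_induction with
    | hs a =>
      intro z x
      rw [AlgHom.commutes, Module.algebraMap_end_apply, Module.algebraMap_end_apply,
        Submodule.coe_smul, Submodule.coe_smul, smul_mul_assoc]
    | h0 α hα =>
      intro z x; rw [ΘX α 0 hα, lm_apply (hX α 0 hα), lm_apply (hX α 0 hα), mul_assoc]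
    | hT α i hi =>
      intro z x; rw [ΘT α i hi, lm_apply (hT α i hi), lm_apply (hT α i hi), mul_assoc]
    | hadd a b ha hb =>
      intro z x
      rw [map_add, LinearMap.add_apply, LinearMap.add_apply, Submodule.coe_add, Submodule.coe_add,
        ha, hb, add_mul]
    | hmul a b ha hb =>
      intro z x
      rw [map_mul, Module.End.mul_apply, Module.End.mul_apply, ← ha]
      congr 2
      exact Subtype.ext (hb z x)
  let φ : TB v rs q Qs →ₗ[F] A :=
    { toFun := fun b => (Θ b ⟨e, heN⟩ : A)
      map_add' := fun a b => by rw [map_add]; rfl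
      map_smul' := fun r a => by rw [map_smul]; rfl }
  have hφ : ∀ b (z : N), (Θ b z : A) = φ b * z := by
    intro b z
    refine Eq.trans ?_ (hΘr b ⟨e, heN⟩ z)
    congr 2
    exact Subtype.ext (show (z : A) = e * z from z.2.symm)
  refine ⟨φ, fun a b => ?_, ?_, fun α k hk b => ?_, fun α i hi b => ?_⟩
  · refine Eq.trans ?_ (hφ a (Θ b ⟨e, heN⟩))
    show (Θ (a * b) ⟨e, heN⟩ : A) = _
    rw [map_mul, Module.End.mul_apply]
  · show (Θ 1 ⟨e, heN⟩ : A) = _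
    rw [map_one, Module.End.one_apply]
  · show (Θ (_ * b) ⟨e, heN⟩ : A) = _
    rw [map_mul, Module.End.mul_apply, ΘX α k hk, lm_apply (hX α k hk)]; rfl
  · show (Θ (_ * b) ⟨e, heN⟩ : A) = _
    rw [map_mul, Module.End.mul_apply, ΘT α i hi, lm_apply (hT α i hi)]; rfl

end Corner

/-! ### The corner is the tensor product -/

section CornerProps

variable {F : Type} [Field F] {κ n : ℕ} {v rs : Fin κ → ℕ} {q : F} {Qs : ∀ α, Fin (rs α) → F}

/-- The image of `φ` is the whole corner, and the idempotents of different sorted words are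
orthogonal even with an arbitrary factor in between. Both follow from `exists_left_ideal` for the
image of `φ`. -/
theorem corner_surj {A : Type} [Ring A] [Algebra F A] {T X : ℕ → A} {c : ℕ → Fin κ}
    {off : Fin κ → ℕ} (h : CycAff n q T X fun α => cycPoly (Qs α)) (hw : SWord n v c off)
    (hgen : ∀ S : Submodule F A, (∀ k, k < n → ∀ z ∈ S, X k * z ∈ S) →
      (∀ i, i + 1 < n → ∀ z ∈ S, T i * z ∈ S) → ∀ a, ∀ z ∈ S, a * z ∈ S)
    {φ : TB v rs q Qs →ₗ[F] A} (φmul : ∀ a b, φ (a * b) = φ a * φ b)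
    (φone : φ 1 = wt q (fun α => cycPoly (Qs α)) X c n)
    (φX : ∀ α k, k < v α → ∀ b, φ (tbX v rs q Qs α k * b) = X (off α + k) * φ b)
    (φT : ∀ α i, i + 1 < v α → ∀ b, φ (tbT v rs q Qs α i * b) = T (off α + i) * φ b) :
    (∀ a, ∃ b, φ b = φ 1 * a * φ 1) ∧
      ∀ d : ℕ → Fin κ, Sorted n d → (∃ k, k < n ∧ c k ≠ d k) → ∀ a,
        wt q (fun α => cycPoly (Qs α)) X d n * (a * φ 1) = 0 := by
  have hlt : ∀ k, k < n → cnt c (c k) k < v (c k) := fun k hk => by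
    rw [← hw.cnt_eq]; exact cnt_lt_cnt c hk
  obtain ⟨S, hNS, hSX, hST, h1, h2⟩ := exists_left_ideal h (c₀ := c) (N := LinearMap.range φ)
    hw.sorted
    (by rintro _ ⟨b, rfl⟩; rw [← φone, ← φmul, one_mul])
    (by
      rintro k hk _ ⟨b, rfl⟩
      refine ⟨tbX v rs q Qs (c k) (cnt c (c k) k) * b, ?_⟩
      rw [φX _ _ (hlt k hk), hw.pos k hk])
    (by
      rintro i hi hc _ ⟨b, rfl⟩
      refine ⟨tbT v rs q Qs (c i) (cnt c (c i) i) * b, ?_⟩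
      have := hlt (i + 1) hi
      rw [← hc, cnt_succ, if_pos rfl] at this
      rw [φT _ _ this, hw.pos i (by omega)])
  have hS : ∀ a, a * φ 1 ∈ S := fun a => hgen S hSX hST a _ (hNS ⟨1, rfl⟩)
  refine ⟨fun a => ?_, fun d hd hcd a => h2 d hd hcd _ (hS a)⟩
  obtain ⟨b, hb⟩ := h1 _ (hS a)
  exact ⟨b, by rw [hb, φone, mul_assoc]⟩

theorem map_wt {A B : Type} [Ring A] [Algebra F A] [Ring B] [Algebra F B] (f : A →ₐ[F] B)
    {p : Fin κ → F[X]} {X : ℕ → A} {Y : ℕ → B} (c : ℕ → Fin κ) {k : ℕ}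
    (h : ∀ j, j < k → f (X j) = Y j) : f (wt q p X c k) = wt q p Y c k := by
  induction k with
  | zero => rw [wt, wt, map_one]
  | succ k ih =>
    rw [wt, wt, map_mul, ih fun j hj => h j (by omega), ← aeval_algHom_apply, h k (by omega)]

theorem wt_eq_one {B : Type} [Ring B] [Algebra F B] {p : Fin κ → F[X]} {Y : ℕ → B} {c : ℕ → Fin κ}
    {k : ℕ} (hcop : ∀ j, j < k → ∀ β, β ≠ c j → IsCoprime (fam q p c j (c j)) (fam q p c j β))
    (h : ∀ j, j < k → aeval (Y j) (fam q p c j (c j)) = 0) : wt q p Y c k = 1 := by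
  induction k with
  | zero => rfl
  | succ k ih =>
    rw [wt, ih (fun j hj => hcop j (by omega)) fun j hj => h j (by omega), mul_one, ← sub_eq_zero]
    obtain ⟨g, hg⟩ := dvd_crt_sub_one (hcop k (by omega))
    have := congrArg (aeval (Y k)) hg
    rwa [map_sub, map_one, map_mul, h k (by omega), zero_mul] at this

/-- The action on functions on words detects the corner, so the map onto the corner is
injective. -/
theorem corner_inj {r : ℕ} {Q : Fin r → F} {c : ℕ → Fin κ} {off : Fin κ → ℕ}
    (hQ : cycPoly Q = ∏ α, cycPoly (Qs α)) (hv : ∑ α, v α = n)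
    (h : CycAff n q (akT F n r q Q) (akX F n r q Q) fun α => cycPoly (Qs α)) (hw : SWord n v c off)
    {φ : TB v rs q Qs →ₗ[F] ArikiKoike F n r q Q} (φmul : ∀ a b, φ (a * b) = φ a * φ b)
    (φone : φ 1 = wt q (fun α => cycPoly (Qs α)) (akX F n r q Q) c n)
    (φX : ∀ α k, k < v α → ∀ b,
      φ (tbX v rs q Qs α k * b) = akX F n r q Q (off α + k) * φ b)
    (φT : ∀ α i, i + 1 < v α → ∀ b,
      φ (tbT v rs q Qs α i * b) = akT F n r q Q (off α + i) * φ b) :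
    Function.Injective φ := by
  classical
  have hcol : ColData q v (tbT v rs q Qs) (tbX v rs q Qs) := tb_col h.q_ne hv h.sep
  have hlt : ∀ (w : Wd n v) k, k < n → cnt w.1 (w.1 k) k < v (w.1 k) := fun w k hk => by
    rw [← w.2]; exact cnt_lt_cnt w.1 hk
  obtain ⟨ρ, ρT, ρX⟩ := ak_lift (Q := Q) (hcol.op_aff (n := n) h.q_ne) (fun hn => by
    refine LinearMap.ext fun f => funext fun w => ?_
    have h0 := hlt w 0 hn
    rw [cnt_zero] at h0
    have h1 : aeval (xx (tbX v rs q Qs) w.1 0) (cycPoly Q) = 0 := by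
      rw [hQ, ← Finset.mul_prod_erase _ _ (Finset.mem_univ (w.1 0)), map_mul, xx, cnt_zero,
        tb_cyc _ h0, zero_mul]
    rw [aeval_opX, h1, zero_mul]; rfl)
  let w₀ : Wd n v := ⟨c, hw.cnt_eq⟩
  let δ : Wd n v → TB v rs q Qs := fun _ => 1
  let ε : ArikiKoike F n r q Q → TB v rs q Qs := fun z => ρ z δ w₀
  have hε1 : ε (φ 1) = 1 := by
    show ρ (φ 1) δ w₀ = 1
    rw [φone, map_wt ρ c ρX, wt_opX]
    show wt _ _ _ c n * 1 = 1
    rw [mul_one]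
    refine wt_eq_one (fun j hj β hβ => h.fam_coprime c hj hβ.symm) fun j hj => ?_
    exact tb_spec h.q_ne _ (hlt w₀ j hj)
  have hε : ∀ b b', ε (φ (b * b')) = b * ε (φ b') := by
    intro b
    induction b using tb_induction with
    | hs a =>
      intro b'
      rw [← Algebra.smul_def, map_smul, ← Algebra.smul_def]
      show ρ (a • φ b') δ w₀ = a • ρ (φ b') δ w₀
      rw [map_smul]; rfl
    | h0 α hα =>
      intro b'
      rw [φX α 0 hα]
      show ρ (_ * φ b') δ w₀ = _ * ρ (φ b') δ w₀
      rw [map_mul, Module.End.mul_apply, ρX _ (hw.lt α 0 hα), opX_apply]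
      show tbX v rs q Qs (c _) (cnt c (c _) _) * _ = _
      rw [hw.col α 0 hα, hw.cnt_off α 0 hα]
    | hT α i hi =>
      intro b'
      rw [φT α i hi]
      show ρ (_ * φ b') δ w₀ = _ * ρ (φ b') δ w₀
      have e : c (off α + i) = c (off α + i + 1) := by
        rw [hw.col α i (by omega)]; exact (hw.col α (i + 1) hi).symm
      rw [map_mul, Module.End.mul_apply, ρT (off α + i) (hw.lt α (i + 1) hi), opT_same _ _ _ _ w₀ e]
      show tbT v rs q Qs (c _) (cnt c (c _) _) * _ = _
      rw [hw.col α i (by omega), hw.cnt_off α i (by omega)]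
    | hadd a b ha hb =>
      intro b'
      rw [add_mul, add_mul, ← ha, ← hb, map_add]
      show ρ (_ + _) δ w₀ = ρ _ δ w₀ + ρ _ δ w₀
      rw [map_add]; rfl
    | hmul a b ha hb => intro b'; rw [mul_assoc, ha, hb, mul_assoc]
  intro a b hab
  have ha := hε a 1
  have hb := hε b 1
  rw [mul_one, hε1, mul_one] at ha hb
  rw [← ha, ← hb, hab]

end CornerProps

/-! ### Gluing the corners -/

/-- If `A` has a finite family of idempotents with pairwise vanishing `e v * A * e w`, with
corners `B v`, and which together generate the unit ideal, then `A` is Morita equivalent to the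
product of the `B v`. -/
theorem morita_glue {A : Type} [Ring A] {V : Type} [Fintype V] [DecidableEq V] {B : V → Type}
    [∀ v, Ring (B v)] (φ : ∀ v, B v →+ A) (hmul : ∀ v a b, φ v (a * b) = φ v a * φ v b)
    (hinj : ∀ v, Function.Injective (φ v))
    (hsurj : ∀ v a, ∃ b, φ v b = φ v 1 * a * φ v 1)
    (horth : ∀ v w, v ≠ w → ∀ a, φ v 1 * (a * φ w 1) = 0)
    (hfull : ∀ J : AddSubgroup A, (∀ a, ∀ z ∈ J, a * z ∈ J) → (∀ a, ∀ z ∈ J, z * a ∈ J) →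
      (∀ v, φ v 1 ∈ J) → 1 ∈ J) : MoritaEquiv A (∀ v, B v) := by
  have hl : ∀ v b, φ v 1 * φ v b = φ v b := fun v b => by rw [← hmul, one_mul]
  have hr : ∀ v b, φ v b * φ v 1 = φ v b := fun v b => by rw [← hmul, mul_one]
  have h0 : ∀ v w, v ≠ w → ∀ a b, φ v a * φ w b = 0 := fun v w hvw a b => by
    have := horth v w hvw 1
    rw [one_mul] at this
    rw [← hr v a, ← hl w b, mul_assoc, ← mul_assoc (φ v 1), this, zero_mul, mul_zero]
  let ψ : (∀ v, B v) →ₙ+* A :=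
    { toFun := fun b => ∑ v, φ v (b v)
      map_zero' := by simp
      map_add' := fun a b => by simp [Finset.sum_add_distrib]
      map_mul' := fun a b => by
        rw [Finset.sum_mul_sum]
        refine Finset.sum_congr rfl fun v _ => ?_
        rw [Finset.sum_eq_single v (fun w _ hw => h0 v w hw.symm _ _) (by simp), Pi.mul_apply, hmul] }
  have ψdef : ∀ b, ψ b = ∑ v, φ v (b v) := fun _ => rfl
  have ψl : ∀ v b, φ v 1 * ψ b = φ v (b v) := fun v b => by
    rw [ψdef, Finset.mul_sum, Finset.sum_eq_single v (fun w _ hw => h0 v w hw.symm _ _) (by simp), hl]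
  have ψinj : Function.Injective ψ := fun a b hab => by
    funext v
    apply hinj v
    rw [← ψl, ← ψl, hab]
  have ψsurj : ∀ a, ∃ b, ψ b = ψ 1 * a * ψ 1 := fun a => by
    choose b hb using fun v => hsurj v a
    refine ⟨b, ?_⟩
    rw [ψdef, ψdef, mul_assoc, Finset.sum_mul]
    refine Finset.sum_congr rfl fun v _ => ?_
    rw [hb, Finset.mul_sum, Finset.mul_sum, Pi.one_apply, mul_assoc]
    exact (Finset.sum_eq_single v (fun w _ hw => horth v w hw.symm _) (by simp)).symm
  have ψfull : ∃ l : List (A × A), (l.map fun p => p.1 * ψ 1 * p.2).sum = 1 := by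
    let J : AddSubgroup A :=
      { carrier := {x | ∃ l : List (A × A), (l.map fun p => p.1 * ψ 1 * p.2).sum = x}
        zero_mem' := ⟨[], rfl⟩
        add_mem' := by
          rintro _ _ ⟨l, rfl⟩ ⟨l', rfl⟩
          exact ⟨l ++ l', by rw [List.map_append, List.sum_append]⟩
        neg_mem' := by
          rintro _ ⟨l, rfl⟩
          refine ⟨l.map fun p => (-p.1, p.2), ?_⟩
          induction l with
          | nil => simp
          | cons p l ih =>
            rw [List.map_cons, List.map_cons, List.sum_cons, ih, List.map_cons, List.sum_cons, neg_add,
              neg_mul, neg_mul] }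
    refine hfull J ?_ ?_ ?_
    · rintro a _ ⟨l, rfl⟩
      refine ⟨l.map fun p => (a * p.1, p.2), ?_⟩
      rw [← List.sum_map_mul_left, List.map_map]
      simp only [Function.comp_def, mul_assoc]
    · rintro a _ ⟨l, rfl⟩
      refine ⟨l.map fun p => (p.1, p.2 * a), ?_⟩
      rw [← List.sum_map_mul_right, List.map_map]
      simp only [Function.comp_def, mul_assoc]
    · intro v
      refine ⟨[(φ v 1, 1)], ?_⟩
      rw [List.map_singleton, List.sum_singleton, mul_one, ψl]; rfl
  -- Right modules are modules over the opposite ring.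
  let ψ' : (∀ v, B v)ᵐᵒᵖ →ₙ+* Aᵐᵒᵖ :=
    { toFun := fun b => MulOpposite.op (ψ b.unop)
      map_zero' := by simp
      map_add' := fun a b => by simp
      map_mul' := fun a b => by simp }
  have ψ'def : ∀ b, ψ' b = MulOpposite.op (ψ b.unop) := fun _ => rfl
  refine morita_of_full_corner ψ' ?_ ?_ ?_
  · intro a b hab
    exact MulOpposite.unop_injective (ψinj (MulOpposite.op_injective hab))
  · intro a
    obtain ⟨b, hb⟩ := ψsurj a.unop
    refine ⟨MulOpposite.op b, MulOpposite.unop_injective ?_⟩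
    simp only [ψ'def, MulOpposite.unop_op, MulOpposite.unop_mul, MulOpposite.unop_one, hb, mul_assoc]
  · obtain ⟨l, hl⟩ := ψfull
    refine ⟨l.map fun p => (MulOpposite.op p.2, MulOpposite.op p.1), ?_⟩
    refine Eq.trans ?_ (congrArg MulOpposite.op hl)
    rw [List.map_map]
    clear hl
    induction l with
    | nil => rfl
    | cons p l ih =>
      rw [List.map_cons, List.sum_cons, ih, List.map_cons, List.sum_cons, MulOpposite.op_add]
      simp only [Function.comp_def, ψ'def, MulOpposite.op_mul, MulOpposite.unop_one, mul_assoc]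

theorem cycPoly_partition {F : Type} [Field F] {r κ : ℕ} (Q : Fin r → F) (I : Fin κ → Finset (Fin r))
    (hdisj : ∀ α β, α ≠ β → Disjoint (I α) (I β)) (hcover : ∀ i, ∃ α, i ∈ I α) :
    cycPoly Q = ∏ α, cycPoly (fun j => Q (((I α).orderIsoOfFin rfl j).1)) := by
  have hU : (Finset.univ : Finset (Fin r)) = Finset.univ.biUnion I := by
    ext i; simpa using hcover i
  rw [cycPoly, hU, Finset.prod_biUnion fun α _ β _ h => hdisj α β h]
  refine Finset.prod_congr rfl fun α _ => ?_
  rw [cycPoly, ← Finset.prod_coe_sort]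
  exact (Fintype.prod_equiv ((I α).orderIsoOfFin rfl).toEquiv _ _ fun _ => rfl).symm

/-- The statement for any families of parameters whose cyclotomic polynomials multiply to that
of `Q` and which are separated. -/
theorem ak_morita {F : Type} [Field F] {n r κ : ℕ} (hn : 0 < n) {q : F} (hq : q ≠ 0)
    {Q : Fin r → F} {rs : Fin κ → ℕ} {Qs : ∀ α, Fin (rs α) → F} (hκ : 0 < κ)
    (hQ : cycPoly Q = ∏ α, cycPoly (Qs α))
    (hsep : ∀ α β, α < β → ∀ i j, ∀ a : ℤ, -(n : ℤ) < a → a < n →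
      q ^ a * Qs α i - Qs β j ≠ 0) :
    MoritaEquiv (ArikiKoike F n r q Q)
      ((v : {v : Fin κ → ℕ // ∑ α, v α = n}) → TB v.1 rs q Qs) := by
  classical
  have h : CycAff n q (akT F n r q Q) (akX F n r q Q) fun α => cycPoly (Qs α) :=
    { akAff hq with
      pos := hn
      sep := fun α β hαβ m m' hm => by
        rcases lt_or_gt_of_ne hαβ with hlt | hlt
        · exact pw_coprime_both hq (cycPoly_coprime hq (hsep α β hlt)) m m' hm
        · exact (pw_coprime_both hq (cycPoly_coprime hq (hsep β α hlt)) m' m (by omega)).symm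
      cyc := by rw [← hQ]; exact ak_cyc hn }
  have hgen : ∀ S : Submodule F (ArikiKoike F n r q Q),
      (∀ k, k < n → ∀ z ∈ S, akX F n r q Q k * z ∈ S) →
      (∀ i, i + 1 < n → ∀ z ∈ S, akT F n r q Q i * z ∈ S) → ∀ a, ∀ z ∈ S, a * z ∈ S := by
    intro S hX hT a
    induction a using ak_induction with
    | hs a => intro z hz; rw [← Algebra.smul_def]; exact S.smul_mem a hz
    | h0 h0 => exact hX 0 h0
    | hT i hi => exact hT i hi
    | hadd a b ha hb => intro z hz; rw [add_mul]; exact S.add_mem (ha z hz) (hb z hz)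
    | hmul a b ha hb => intro z hz; rw [mul_assoc]; exact ha _ (hb z hz)
  have hfin : Finite {v : Fin κ → ℕ // ∑ α, v α = n} := by
    refine Set.Finite.subset (Set.Finite.pi' (fun _ : Fin κ => Set.finite_Iic n)) ?_
    intro v hv α
    rw [← show ∑ α, v α = n from hv]
    exact Finset.single_le_sum (fun _ _ => Nat.zero_le _) (Finset.mem_univ α)
  have := Fintype.ofFinite {v : Fin κ → ℕ // ∑ α, v α = n}
  choose c off hw using fun v : {v : Fin κ → ℕ // ∑ α, v α = n} => exists_sword hn v.1 v.2
  choose φ φmul φone φX φT using fun v => exists_corner h (hw v)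
  have hne : ∀ v w, v ≠ w → ∃ k, k < n ∧ c w k ≠ c v k := by
    intro v w hvw
    by_contra hcon
    push Not at hcon
    refine hvw (Subtype.ext (funext fun α => ?_))
    rw [← (hw v).cnt_eq, ← (hw w).cnt_eq]
    exact (cnt_congr hcon α).symm
  refine morita_glue (fun v => (φ v).toAddMonoidHom) φmul
    (fun v => corner_inj hQ v.2 h (hw v) (φmul v) (φone v) (φX v) (φT v))
    (fun v => (corner_surj h (hw v) hgen (φmul v) (φone v) (φX v) (φT v)).1) ?_ ?_
  · intro v w hvw a
    have := (corner_surj h (hw w) hgen (φmul w) (φone w) (φX w) (φT w)).2 (c v) (hw v).sorted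
      (hne v w hvw) a
    rw [← φone v] at this
    exact this
  · intro J hl hr hJ
    refine h.one_mem J hl hr (fun d hd => ?_) fun _ => ⟨0, hκ⟩
    let v : {v : Fin κ → ℕ // ∑ α, v α = n} := ⟨fun α => cnt d α n, sum_cnt d n⟩
    have e := Sorted.eq hd (hw v).sorted fun α => ((hw v).cnt_eq α).symm
    rw [wt_congr e, ← φone v]
    exact hJ v

end Proof

open scoped PiTensorProduct in
/-- Dipper–Mathas. If the parameters `Q₁, ..., Q_r` split into
parts `I₁, ..., I_κ` which are pairwise separated (`q^a Q_i - Q_j ≠ 0` for `i, j` in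
different parts and `-n < a < n`), then `H_{n,r}(q, Q)` is Morita equivalent to the
direct sum, over all `(n₁, ..., n_κ)` with `n₁ + ⋯ + n_κ = n`, of the tensor products
`H_{n₁}(q, Q_{I₁}) ⊗ ⋯ ⊗ H_{n_κ}(q, Q_{I_κ})`. -/
theorem arikiKoike_morita_dipper_mathas
    (F : Type) [Field F] [IsAlgClosed F] (n r : ℕ) (hn : 1 ≤ n) (hr : 1 ≤ r)
    (q : F) (hq : q ≠ 0) (Q : Fin r → F)
    (κ : ℕ) (hκ : 1 ≤ κ) (I : Fin κ → Finset (Fin r))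
    (hne : ∀ α, (I α).Nonempty)
    (hdisj : ∀ α β, α ≠ β → Disjoint (I α) (I β))
    (hcover : ∀ i : Fin r, ∃ α, i ∈ I α)
    (hsep : ∀ α β : Fin κ, α < β → ∀ i ∈ I α, ∀ j ∈ I β,
      ∀ a : ℤ, -(n : ℤ) < a → a < (n : ℤ) → q ^ a * Q i - Q j ≠ 0) :
    MoritaEquiv (ArikiKoike F n r q Q)
      ((v : {v : Fin κ → ℕ // ∑ α, v α = n}) →
        ⨂[F] α, ArikiKoike F (v.1 α) ((I α).card) q
          (fun j => Q (((I α).orderIsoOfFin rfl j).1))) := by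
  exact ak_morita hn hq hκ (cycPoly_partition Q I hdisj hcover)
    fun α β hαβ i j a h1 h2 => hsep α β hαβ _ (Subtype.prop _) _ (Subtype.prop _) a h1 h2
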